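/- Let (X,d,μ) be a space of homogeneous type, let p(·) be an exponent function with p(·) ∈ LH and 1 < p₋ ≤ p₊ < ∞, and let w be a weight. Then there exists a constant C such that ‖(Mf)·w‖_{p(·)} ≤ C‖f·w‖_{p(·)} for all measurable functions f if and only if w ∈ A_{p(·)}. -/

import Mathlib

open MeasureTheory ENNReal NNReal Filter

namespace SHT

variable {X : Type*} [MeasurableSpace X]

/-- The quasi-metric ball `B(x,r) = {y | d x y < r}`. -/
def ball (d : X → X → ℝ) (x : X) (r : ℝ) : Set X := {y | d x y < r}

/-- `(X, d, μ)` is a space of homogeneous type with quasi-metric constant `A₀`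
and doubling constant `Cμ`. -/
structure IsSHT (d : X → X → ℝ) (μ : Measure X) (A₀ Cμ : ℝ) : Prop where
  d_nonneg : ∀ x y, 0 ≤ d x y
  d_eq_zero_iff : ∀ x y, d x y = 0 ↔ x = y
  d_symm : ∀ x y, d x y = d y x
  one_le_A₀ : 1 ≤ A₀
  d_triangle : ∀ x y z, d x y ≤ A₀ * (d x z + d z y)
  one_le_Cμ : 1 ≤ Cμ
  measurableSet_ball : ∀ x r, MeasurableSet (ball d x r)
  ball_pos : ∀ x r, 0 < r → 0 < μ (ball d x r)
  ball_ne_top : ∀ x r, 0 < r → μ (ball d x r) ≠ ⊤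
  doubling : ∀ x r, 0 < r → μ (ball d x (2 * r)) ≤ ENNReal.ofReal Cμ * μ (ball d x r)

/-- The modular `ρ_{p(·)}(f) = ∫_{X ∖ X_∞} f(x)^{p(x)} dμ + ‖f‖_{L^∞(X_∞)}`
for an (extended-real valued) exponent `p` and a nonnegative function `f`. -/
noncomputable def modular (μ : Measure X) (p : X → ℝ≥0∞) (f : X → ℝ≥0∞) : ℝ≥0∞ :=
  (∫⁻ x in {x | p x ≠ ⊤}, f x ^ (p x).toReal ∂μ) + essSup f (μ.restrict {x | p x = ⊤})

/-- The Luxemburg norm `‖f‖_{p(·)} = inf {λ > 0 | ρ_{p(·)}(f/λ) ≤ 1}`. -/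
noncomputable def luxNorm (μ : Measure X) (p : X → ℝ≥0∞) (f : X → ℝ≥0∞) : ℝ≥0∞ :=
  sInf {lam : ℝ≥0∞ | 0 < lam ∧ modular μ p (fun x => f x / lam) ≤ 1}

/-- The pointwise conjugate exponent `p'(x) = p(x)/(p(x)-1)`, with the conventions
`p'(x) = ∞` if `p(x) = 1` and `p'(x) = 1` if `p(x) = ∞`. -/
noncomputable def conjExp (p : X → ℝ≥0∞) : X → ℝ≥0∞ := fun x =>
  if p x = ⊤ then 1 else p x / (p x - 1)

/-- A real-valued exponent function viewed as an extended-real valued one. -/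
noncomputable def ofRealExp (p : X → ℝ) : X → ℝ≥0∞ := fun x => ENNReal.ofReal (p x)

/-- Local log-Hölder continuity of an exponent function. -/
def LH0 (d : X → X → ℝ) (p : X → ℝ) : Prop :=
  ∃ C₀ : ℝ, 0 < C₀ ∧ ∀ x y, 0 < d x y → d x y < 1 / 2 →
    |p x - p y| ≤ C₀ / (-Real.log (d x y))

/-- Log-Hölder continuity at infinity, with respect to the base point `x₀`
and with limit value `pinf`. -/
def LHinf (d : X → X → ℝ) (x₀ : X) (p : X → ℝ) (pinf : ℝ) : Prop :=
  ∃ Cinf : ℝ, 0 < Cinf ∧ ∀ x, |p x - pinf| ≤ Cinf / Real.log (Real.exp 1 + d x x₀)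

/-- Global log-Hölder continuity. -/
def LH (d : X → X → ℝ) (x₀ : X) (p : X → ℝ) : Prop :=
  LH0 d p ∧ ∃ pinf : ℝ, LHinf d x₀ p pinf

/-- `w` is a weight: measurable, positive and finite a.e., and locally integrable. -/
def IsWeight (d : X → X → ℝ) (μ : Measure X) (w : X → ℝ≥0∞) : Prop :=
  Measurable w ∧ (∀ᵐ x ∂μ, 0 < w x ∧ w x < ⊤) ∧
    ∀ (x : X) (r : ℝ), 0 < r → (∫⁻ y in ball d x r, w y ∂μ) ≠ ⊤

/-- The variable Muckenhoupt condition `w ∈ A_{p(·)}`: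
`‖w χ_B‖_{p(·)} ‖w⁻¹ χ_B‖_{p'(·)} ≤ K μ(B)` for all quasi-metric balls `B`. -/
def Apvar (d : X → X → ℝ) (μ : Measure X) (p : X → ℝ≥0∞) (w : X → ℝ≥0∞) : Prop :=
  ∃ K : ℝ≥0, ∀ (x : X) (r : ℝ), 0 < r →
    luxNorm μ p ((ball d x r).indicator w) *
      luxNorm μ (conjExp p) ((ball d x r).indicator fun y => (w y)⁻¹) ≤ K * μ (ball d x r)

/-- The uncentered Hardy–Littlewood maximal operator over quasi-metric balls. -/
noncomputable def maximal (d : X → X → ℝ) (μ : Measure X) (f : X → ℝ≥0∞) (x : X) : ℝ≥0∞ :=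
  ⨆ (z : X) (r : ℝ) (_ : 0 < r ∧ x ∈ ball d z r),
    (μ (ball d z r))⁻¹ * ∫⁻ y in ball d z r, f y ∂μ

/-- `f ∈ L^{p(·)}`: the modular of `f/λ` is finite for some `λ > 0`. -/
def MemLpvar (μ : Measure X) (p : X → ℝ≥0∞) (f : X → ℝ≥0∞) : Prop :=
  ∃ lam : ℝ≥0∞, 0 < lam ∧ modular μ p (fun x => f x / lam) < ⊤

/-! For necessity, the inequality is tested on `f w⁻¹ χ_B` with `f` almost norming `w⁻¹ χ_B` by
duality.

For sufficiency, write `ν = w ^ p dμ` and `σ = w ^ (-p') dμ`, and substitute `f = g w ^ (-p')`, so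
that averages of `f` become `μ(B)⁻¹ ∫_B g dσ`. The condition `A_{p(·)}` makes both measures
doubling, hence their maximal operators `M_ν` and `M_σ` are bounded on `L^s` for constant
exponents `s > 1`. If `p` were constant, `A_p` and duality would give the pointwise bound `M f ≤ C
(M_ν ((M_σ g) ^ (p - 1) w ^ (-p))) ^ (p' - 1)`, from which the theorem follows at once. Log-Hölder
continuity allows the exponent to be treated as constant on each ball: it is replaced by its value
at a point on balls that are small or far from the base point, and by its limit at infinity on all
others, which may be assumed to be centred at the base point. The errors are absorbed into powers
of `e + d(x, x₀)`, since negative powers are integrable for `ν` and `σ`. -/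

section Balls

variable {d : X → X → ℝ} {μ : Measure X} {A₀ Cμ : ℝ}

omit [MeasurableSpace X] in
lemma ball_subset_ball (d : X → X → ℝ) (z : X) {r s : ℝ} (h : r ≤ s) : ball d z r ⊆ ball d z s :=
  fun _ hy => lt_of_lt_of_le hy h

omit [MeasurableSpace X] in
lemma iUnion_ball_natCast (d : X → X → ℝ) (x₀ : X) : ⋃ n : ℕ, ball d x₀ n = Set.univ :=
  Set.eq_univ_of_forall fun y => Set.mem_iUnion.2 (exists_nat_gt (d x₀ y))

namespace IsSHT

lemma A₀_pos (hX : IsSHT d μ A₀ Cμ) : 0 < A₀ := one_pos.trans_le hX.one_le_A₀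

lemma mem_ball_self (hX : IsSHT d μ A₀ Cμ) (z : X) {r : ℝ} (hr : 0 < r) : z ∈ ball d z r := by
  change d z z < r
  rwa [(hX.d_eq_zero_iff z z).2 rfl]

lemma mem_ball_comm (hX : IsSHT d μ A₀ Cμ) {x y : X} {r : ℝ} :
    x ∈ ball d y r ↔ y ∈ ball d x r := by
  change d y x < r ↔ d x y < r
  rw [hX.d_symm]

lemma measurable_dist_right (hX : IsSHT d μ A₀ Cμ) (x₀ : X) : Measurable fun x => d x x₀ := by
  refine measurable_of_Iio fun r => ?_
  have hpre : (fun x => d x x₀) ⁻¹' Set.Iio r = ball d x₀ r := by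
    ext y
    exact hX.mem_ball_comm (x := x₀)
  rw [hpre]
  exact hX.measurableSet_ball _ _

lemma ball_subset_of_inter_nonempty (hX : IsSHT d μ A₀ Cμ) {z z' : X} {r r' : ℝ}
    (hr : r ≤ 2 * r') (hne : (ball d z r ∩ ball d z' r').Nonempty) :
    ball d z r ⊆ ball d z' (5 * A₀ ^ 2 * r') := by
  obtain ⟨u, hzu, hz'u⟩ := hne
  intro y hzy
  change d z u < r at hzu
  change d z' u < r' at hz'u
  change d z y < r at hzy
  have hA := hX.one_le_A₀
  have hr' : 0 < r' := (hX.d_nonneg _ _).trans_lt hz'u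
  have huy : d u y ≤ A₀ * (4 * r') := by
    refine (hX.d_triangle u y z).trans ?_
    rw [hX.d_symm u z]
    gcongr
    linarith
  calc d z' y ≤ A₀ * (d z' u + d u y) := hX.d_triangle z' y u
    _ < A₀ * (r' + A₀ * (4 * r')) := by
        apply mul_lt_mul_of_pos_left _ hX.A₀_pos
        linarith
    _ ≤ 5 * A₀ ^ 2 * r' := by
        nlinarith [mul_pos hr' hX.A₀_pos, mul_nonneg hr'.le (sub_nonneg.2 hA)]

lemma measure_ball_two_pow_mul_le (hX : IsSHT d μ A₀ Cμ) (k : ℕ) (z : X) {r : ℝ} (hr : 0 < r) :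
    μ (ball d z (2 ^ k * r)) ≤ ENNReal.ofReal Cμ ^ k * μ (ball d z r) := by
  induction k with
  | zero => simp
  | succ k ih =>
    calc μ (ball d z (2 ^ (k + 1) * r)) = μ (ball d z (2 * (2 ^ k * r))) := by ring_nf
      _ ≤ ENNReal.ofReal Cμ * μ (ball d z (2 ^ k * r)) := hX.doubling _ _ (by positivity)
      _ ≤ ENNReal.ofReal Cμ * (ENNReal.ofReal Cμ ^ k * μ (ball d z r)) := by gcongr
      _ = ENNReal.ofReal Cμ ^ (k + 1) * μ (ball d z r) := by ring

lemma exists_measure_ball_le_pow (hX : IsSHT d μ A₀ Cμ) :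
    ∃ D : ℕ, ∀ (z : X) (r R : ℝ), 0 < r → r ≤ R →
      μ (ball d z R) ≤ ENNReal.ofReal ((2 * (R / r)) ^ D) * μ (ball d z r) := by
  have hC : 0 ≤ Cμ := zero_le_one.trans hX.one_le_Cμ
  obtain ⟨D, hD⟩ := pow_unbounded_of_one_lt Cμ one_lt_two
  refine ⟨D, fun z r R hr hR => ?_⟩
  obtain ⟨k, hkl, hku⟩ := exists_nat_pow_near ((one_le_div hr).2 hR) one_lt_two
  calc μ (ball d z R) ≤ μ (ball d z (2 ^ (k + 1) * r)) :=
        measure_mono (ball_subset_ball d z ((div_lt_iff₀ hr).1 hku).le)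
    _ ≤ ENNReal.ofReal Cμ ^ (k + 1) * μ (ball d z r) := hX.measure_ball_two_pow_mul_le _ _ hr
    _ ≤ ENNReal.ofReal ((2 * (R / r)) ^ D) * μ (ball d z r) := by
      rw [← ENNReal.ofReal_pow hC]
      gcongr
      calc Cμ ^ (k + 1) ≤ (2 ^ D) ^ (k + 1) := by gcongr
        _ = (2 * 2 ^ k) ^ D := by rw [← pow_mul, mul_comm, pow_mul, pow_succ']
        _ ≤ (2 * (R / r)) ^ D := by gcongr

lemma exists_measure_ball_mul_le (hX : IsSHT d μ A₀ Cμ) {l : ℝ} (hl : 1 ≤ l) :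
    ∃ K : ℝ≥0, ∀ (z : X) (r : ℝ), 0 < r → μ (ball d z (l * r)) ≤ K * μ (ball d z r) := by
  obtain ⟨D, hD⟩ := hX.exists_measure_ball_le_pow
  refine ⟨((2 * l) ^ D).toNNReal, fun z r hr => ?_⟩
  have h := hD z r (l * r) hr (le_mul_of_one_le_left hr.le hl)
  rwa [mul_div_cancel_right₀ _ hr.ne'] at h

lemma sigmaFinite (hX : IsSHT d μ A₀ Cμ) : SigmaFinite μ := by
  rcases isEmpty_or_nonempty X with _ | ⟨⟨x₀⟩⟩
  · rw [Measure.eq_zero_of_isEmpty μ]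
    infer_instance
  · refine ⟨⟨⟨fun n => ball d x₀ (n + 1 : ℕ), fun _ => trivial, fun n => ?_, ?_⟩⟩⟩
    · exact (hX.ball_ne_top _ _ (by positivity)).lt_top
    · refine Set.eq_univ_of_forall fun y => ?_
      obtain ⟨n, hn⟩ := Set.mem_iUnion.1 (Set.eq_univ_iff_forall.1 (iUnion_ball_natCast d x₀) y)
      exact Set.mem_iUnion.2 ⟨n, ball_subset_ball d x₀ (by exact_mod_cast n.le_succ) hn⟩

lemma countable_of_pairwiseDisjoint_ball (hX : IsSHT d μ A₀ Cμ) {u : Set (X × ℝ)}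
    (hpos : ∀ b ∈ u, 0 < b.2) (hdisj : u.PairwiseDisjoint fun b => ball d b.1 b.2) :
    u.Countable := by
  have := hX.sigmaFinite
  have hcount := Measure.countable_meas_pos_of_disjoint_iUnion (μ := μ)
    (As := fun b : u => ball d b.1.1 b.1.2) (fun b => hX.measurableSet_ball _ _)
    fun a b hab => hdisj a.2 b.2 fun h => hab (Subtype.ext h)
  have huniv : {b : u | 0 < μ (ball d b.1.1 b.1.2)} = Set.univ :=
    Set.eq_univ_of_forall fun b => hX.ball_pos _ _ (hpos _ b.2)
  rw [huniv] at hcount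
  exact Set.countable_univ_iff.1 hcount

lemma exists_disjoint_subfamily_covering (hX : IsSHT d μ A₀ Cμ) {T : Set (X × ℝ)} {R : ℝ}
    (hpos : ∀ b ∈ T, 0 < b.2) (hR : ∀ b ∈ T, b.2 ≤ R) :
    ∃ u ⊆ T, (u.PairwiseDisjoint fun b => ball d b.1 b.2) ∧
      ⋃ b ∈ T, ball d b.1 b.2 ⊆ ⋃ b ∈ u, ball d b.1 (5 * A₀ ^ 2 * b.2) := by
  obtain ⟨u, huT, hdisj, hcov⟩ := Vitali.exists_disjoint_subfamily_covering_enlargement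
    (fun b : X × ℝ => ball d b.1 b.2) T Prod.snd 2 one_lt_two (fun b hb => (hpos b hb).le) R hR
    fun b hb => ⟨b.1, hX.mem_ball_self _ (hpos b hb)⟩
  refine ⟨u, huT, hdisj, Set.iUnion₂_subset fun a ha => ?_⟩
  obtain ⟨b, hb, hne, hle⟩ := hcov a ha
  exact (hX.ball_subset_of_inter_nonempty hle hne).trans
    (Set.subset_biUnion_of_mem (u := fun b : X × ℝ => ball d b.1 (5 * A₀ ^ 2 * b.2)) hb)

lemma exists_mul_measure_biUnion_ball_le (hX : IsSHT d μ A₀ Cμ) :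
    ∃ K : ℝ≥0, ∀ (f : X → ℝ≥0∞) (t : ℝ≥0∞) (R : ℝ) (T : Set (X × ℝ)),
      (∀ b ∈ T, 0 < b.2) → (∀ b ∈ T, b.2 ≤ R) →
      (∀ b ∈ T, t * μ (ball d b.1 b.2) ≤ ∫⁻ y in ball d b.1 b.2, f y ∂μ) →
      t * μ (⋃ b ∈ T, ball d b.1 b.2) ≤ K * ∫⁻ x, f x ∂μ := by
  have hA : 1 ≤ 5 * A₀ ^ 2 := by nlinarith [hX.one_le_A₀]
  obtain ⟨K, hK⟩ := hX.exists_measure_ball_mul_le hA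
  refine ⟨K, fun f t R T hpos hR hf => ?_⟩
  obtain ⟨u, huT, hdisj, hcov⟩ := hX.exists_disjoint_subfamily_covering hpos hR
  have hu : u.Countable := hX.countable_of_pairwiseDisjoint_ball (fun b hb => hpos b (huT hb)) hdisj
  calc t * μ (⋃ b ∈ T, ball d b.1 b.2)
      ≤ t * ∑' b : u, μ (ball d b.1.1 (5 * A₀ ^ 2 * b.1.2)) := by
        gcongr
        exact (measure_mono hcov).trans (measure_biUnion_le _ hu _)
    _ ≤ t * ∑' b : u, K * μ (ball d b.1.1 b.1.2) := by
        gcongr with b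
        exact hK _ _ (hpos _ (huT b.2))
    _ = K * ∑' b : u, t * μ (ball d b.1.1 b.1.2) := by
        rw [ENNReal.tsum_mul_left, ENNReal.tsum_mul_left]
        ring
    _ ≤ K * ∑' b : u, ∫⁻ y in ball d b.1.1 b.1.2, f y ∂μ := by
        gcongr with b
        exact hf _ (huT b.2)
    _ = K * ∫⁻ y in ⋃ b ∈ u, ball d b.1 b.2, f y ∂μ := by
        rw [lintegral_biUnion hu (fun b _ => hX.measurableSet_ball _ _) hdisj]
    _ ≤ K * ∫⁻ x, f x ∂μ := by
        gcongr K * ?_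
        exact setLIntegral_le_lintegral _ _

end IsSHT

end Balls

/-! ### The maximal operator on `L^s` for a constant exponent -/

section Maximal

variable {d : X → X → ℝ} {μ : Measure X} {A₀ Cμ : ℝ} {f : X → ℝ≥0∞}

lemma average_le_maximal {z x : X} {r : ℝ} (hr : 0 < r) (hx : x ∈ ball d z r) :
    (μ (ball d z r))⁻¹ * ∫⁻ y in ball d z r, f y ∂μ ≤ maximal d μ f x :=
  le_iSup_of_le z (le_iSup_of_le r (le_iSup_of_le ⟨hr, hx⟩ le_rfl))

lemma maximal_le_iff {x : X} {a : ℝ≥0∞} :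
    maximal d μ f x ≤ a ↔ ∀ z r, 0 < r → x ∈ ball d z r →
      (μ (ball d z r))⁻¹ * ∫⁻ y in ball d z r, f y ∂μ ≤ a := by
  simp only [maximal, iSup_le_iff, and_imp]

lemma maximal_const_mul {c : ℝ≥0∞} (hc : c ≠ ⊤) (f : X → ℝ≥0∞) (x : X) :
    maximal d μ (fun y => c * f y) x = c * maximal d μ f x := by
  simp only [maximal, lintegral_const_mul' _ _ hc, ENNReal.mul_iSup, mul_left_comm]

lemma IsSHT.lt_maximal_iff (hX : IsSHT d μ A₀ Cμ) {x : X} {t : ℝ≥0∞} :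
    t < maximal d μ f x ↔ ∃ z r, 0 < r ∧ x ∈ ball d z r ∧
      t * μ (ball d z r) < ∫⁻ y in ball d z r, f y ∂μ := by
  simp only [maximal, lt_iSup_iff, exists_prop, and_assoc]
  refine exists₂_congr fun z r => and_congr_right fun hr => and_congr_right fun _ => ?_
  rw [← ENNReal.div_eq_inv_mul, ENNReal.lt_div_iff_mul_lt (.inl (hX.ball_pos z r hr).ne')
    (.inl (hX.ball_ne_top z r hr))]

lemma IsSHT.weak_type_maximal (hX : IsSHT d μ A₀ Cμ) :
    ∃ K : ℝ≥0, ∀ (f : X → ℝ≥0∞) (t : ℝ≥0∞),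
      t * μ {x | t < maximal d μ f x} ≤ K * ∫⁻ x, f x ∂μ := by
  obtain ⟨K, hK⟩ := hX.exists_mul_measure_biUnion_ball_le
  refine ⟨K, fun f t => ?_⟩
  let T (R : ℕ) : Set (X × ℝ) := {b | 0 < b.2 ∧ b.2 ≤ R ∧
    t * μ (ball d b.1 b.2) < ∫⁻ y in ball d b.1 b.2, f y ∂μ}
  have hT : Monotone T := fun a b hab q hq =>
    ⟨hq.1, hq.2.1.trans (by exact_mod_cast hab), hq.2.2⟩
  have hcover : {x | t < maximal d μ f x} ⊆ ⋃ R : ℕ, ⋃ b ∈ T R, ball d b.1 b.2 := by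
    intro x hx
    obtain ⟨z, r, hr, hxz, hlt⟩ := hX.lt_maximal_iff.1 hx
    obtain ⟨R, hR⟩ := exists_nat_ge r
    simp only [Set.mem_iUnion]
    exact ⟨R, (z, r), ⟨hr, hR, hlt⟩, hxz⟩
  calc t * μ {x | t < maximal d μ f x} ≤ t * μ (⋃ R : ℕ, ⋃ b ∈ T R, ball d b.1 b.2) := by gcongr
    _ = ⨆ R : ℕ, t * μ (⋃ b ∈ T R, ball d b.1 b.2) := by
        rw [Monotone.measure_iUnion fun a b hab => Set.biUnion_subset_biUnion_left (hT hab),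
          ENNReal.mul_iSup]
    _ ≤ K * ∫⁻ x, f x ∂μ := iSup_le fun R =>
        hK f t R (T R) (fun b hb => hb.1) (fun b hb => hb.2.1) fun b hb => hb.2.2.le

lemma maximal_le_maximal_indicator_add (f : X → ℝ≥0∞) (a : ℝ≥0∞) (x : X) :
    maximal d μ f x ≤ maximal d μ ({y | a < f y}.indicator f) x + a := by
  refine maximal_le_iff.2 fun z r hr hx => ?_
  set B := ball d z r
  have hpt : ∀ y, f y ≤ {y | a < f y}.indicator f y + a := by
    intro y
    by_cases hy : a < f y
    · exact (Set.indicator_of_mem (s := {y | a < f y}) hy f).ge.trans le_self_add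
    · exact (not_lt.1 hy).trans le_add_self
  calc (μ B)⁻¹ * ∫⁻ y in B, f y ∂μ
      ≤ (μ B)⁻¹ * ∫⁻ y in B, ({y | a < f y}.indicator f y + a) ∂μ := by
        gcongr with y
        exact hpt y
    _ = (μ B)⁻¹ * ∫⁻ y in B, {y | a < f y}.indicator f y ∂μ + a * (μ B * (μ B)⁻¹) := by
        rw [lintegral_add_right _ measurable_const, setLIntegral_const]
        ring
    _ ≤ maximal d μ ({y | a < f y}.indicator f) x + a := by
        gcongr
        · exact average_le_maximal hr hx
        · exact mul_le_of_le_one_right' (ENNReal.mul_inv_le_one _)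

end Maximal

section Marcinkiewicz

variable {ν : Measure X} {s : ℝ}

lemma tsum_two_zpow_sub_natCast_rpow (n : ℤ) (hs : 0 ≤ s) :
    ∑' j : ℕ, ((2 : ℝ≥0∞) ^ (n - j)) ^ s = (2 ^ n) ^ s * (1 - 2 ^ (-s))⁻¹ := by
  rw [← ENNReal.tsum_geometric, ← ENNReal.tsum_mul_left]
  congr with j
  rw [sub_eq_add_neg, ENNReal.zpow_add two_ne_zero ofNat_ne_top, ENNReal.zpow_neg, zpow_natCast,
    ENNReal.mul_rpow_of_nonneg _ _ hs, ENNReal.rpow_neg, ENNReal.inv_rpow, ← ENNReal.rpow_natCast,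
    ← ENNReal.rpow_natCast, ENNReal.inv_rpow, ← ENNReal.rpow_mul, ← ENNReal.rpow_mul, mul_comm s]

lemma tsum_two_zpow_rpow_le (hs : 0 < s) (u : ℝ≥0∞) :
    ∑' k : ℤ, {k : ℤ | (2 : ℝ≥0∞) ^ k < u}.indicator (fun k => ((2 : ℝ≥0∞) ^ k) ^ s) k ≤
      (1 - 2 ^ (-s))⁻¹ * u ^ s := by
  rcases eq_or_ne u 0 with rfl | hu0
  · simp
  rcases eq_or_ne u ⊤ with rfl | hut
  · rw [ENNReal.top_rpow_of_pos hs, ENNReal.mul_top]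
    · exact le_top
    · exact ENNReal.inv_ne_zero.2 (ENNReal.sub_ne_top one_ne_top)
  obtain ⟨n, hnl, hnu⟩ := ENNReal.exists_mem_Ioc_zpow hu0 hut one_lt_two ofNat_ne_top
  have hinj : Function.Injective fun j : ℕ => n - (j : ℤ) := fun a b hab => by
    simpa using hab
  rw [← hinj.tsum_eq]
  · calc ∑' j : ℕ, {k : ℤ | (2 : ℝ≥0∞) ^ k < u}.indicator (fun k => ((2 : ℝ≥0∞) ^ k) ^ s) (n - j)
        ≤ ∑' j : ℕ, ((2 : ℝ≥0∞) ^ (n - j)) ^ s := by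
          refine ENNReal.tsum_le_tsum fun j => ?_
          exact Set.indicator_le_self' (fun _ _ => zero_le) (n - (j : ℤ))
      _ = (1 - 2 ^ (-s))⁻¹ * (2 ^ n) ^ s := by
          rw [tsum_two_zpow_sub_natCast_rpow n hs.le, mul_comm]
      _ ≤ (1 - 2 ^ (-s))⁻¹ * u ^ s := by gcongr
  · intro k hk
    have hku : k ∈ {k : ℤ | (2 : ℝ≥0∞) ^ k < u} := (Set.support_indicator.subset hk).1
    have hkn : k ≤ n := by
      by_contra! hnk
      exact (lt_of_lt_of_le hku (hnu.trans (ENNReal.zpow_le_of_le one_le_two hnk))).false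
    exact ⟨(n - k).toNat, by simp only; omega⟩

/-- The level sets of `F` need not be measurable, so the majorant is built from measurable hulls of
the dyadic ones. -/
lemma exists_measurable_majorant_lintegral_rpow_le_tsum (ν : Measure X) (F : X → ℝ≥0∞)
    (hs : 0 < s) :
    ∃ H : X → ℝ≥0∞, Measurable H ∧ F ≤ H ∧
      ∫⁻ x, H x ^ s ∂ν ≤ ∑' k : ℤ, (4 * 2 ^ k) ^ s * ν {x | 2 * 2 ^ k < F x} := by
  let T (k : ℤ) : Set X := toMeasurable ν {x | 2 * 2 ^ k < F x}
  have hT : ∀ k, MeasurableSet (T k) := fun k => measurableSet_toMeasurable _ _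
  refine ⟨fun x => ⨆ k : ℤ, (T k).indicator (fun _ => 4 * 2 ^ k) x,
    .iSup fun k => measurable_const.indicator (hT k), fun x => ?_, ?_⟩
  · refine le_of_forall_lt fun c hc => ?_
    obtain ⟨b, hcb, hb⟩ := exists_between hc
    obtain ⟨k, hkl, hku⟩ := ENNReal.exists_mem_Ico_zpow (pos_of_gt hcb).ne' hb.ne_top
      one_lt_two ofNat_ne_top
    have hk : (2 : ℝ≥0∞) ^ k = 2 * 2 ^ (k - 1) := by
      rw [← sub_add_cancel k 1, ENNReal.zpow_add two_ne_zero ofNat_ne_top, zpow_one, mul_comm,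
        add_sub_cancel_right]
    have hx : x ∈ T (k - 1) := subset_toMeasurable _ _ (hk ▸ hkl.trans_lt hb)
    refine (hcb.trans hku).trans_le (le_iSup_of_le (k - 1) ?_)
    rw [Set.indicator_of_mem hx, ENNReal.zpow_add two_ne_zero ofNat_ne_top, zpow_one, hk,
      mul_comm, ← mul_assoc]
    norm_num
  · have hpt : ∀ x, (⨆ k : ℤ, (T k).indicator (fun _ => (4 * 2 ^ k : ℝ≥0∞)) x) ^ s ≤
        ∑' k : ℤ, (T k).indicator (fun _ => (4 * 2 ^ k : ℝ≥0∞) ^ s) x := by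
      intro x
      rw [← ENNReal.le_rpow_inv_iff hs]
      refine iSup_le fun k => ?_
      by_cases hx : x ∈ T k
      · rw [Set.indicator_of_mem hx, ENNReal.le_rpow_inv_iff hs]
        refine le_of_eq_of_le ?_ (ENNReal.le_tsum k)
        exact (Set.indicator_of_mem hx fun _ => (4 * 2 ^ k : ℝ≥0∞) ^ s).symm
      · simp [hx]
    refine (lintegral_mono hpt).trans_eq ?_
    rw [lintegral_tsum fun k => (measurable_const.indicator (hT k)).aemeasurable]
    simp only [lintegral_indicator_const (hT _), T, measure_toMeasurable]

lemma rpow_mul_measure_le_of_weak_type (hs : 0 ≤ s) {K : ℝ≥0} {F f : X → ℝ≥0∞}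
    (hf : Measurable f) {a : ℝ≥0∞} (ha0 : a ≠ 0) (hat : a ≠ ⊤)
    (hF : a * ν {x | 2 * a < F x} ≤ K * ∫⁻ x in {y | a < f y}, f x ∂ν) :
    (4 * a) ^ s * ν {x | 2 * a < F x} ≤
      4 ^ s * K * ∫⁻ x, f x * {y | a < f y}.indicator (fun _ => a ^ (s - 1)) x ∂ν := by
  have hma : MeasurableSet {y | a < f y} := measurableSet_lt measurable_const hf
  have hpow : a ^ s = a ^ (s - 1) * a := by
    nth_rewrite 3 [← ENNReal.rpow_one a]
    rw [← ENNReal.rpow_add _ _ ha0 hat, sub_add_cancel]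
  calc (4 * a) ^ s * ν {x | 2 * a < F x}
      = 4 ^ s * a ^ (s - 1) * (a * ν {x | 2 * a < F x}) := by
        rw [ENNReal.mul_rpow_of_nonneg _ _ hs, hpow]
        ring
    _ ≤ 4 ^ s * a ^ (s - 1) * (K * ∫⁻ x in {y | a < f y}, f x ∂ν) := by
        gcongr 4 ^ s * a ^ (s - 1) * ?_
    _ = 4 ^ s * K * ∫⁻ x, f x * {y | a < f y}.indicator (fun _ => a ^ (s - 1)) x ∂ν := by
        rw [← lintegral_indicator hma, mul_assoc, mul_left_comm (a ^ (s - 1)),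
          ← lintegral_const_mul _ (hf.indicator hma), ← mul_assoc]
        congr with x
        by_cases hx : a < f x <;> simp [hx, mul_comm]

lemma exists_measurable_majorant_of_weak_type (hs : 1 < s) {K : ℝ≥0} {F f : X → ℝ≥0∞}
    (hf : Measurable f)
    (hF : ∀ a : ℝ≥0∞, a ≠ ⊤ → a * ν {x | 2 * a < F x} ≤ K * ∫⁻ x in {y | a < f y}, f x ∂ν) :
    ∃ H : X → ℝ≥0∞, Measurable H ∧ F ≤ H ∧
      ∫⁻ x, H x ^ s ∂ν ≤ 4 ^ s * K * (1 - 2 ^ (-(s - 1)))⁻¹ * ∫⁻ x, f x ^ s ∂ν := by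
  have hs0 : 0 < s := one_pos.trans hs
  obtain ⟨H, hH, hFH, hHs⟩ := exists_measurable_majorant_lintegral_rpow_le_tsum ν F hs0
  have hm (k : ℤ) : MeasurableSet {y | (2 : ℝ≥0∞) ^ k < f y} := measurableSet_lt measurable_const hf
  have hlevel (k : ℤ) : (4 * 2 ^ k) ^ s * ν {x | 2 * 2 ^ k < F x} ≤
      4 ^ s * K * ∫⁻ x, f x * {y | (2 : ℝ≥0∞) ^ k < f y}.indicator
        (fun _ => ((2 : ℝ≥0∞) ^ k) ^ (s - 1)) x ∂ν :=
    have hk := ENNReal.zpow_ne_top two_ne_zero ofNat_ne_top k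
    rpow_mul_measure_le_of_weak_type hs0.le hf (ENNReal.zpow_pos two_ne_zero ofNat_ne_top k).ne' hk
      (hF _ hk)
  refine ⟨H, hH, hFH, hHs.trans ?_⟩
  calc _ ≤ ∑' k : ℤ, 4 ^ s * K * ∫⁻ x, f x * {y | (2 : ℝ≥0∞) ^ k < f y}.indicator
          (fun _ => ((2 : ℝ≥0∞) ^ k) ^ (s - 1)) x ∂ν := ENNReal.tsum_le_tsum hlevel
    _ = 4 ^ s * K * ∫⁻ x, f x * ∑' k : ℤ, {k : ℤ | (2 : ℝ≥0∞) ^ k < f x}.indicator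
          (fun k => ((2 : ℝ≥0∞) ^ k) ^ (s - 1)) k ∂ν := by
        have hmeas (k : ℤ) : AEMeasurable (fun x => f x * {y | (2 : ℝ≥0∞) ^ k < f y}.indicator
            (fun _ => ((2 : ℝ≥0∞) ^ k) ^ (s - 1)) x) ν :=
          (hf.mul (measurable_const.indicator (hm k))).aemeasurable
        rw [ENNReal.tsum_mul_left, ← lintegral_tsum hmeas]
        simp only [← ENNReal.tsum_mul_left]
        rfl
    _ ≤ 4 ^ s * K * ∫⁻ x, (1 - 2 ^ (-(s - 1)))⁻¹ * f x ^ s ∂ν := by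
        gcongr 4 ^ s * K * ∫⁻ x, ?_ ∂ν with x
        calc _ ≤ f x * ((1 - 2 ^ (-(s - 1)))⁻¹ * f x ^ (s - 1)) := by
              gcongr f x * ?_
              exact tsum_two_zpow_rpow_le (sub_pos.2 hs) _
          _ = (1 - 2 ^ (-(s - 1)))⁻¹ * (f x ^ (1 : ℝ) * f x ^ (s - 1)) := by
              rw [ENNReal.rpow_one]
              ring
          _ = (1 - 2 ^ (-(s - 1)))⁻¹ * f x ^ s := by
              rw [← ENNReal.rpow_add_of_nonneg _ _ zero_le_one (sub_nonneg.2 hs.le),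
                add_sub_cancel]
    _ = 4 ^ s * K * (1 - 2 ^ (-(s - 1)))⁻¹ * ∫⁻ x, f x ^ s ∂ν := by
        rw [lintegral_const_mul _ (hf.pow_const s)]
        ring

lemma IsSHT.strong_type_maximal {d : X → X → ℝ} {A₀ C : ℝ} (hX : IsSHT d ν A₀ C) (hs : 1 < s) :
    ∃ K : ℝ≥0, ∀ f : X → ℝ≥0∞, Measurable f → ∃ H : X → ℝ≥0∞, Measurable H ∧
      maximal d ν f ≤ H ∧ ∫⁻ x, H x ^ s ∂ν ≤ K * ∫⁻ x, f x ^ s ∂ν := by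
  obtain ⟨K, hK⟩ := hX.weak_type_maximal
  have hgeom : ((1 : ℝ≥0∞) - 2 ^ (-(s - 1)))⁻¹ ≠ ⊤ := by
    refine ENNReal.inv_ne_top.2 (tsub_pos_of_lt ?_).ne'
    rw [ENNReal.rpow_neg, ENNReal.inv_lt_one]
    exact ENNReal.one_lt_rpow one_lt_two (sub_pos.2 hs)
  have hfin : 4 ^ s * K * ((1 : ℝ≥0∞) - 2 ^ (-(s - 1)))⁻¹ ≠ ⊤ := by
    finiteness
  refine ⟨(4 ^ s * K * ((1 : ℝ≥0∞) - 2 ^ (-(s - 1)))⁻¹).toNNReal, fun f hf => ?_⟩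
  rw [ENNReal.coe_toNNReal hfin]
  refine exists_measurable_majorant_of_weak_type hs hf fun a ha => ?_
  rw [← lintegral_indicator (measurableSet_lt measurable_const hf)]
  refine le_trans ?_ (hK _ a)
  gcongr a * ν ?_
  intro x hx
  have hlt := (show 2 * a < _ from hx).trans_le (maximal_le_maximal_indicator_add f a x)
  rw [two_mul] at hlt
  exact (ENNReal.add_lt_add_iff_right ha).1 hlt

end Marcinkiewicz

/-! ### Local balls and log-Hölder continuous exponents -/

section LocalBalls

variable {d : X → X → ℝ} {μ : Measure X} {A₀ Cμ : ℝ} {x₀ : X}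

/-- The quantity `e + d(x, x₀)`, in terms of which log-Hölder continuity at infinity and all decay
at infinity are measured. -/
noncomputable def bracket (d : X → X → ℝ) (x₀ x : X) : ℝ := Real.exp 1 + d x x₀

/-- A ball is local if it is small, or far from the base point `x₀` relative to its radius. These
are the balls on which a log-Hölder continuous exponent is essentially constant. -/
def IsLocalBall (d : X → X → ℝ) (A₀ : ℝ) (x₀ z : X) (r : ℝ) : Prop := r < 1 ∨ 2 * A₀ * r < d z x₀

/-- The reciprocal of the natural scale of a ball: every geometric quantity attached to a local ball
is bounded above and below by powers of it. -/
noncomputable def scale (d : X → X → ℝ) (x₀ z : X) (r : ℝ) : ℝ := bracket d x₀ z / min r 1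

omit [MeasurableSpace X] in
lemma dist_lt_bracket (d : X → X → ℝ) (x₀ x : X) : d x x₀ < bracket d x₀ x :=
  lt_add_of_pos_left _ (Real.exp_pos 1)

namespace IsSHT

lemma exp_one_le_bracket (hX : IsSHT d μ A₀ Cμ) (x : X) : Real.exp 1 ≤ bracket d x₀ x :=
  le_add_of_nonneg_right (hX.d_nonneg x x₀)

lemma one_le_bracket (hX : IsSHT d μ A₀ Cμ) (x : X) : 1 ≤ bracket d x₀ x :=
  (Real.one_le_exp zero_le_one).trans (hX.exp_one_le_bracket x)

lemma bracket_pos (hX : IsSHT d μ A₀ Cμ) (x : X) : 0 < bracket d x₀ x :=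
  one_pos.trans_le (hX.one_le_bracket x)

lemma one_le_log_bracket (hX : IsSHT d μ A₀ Cμ) (x : X) : 1 ≤ Real.log (bracket d x₀ x) :=
  (Real.le_log_iff_exp_le (hX.bracket_pos x)).2 (hX.exp_one_le_bracket x)

lemma measurable_bracket (hX : IsSHT d μ A₀ Cμ) : Measurable (bracket d x₀) :=
  (hX.measurable_dist_right x₀).const_add _

lemma bracket_div_le_scale (hX : IsSHT d μ A₀ Cμ) (z : X) {r : ℝ} (hr : 0 < r) :
    bracket d x₀ z / r ≤ scale d x₀ z r :=
  div_le_div_of_nonneg_left (hX.bracket_pos z).le (lt_min hr one_pos) (min_le_left _ _)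

lemma bracket_le_scale (hX : IsSHT d μ A₀ Cμ) (z : X) {r : ℝ} (hr : 0 < r) :
    bracket d x₀ z ≤ scale d x₀ z r :=
  le_div_self (hX.bracket_pos z).le (lt_min hr one_pos) (min_le_right _ _)

lemma one_le_log_scale (hX : IsSHT d μ A₀ Cμ) (z : X) {r : ℝ} (hr : 0 < r) :
    1 ≤ Real.log (scale d x₀ z r) :=
  (hX.one_le_log_bracket z).trans (Real.log_le_log (hX.bracket_pos z) (hX.bracket_le_scale z hr))

lemma one_le_scale (hX : IsSHT d μ A₀ Cμ) (z : X) {r : ℝ} (hr : 0 < r) : 1 ≤ scale d x₀ z r :=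
  (hX.one_le_bracket z).trans (hX.bracket_le_scale z hr)

lemma radius_le_bracket (hX : IsSHT d μ A₀ Cμ) {z : X} {r : ℝ} (hr : 0 < r)
    (hloc : IsLocalBall d A₀ x₀ z r) : r ≤ bracket d x₀ z := by
  rcases hloc with hsmall | hfar
  · exact hsmall.le.trans (hX.one_le_bracket z)
  · nlinarith [dist_lt_bracket d x₀ z, hX.one_le_A₀]

lemma ball_subset_ball_basepoint (hX : IsSHT d μ A₀ Cμ) {z : X} {r : ℝ} (hr : 0 < r)
    (hloc : IsLocalBall d A₀ x₀ z r) : ball d z r ⊆ ball d x₀ (2 * A₀ * bracket d x₀ z) := by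
  intro y hy
  calc d x₀ y ≤ A₀ * (d z x₀ + d z y) := hX.d_symm x₀ z ▸ hX.d_triangle x₀ y z
    _ < A₀ * (bracket d x₀ z + bracket d x₀ z) := mul_lt_mul_of_pos_left
        (add_lt_add (dist_lt_bracket d x₀ z) (hy.trans_le (hX.radius_le_bracket hr hloc)))
        hX.A₀_pos
    _ = 2 * A₀ * bracket d x₀ z := by ring

lemma ball_basepoint_subset_ball (hX : IsSHT d μ A₀ Cμ) (z : X) :
    ball d x₀ (2 * A₀ * bracket d x₀ z) ⊆ ball d z (3 * A₀ ^ 2 * bracket d x₀ z) := by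
  intro y hy
  calc d z y ≤ A₀ * (d z x₀ + d x₀ y) := hX.d_triangle z y x₀
    _ < A₀ * (bracket d x₀ z + 2 * A₀ * bracket d x₀ z) :=
        mul_lt_mul_of_pos_left (add_lt_add (dist_lt_bracket d x₀ z) hy) hX.A₀_pos
    _ ≤ 3 * A₀ ^ 2 * bracket d x₀ z := by
        nlinarith [mul_nonneg (mul_nonneg (hX.bracket_pos (x₀ := x₀) z).le hX.A₀_pos.le)
          (sub_nonneg.2 hX.one_le_A₀)]

lemma bracket_center_le (hX : IsSHT d μ A₀ Cμ) {z x : X} {r : ℝ}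
    (hloc : IsLocalBall d A₀ x₀ z r) (hx : x ∈ ball d z r) :
    bracket d x₀ z ≤ 2 * A₀ * bracket d x₀ x := by
  have hA := hX.one_le_A₀
  have he : (1 : ℝ) ≤ Real.exp 1 := Real.one_le_exp zero_le_one
  have hzx : d z x < r := hx
  have htri := hX.d_triangle z x₀ x
  have hx₀ := hX.d_nonneg x x₀
  unfold bracket
  rcases hloc with hsmall | hfar
  · have : A₀ * (d z x + d x x₀) ≤ A₀ * (Real.exp 1 + d x x₀) := by
      gcongr
      linarith
    nlinarith
  · have : A₀ * (d z x + d x x₀) ≤ A₀ * (r + d x x₀) := by gcongr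
    nlinarith

end IsSHT

end LocalBalls

section RpowComparison

variable {t T C S e K : ℝ≥0∞} {a b c p q M N P : ℝ}

lemma rpow_le_rpow_abs (h : t ≤ C) (h' : t⁻¹ ≤ C) (c : ℝ) : t ^ c ≤ C ^ |c| := by
  rcases le_total 0 c with hc | hc
  · rw [abs_of_nonneg hc]
    gcongr
  · rw [abs_of_nonpos hc, ← neg_neg c, ENNReal.rpow_neg, ← ENNReal.inv_rpow, neg_neg]
    exact ENNReal.rpow_le_rpow h' (neg_nonneg.2 hc)

lemma rpow_le_mul_rpow_of_polynomial_bound (ht0 : t ≠ 0) (htt : t ≠ ⊤) (hC : 1 ≤ C) (hN : 0 ≤ N)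
    (h : t ≤ C * S ^ N) (h' : t⁻¹ ≤ C * S ^ N) (hP : |a - b| ≤ P) (hS : S ^ |a - b| ≤ K) :
    t ^ a ≤ C ^ P * K ^ N * t ^ b := by
  have hdiff : t ^ (a - b) ≤ C ^ P * K ^ N := by
    calc t ^ (a - b) ≤ (C * S ^ N) ^ |a - b| := rpow_le_rpow_abs h h' _
      _ = C ^ |a - b| * (S ^ |a - b|) ^ N := by
        rw [ENNReal.mul_rpow_of_nonneg _ _ (abs_nonneg _), ← ENNReal.rpow_mul, ← ENNReal.rpow_mul,
          mul_comm N]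
      _ ≤ C ^ P * K ^ N := by gcongr
  calc t ^ a = t ^ (a - b) * t ^ b := by rw [← ENNReal.rpow_add _ _ ht0 htt, sub_add_cancel]
    _ ≤ C ^ P * K ^ N * t ^ b := by gcongr

/-- When `t` is so small that its powers cannot be compared, the decaying error term
absorbs `t ^ p`. -/
lemma rpow_le_mul_rpow_add (hT : 1 ≤ T) (hTt : T ≠ ⊤) (ht : t ≤ T) (he : 1 ≤ e) (het : e ≠ ⊤)
    (hP : |p - q| ≤ P) (hK : e ^ |p - q| ≤ K) (hp : 1 ≤ p) (hM : 0 < M) :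
    t ^ p ≤ T ^ P * K ^ M * t ^ q + e ^ (-M) := by
  have heM : e ^ (-M) ≤ 1 := ENNReal.rpow_le_one_of_one_le_of_neg he (neg_lt_zero.2 hM)
  rcases le_total (e ^ (-M)) t with hle | hle
  · have hpos : 0 < e ^ (-M) := ENNReal.rpow_pos (one_pos.trans_le he) het
    refine (rpow_le_mul_rpow_of_polynomial_bound (hpos.trans_le hle).ne' (ht.trans_lt hTt.lt_top).ne
      hT hM.le ?_ ?_ hP hK).trans le_self_add
    · exact ht.trans (le_mul_of_one_le_right' (ENNReal.one_le_rpow he hM))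
    · rw [ENNReal.rpow_neg, ENNReal.inv_le_iff_inv_le] at hle
      exact hle.trans (le_mul_of_one_le_left' hT)
  · calc t ^ p ≤ t ^ (1 : ℝ) := ENNReal.rpow_le_rpow_of_exponent_ge (hle.trans heM) hp
      _ = t := ENNReal.rpow_one t
      _ ≤ e ^ (-M) := hle
      _ ≤ T ^ P * K ^ M * t ^ q + e ^ (-M) := le_add_self

end RpowComparison

section LogHolder

lemma conjExponent_le_conjExponent {a b : ℝ} (ha : 1 < a) (hab : a ≤ b) :
    b.conjExponent ≤ a.conjExponent := by
  rw [Real.conjExponent, Real.conjExponent, div_le_div_iff₀ (by linarith) (by linarith)]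
  nlinarith

lemma abs_conjExponent_sub_le {a b m : ℝ} (hm : 1 < m) (ha : m ≤ a) (hb : m ≤ b) :
    |a.conjExponent - b.conjExponent| ≤ |a - b| / (m - 1) ^ 2 := by
  have := sub_pos.2 hm
  have ha' : 0 < a - 1 := by linarith
  have hb' : 0 < b - 1 := by linarith
  have hdiff : a.conjExponent - b.conjExponent = (b - a) / ((a - 1) * (b - 1)) := by
    simp only [Real.conjExponent]
    field_simp
    ring
  rw [hdiff, abs_div, abs_of_pos (mul_pos ha' hb'), abs_sub_comm, sq]
  gcongr

lemma abs_conjExponent_sub_mul_le {a b m L C : ℝ} (hm : 1 < m) (ha : m ≤ a) (hb : m ≤ b)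
    (hC : 0 ≤ C) (h : |a - b| * L ≤ C) :
    |a.conjExponent - b.conjExponent| * L ≤ C / (m - 1) ^ 2 := by
  rcases le_total L 0 with hL | hL
  · exact (mul_nonpos_of_nonneg_of_nonpos (abs_nonneg _) hL).trans (by positivity)
  · calc |a.conjExponent - b.conjExponent| * L ≤ |a - b| / (m - 1) ^ 2 * L := by
          gcongr
          exact abs_conjExponent_sub_le hm ha hb
      _ = |a - b| * L / (m - 1) ^ 2 := div_mul_eq_mul_div _ _ _
      _ ≤ C / (m - 1) ^ 2 := by gcongr

lemma ofReal_rpow_le_exp {S a C : ℝ} (hS : 0 < S) (ha : 0 ≤ a) (h : a * Real.log S ≤ C) :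
    ENNReal.ofReal S ^ a ≤ ENNReal.ofReal (Real.exp C) := by
  rw [ENNReal.ofReal_rpow_of_nonneg hS.le ha, Real.rpow_def_of_pos hS, mul_comm]
  gcongr

variable {d : X → X → ℝ} {μ : Measure X} {A₀ Cμ : ℝ} {x₀ : X}

/-- A log-Hölder continuous exponent with values in a compact subinterval of `(1, ∞)`. Continuity
is recorded in the scale-invariant form in which it is used: the oscillation on a local ball and the
distance to the limit value, measured against the logarithm of `scale` and `bracket`. -/
structure LogHolderExponent (d : X → X → ℝ) (A₀ : ℝ) (x₀ : X) where
  toFun : X → ℝ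
  limit : ℝ
  lower : ℝ
  upper : ℝ
  oscConst : ℝ
  measurable_toFun : Measurable toFun
  one_lt_lower : 1 < lower
  lower_le : ∀ x, lower ≤ toFun x
  le_upper : ∀ x, toFun x ≤ upper
  lower_le_limit : lower ≤ limit
  limit_le_upper : limit ≤ upper
  oscConst_nonneg : 0 ≤ oscConst
  osc_local : ∀ {z r}, 0 < r → IsLocalBall d A₀ x₀ z r → ∀ x ∈ ball d z r, ∀ y ∈ ball d z r,
    |toFun x - toFun y| * Real.log (scale d x₀ z r) ≤ oscConst
  osc_limit : ∀ x, |toFun x - limit| * Real.log (bracket d x₀ x) ≤ oscConst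

namespace LogHolderExponent

instance : CoeFun (LogHolderExponent d A₀ x₀) fun _ => X → ℝ := ⟨toFun⟩

lemma measurable (p : LogHolderExponent d A₀ x₀) : Measurable p := p.measurable_toFun

lemma one_lt (p : LogHolderExponent d A₀ x₀) (x : X) : 1 < p x :=
  p.one_lt_lower.trans_le (p.lower_le x)

lemma pos (p : LogHolderExponent d A₀ x₀) (x : X) : 0 < p x := one_pos.trans (p.one_lt x)

lemma one_lt_limit (p : LogHolderExponent d A₀ x₀) : 1 < p.limit :=
  p.one_lt_lower.trans_le p.lower_le_limit

lemma one_lt_upper (p : LogHolderExponent d A₀ x₀) : 1 < p.upper :=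
  p.one_lt_limit.trans_le p.limit_le_upper

lemma abs_sub_le_upper (p : LogHolderExponent d A₀ x₀) {a b : ℝ} (ha : a ∈ Set.Icc p.lower p.upper)
    (hb : b ∈ Set.Icc p.lower p.upper) : |a - b| ≤ p.upper := by
  have h := p.one_lt_lower
  exact abs_sub_le_iff.2 ⟨by linarith [ha.2, hb.1], by linarith [ha.1, hb.2]⟩

lemma mem_Icc (p : LogHolderExponent d A₀ x₀) (x : X) : p x ∈ Set.Icc p.lower p.upper :=
  ⟨p.lower_le x, p.le_upper x⟩

lemma limit_mem_Icc (p : LogHolderExponent d A₀ x₀) : p.limit ∈ Set.Icc p.lower p.upper :=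
  ⟨p.lower_le_limit, p.limit_le_upper⟩

/-- The exponent `p' = p / (p - 1)`, which is log-Hölder continuous along with `p`. -/
noncomputable def conj (p : LogHolderExponent d A₀ x₀) : LogHolderExponent d A₀ x₀ where
  toFun x := (p x).conjExponent
  limit := p.limit.conjExponent
  lower := p.upper.conjExponent
  upper := p.lower.conjExponent
  oscConst := p.oscConst / (p.lower - 1) ^ 2
  measurable_toFun := p.measurable.div (p.measurable.sub_const 1)
  one_lt_lower := (Real.HolderConjugate.conjExponent p.one_lt_upper).symm.lt
  lower_le x := conjExponent_le_conjExponent (p.one_lt x) (p.le_upper x)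
  le_upper x := conjExponent_le_conjExponent p.one_lt_lower (p.lower_le x)
  lower_le_limit := conjExponent_le_conjExponent p.one_lt_limit p.limit_le_upper
  limit_le_upper := conjExponent_le_conjExponent p.one_lt_lower p.lower_le_limit
  oscConst_nonneg := div_nonneg p.oscConst_nonneg (sq_nonneg _)
  osc_local hr hloc x hx y hy :=
    abs_conjExponent_sub_mul_le p.one_lt_lower (p.lower_le x) (p.lower_le y) p.oscConst_nonneg
      (p.osc_local hr hloc x hx y hy)
  osc_limit x :=
    abs_conjExponent_sub_mul_le p.one_lt_lower (p.lower_le x) p.lower_le_limit p.oscConst_nonneg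
      (p.osc_limit x)

lemma holderConjugate (p : LogHolderExponent d A₀ x₀) (x : X) :
    (p x).HolderConjugate (p.conj x) :=
  Real.HolderConjugate.conjExponent (p.one_lt x)

lemma holderConjugate_limit (p : LogHolderExponent d A₀ x₀) :
    p.limit.HolderConjugate p.conj.limit :=
  Real.HolderConjugate.conjExponent p.one_lt_limit

lemma scale_rpow_le (p : LogHolderExponent d A₀ x₀) (hX : IsSHT d μ A₀ Cμ) {z : X} {r : ℝ}
    (hr : 0 < r) (hloc : IsLocalBall d A₀ x₀ z r) {x y : X} (hx : x ∈ ball d z r)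
    (hy : y ∈ ball d z r) :
    ENNReal.ofReal (scale d x₀ z r) ^ |p x - p y| ≤ ENNReal.ofReal (Real.exp p.oscConst) :=
  ofReal_rpow_le_exp (one_pos.trans_le (hX.one_le_scale z hr)) (abs_nonneg _)
    (p.osc_local hr hloc x hx y hy)

lemma bracket_rpow_le (p : LogHolderExponent d A₀ x₀) (hX : IsSHT d μ A₀ Cμ) (x : X) :
    ENNReal.ofReal (bracket d x₀ x) ^ |p x - p.limit| ≤ ENNReal.ofReal (Real.exp p.oscConst) :=
  ofReal_rpow_le_exp (hX.bracket_pos x) (abs_nonneg _) (p.osc_limit x)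

end LogHolderExponent

variable {p : X → ℝ}

lemma essInf_le_of_LH0 (hX : IsSHT d μ A₀ Cμ) (hp : BddBelow (Set.range p)) (h : LH0 d p)
    (x : X) : essInf p μ ≤ p x := by
  obtain ⟨C, hC, hosc⟩ := h
  by_contra! hlt
  set ε := essInf p μ - p x
  have hε : 0 < ε := sub_pos.2 hlt
  have hae : ∀ᵐ y ∂μ, essInf p μ ≤ p y := ae_essInf_le hp.isBoundedUnder_of_range
  set δ := min (1 / 2) (Real.exp (-(C / ε)))
  have hδ : 0 < δ := lt_min (by norm_num) (Real.exp_pos _)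
  have hsub : ball d x δ ⊆ {y | ¬ essInf p μ ≤ p y} := by
    intro y hy
    have hy' : d x y < δ := hy
    simp only [Set.mem_ofPred_eq, not_le]
    rcases (hX.d_nonneg x y).eq_or_lt with h0 | h0
    · rwa [← (hX.d_eq_zero_iff x y).1 h0.symm]
    · have hlog : Real.log (d x y) < -(C / ε) :=
        (Real.log_lt_iff_lt_exp h0).2 (hy'.trans_le (min_le_right _ _))
      have hlt : C / -Real.log (d x y) < ε := by
        have : 0 < C / ε := by positivity
        rw [div_lt_iff₀ (by linarith), ← div_lt_iff₀' hε]
        linarith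
      linarith [(abs_le.1 (hosc x y h0 (hy'.trans_le (min_le_left _ _)))).1]
  exact (hX.ball_pos x δ hδ).ne' (measure_mono_null hsub (ae_iff.1 hae))

lemma abs_sub_mul_log_bracket_le (hX : IsSHT d μ A₀ Cμ) {q C : ℝ}
    (h : ∀ x, |p x - q| * Real.log (bracket d x₀ x) ≤ C) {z x : X} {r : ℝ}
    (hloc : IsLocalBall d A₀ x₀ z r) (hx : x ∈ ball d z r) :
    |p x - q| * Real.log (bracket d x₀ z) ≤ C * (Real.log (2 * A₀) + 1) := by
  have hA := hX.one_le_A₀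
  have hlA : 0 ≤ Real.log (2 * A₀) := Real.log_nonneg (by linarith)
  have hlog := Real.log_le_log (hX.bracket_pos z) (hX.bracket_center_le hloc hx)
  rw [Real.log_mul (by linarith) (hX.bracket_pos x).ne'] at hlog
  have hb : |p x - q| ≤ C :=
    (le_mul_of_one_le_right (abs_nonneg _) (hX.one_le_log_bracket x)).trans (h x)
  calc |p x - q| * Real.log (bracket d x₀ z)
      ≤ |p x - q| * (Real.log (2 * A₀) + Real.log (bracket d x₀ x)) := by gcongr
    _ = |p x - q| * Real.log (2 * A₀) + |p x - q| * Real.log (bracket d x₀ x) := mul_add _ _ _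
    _ ≤ C * Real.log (2 * A₀) + C := by gcongr; exact h x
    _ = C * (Real.log (2 * A₀) + 1) := by ring

lemma IsSHT.neg_log_min_le (hX : IsSHT d μ A₀ Cμ) {z x y : X} {r : ℝ} (hr : 0 < r)
    (hx : x ∈ ball d z r) (hy : y ∈ ball d z r) (hxy : 0 < d x y) :
    -Real.log (min r 1) ≤ Real.log (4 * A₀) ∨
      d x y < 1 / 2 ∧ -Real.log (min r 1) ≤ -Real.log (d x y) + Real.log (4 * A₀) := by
  have hA := hX.one_le_A₀
  have hmin : 0 < min r 1 := lt_min hr one_pos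
  rcases le_or_gt 1 (4 * A₀ * min r 1) with hlarge | hsmall
  · left
    rw [← Real.log_inv]
    exact Real.log_le_log (inv_pos.2 hmin) ((inv_le_iff_one_le_mul₀ hmin).2 hlarge)
  · right
    have hr1 : min r 1 = r := min_eq_left (by
      by_contra! h1
      rw [min_eq_right h1.le] at hsmall
      linarith)
    rw [hr1] at hsmall ⊢
    have hd : d x y ≤ 2 * A₀ * r := by
      have hx' : d z x < r := hx
      have hy' : d z y < r := hy
      have htri := hX.d_triangle x y z
      rw [hX.d_symm x z] at htri
      nlinarith
    refine ⟨by linarith, ?_⟩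
    have hlog : Real.log (d x y) ≤ Real.log (4 * A₀) + Real.log r := by
      rw [← Real.log_mul (by linarith) hr.ne']
      exact Real.log_le_log hxy (by nlinarith)
    linarith

lemma abs_sub_mul_neg_log_min_le (hX : IsSHT d μ A₀ Cμ) {C P : ℝ} (hC : 0 ≤ C)
    (h : ∀ x y, 0 < d x y → d x y < 1 / 2 → |p x - p y| ≤ C / -Real.log (d x y))
    (hP : ∀ x y, |p x - p y| ≤ P) {z x y : X} {r : ℝ} (hr : 0 < r) (hx : x ∈ ball d z r)
    (hy : y ∈ ball d z r) :
    |p x - p y| * -Real.log (min r 1) ≤ C + P * Real.log (4 * A₀) := by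
  have hlA : 0 ≤ Real.log (4 * A₀) := Real.log_nonneg (by linarith [hX.one_le_A₀])
  have hP' : |p x - p y| * Real.log (4 * A₀) ≤ P * Real.log (4 * A₀) := by
    gcongr
    exact hP x y
  rcases (hX.d_nonneg x y).eq_or_lt with h0 | h0
  · rw [← (hX.d_eq_zero_iff x y).1 h0.symm, sub_self, abs_zero, zero_mul] at hP' ⊢
    linarith
  rcases hX.neg_log_min_le hr hx hy h0 with hlog | ⟨hd, hlog⟩
  · calc |p x - p y| * -Real.log (min r 1) ≤ |p x - p y| * Real.log (4 * A₀) := by gcongr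
      _ ≤ C + P * Real.log (4 * A₀) := by linarith
  · have hosc := h x y h0 hd
    rw [le_div_iff₀ (neg_pos.2 (Real.log_neg h0 (by linarith)))] at hosc
    calc |p x - p y| * -Real.log (min r 1)
        ≤ |p x - p y| * (-Real.log (d x y) + Real.log (4 * A₀)) := by gcongr
      _ ≤ C + P * Real.log (4 * A₀) := by linarith

lemma LH0.exists_abs_sub_mul_log_scale_le (hX : IsSHT d μ A₀ Cμ) (h₀ : LH0 d p) {q C : ℝ}
    (h : ∀ x, |p x - q| * Real.log (bracket d x₀ x) ≤ C) :
    ∃ K, ∀ {z r}, 0 < r → IsLocalBall d A₀ x₀ z r → ∀ x ∈ ball d z r, ∀ y ∈ ball d z r,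
      |p x - p y| * Real.log (scale d x₀ z r) ≤ K := by
  obtain ⟨C₀, hC₀, h₀⟩ := h₀
  have htri : ∀ x y, |p x - p y| ≤ |p x - q| + |p y - q| := fun x y => by
    rw [abs_sub_comm (p y)]
    exact abs_sub_le _ _ _
  have hP : ∀ x y, |p x - p y| ≤ C + C := fun x y =>
    (htri x y).trans (add_le_add
      ((le_mul_of_one_le_right (abs_nonneg _) (hX.one_le_log_bracket x)).trans (h x))
      ((le_mul_of_one_le_right (abs_nonneg _) (hX.one_le_log_bracket y)).trans (h y)))
  refine ⟨2 * (C * (Real.log (2 * A₀) + 1)) + (C₀ + (C + C) * Real.log (4 * A₀)),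
    fun {z r} hr hloc x hx y hy => ?_⟩
  have hlog := zero_le_one.trans (hX.one_le_log_bracket (x₀ := x₀) z)
  have hbracket : |p x - p y| * Real.log (bracket d x₀ z) ≤
      2 * (C * (Real.log (2 * A₀) + 1)) := by
    calc |p x - p y| * Real.log (bracket d x₀ z)
        ≤ (|p x - q| + |p y - q|) * Real.log (bracket d x₀ z) := by
          gcongr
          exact htri x y
      _ ≤ 2 * (C * (Real.log (2 * A₀) + 1)) := by
          linarith [abs_sub_mul_log_bracket_le hX h hloc hx,
            abs_sub_mul_log_bracket_le hX h hloc hy]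
  rw [scale, Real.log_div (hX.bracket_pos z).ne' (lt_min hr one_pos).ne']
  linarith [abs_sub_mul_neg_log_min_le hX hC₀.le h₀ hP hr hx hy]

/-- The limit value is raised to `essInf p μ` if it lies below, as it may on a bounded space. -/
lemma LH.exists_logHolderExponent (hX : IsSHT d μ A₀ Cμ) (hmeas : Measurable p)
    (h : LH d x₀ p) (hlower : 1 < essInf p μ) :
    ∃ P : LogHolderExponent d A₀ x₀, ⇑P = p := by
  obtain ⟨h₀, q, C, hC, hinf⟩ := h
  have hlog := hX.one_le_log_bracket (x₀ := x₀)
  have hq : ∀ x, |p x - q| * Real.log (bracket d x₀ x) ≤ C := fun x =>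
    (le_div_iff₀ (one_pos.trans_le (hlog x))).1 (hinf x)
  have hpq : ∀ x, |p x - q| ≤ C := fun x =>
    (le_mul_of_one_le_right (abs_nonneg _) (hlog x)).trans (hq x)
  have hm := essInf_le_of_LH0 hX
    ⟨q - C, Set.forall_mem_range.2 fun x => by linarith [(abs_le.1 (hpq x)).1]⟩ h₀
  set m := essInf p μ
  have hclamp : ∀ x, |p x - max q m| * Real.log (bracket d x₀ x) ≤ C := fun x => by
    refine (mul_le_mul_of_nonneg_right ?_ (zero_le_one.trans (hlog x))).trans (hq x)
    rcases le_total m q with hmq | hmq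
    · rw [max_eq_left hmq]
    · rw [max_eq_right hmq, abs_of_nonneg (sub_nonneg.2 (hm x)),
        abs_of_nonneg (sub_nonneg.2 (hmq.trans (hm x)))]
      gcongr
  obtain ⟨K, hK⟩ := h₀.exists_abs_sub_mul_log_scale_le hX hclamp
  refine ⟨⟨p, max q m, m, max q m + C, max C K, hmeas, hlower, hm, fun x => ?_, le_max_right _ _,
    le_add_of_nonneg_right hC.le, le_max_of_le_left hC.le,
    fun hr hloc x hx y hy => (hK hr hloc x hx y hy).trans (le_max_right _ _),
    fun x => (hclamp x).trans (le_max_left _ _)⟩, rfl⟩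
  linarith [(abs_le.1 (hpq x)).2, le_max_left q m]

end LogHolder

/-! ### Luxemburg norms -/

section Luxemburg

variable {μ : Measure X} {p : X → ℝ} {f g : X → ℝ≥0∞}

lemma modular_ofRealExp (hp : ∀ x, 0 ≤ p x) (f : X → ℝ≥0∞) :
    modular μ (ofRealExp p) f = ∫⁻ x, f x ^ p x ∂μ := by
  simp [modular, ofRealExp, ENNReal.toReal_ofReal (hp _)]

omit [MeasurableSpace X] in
lemma conjExp_ofRealExp (hp : ∀ x, 1 < p x) :
    conjExp (ofRealExp p) = ofRealExp fun x => (p x).conjExponent := by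
  funext x
  rw [conjExp, ofRealExp, if_neg ENNReal.ofReal_ne_top, ofRealExp, Real.conjExponent,
    ENNReal.ofReal_div_of_pos (sub_pos.2 (hp x)), ENNReal.ofReal_sub _ zero_le_one,
    ENNReal.ofReal_one]

lemma luxNorm_le (hp : ∀ x, 0 ≤ p x) {l : ℝ≥0∞} (hl : 0 < l)
    (h : ∫⁻ x, (f x / l) ^ p x ∂μ ≤ 1) : luxNorm μ (ofRealExp p) f ≤ l :=
  sInf_le ⟨hl, (modular_ofRealExp hp _).trans_le h⟩

lemma lintegral_div_rpow_le_one (hp : ∀ x, 0 ≤ p x) {l : ℝ≥0∞}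
    (h : luxNorm μ (ofRealExp p) f < l) : ∫⁻ x, (f x / l) ^ p x ∂μ ≤ 1 := by
  obtain ⟨k, ⟨-, hk⟩, hkl⟩ := sInf_lt_iff.1 h
  rw [modular_ofRealExp hp] at hk
  exact (lintegral_mono fun x =>
    ENNReal.rpow_le_rpow (ENNReal.div_le_div_left hkl.le _) (hp x)).trans hk

lemma luxNorm_mono_ae (hp : ∀ x, 0 ≤ p x) (h : ∀ᵐ x ∂μ, f x ≤ g x) :
    luxNorm μ (ofRealExp p) f ≤ luxNorm μ (ofRealExp p) g := by
  refine le_sInf fun l ⟨hl, hg⟩ => luxNorm_le hp hl ?_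
  rw [modular_ofRealExp hp] at hg
  refine (lintegral_mono_ae ?_).trans hg
  filter_upwards [h] with x hx
  exact ENNReal.rpow_le_rpow (ENNReal.div_le_div_right hx _) (hp x)

lemma luxNorm_congr_ae (hp : ∀ x, 0 ≤ p x) (h : ∀ᵐ x ∂μ, f x = g x) :
    luxNorm μ (ofRealExp p) f = luxNorm μ (ofRealExp p) g :=
  le_antisymm (luxNorm_mono_ae hp (h.mono fun _ => Eq.le))
    (luxNorm_mono_ae hp (h.mono fun _ => Eq.ge))

lemma lintegral_indicator_div_rpow (hp : ∀ x, 0 < p x) {B : Set X} (hB : MeasurableSet B)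
    (f : X → ℝ≥0∞) (l : ℝ≥0∞) :
    ∫⁻ x, (B.indicator f x / l) ^ p x ∂μ = ∫⁻ x in B, (f x / l) ^ p x ∂μ := by
  rw [← lintegral_indicator hB]
  refine lintegral_congr fun x => ?_
  by_cases hx : x ∈ B <;> simp [hx, hp x]

lemma ae_eq_zero_of_luxNorm_eq_zero (hp : ∀ x, 1 ≤ p x) (hpm : Measurable p) (hf : Measurable f)
    (h : luxNorm μ (ofRealExp p) f = 0) : f =ᵐ[μ] 0 := by
  have hp0 : ∀ x, 0 < p x := fun x => one_pos.trans_le (hp x)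
  have hmul : ∀ n : ℕ, n * ∫⁻ x, f x ^ p x ∂μ ≤ 1 := by
    intro n
    rcases n.eq_zero_or_pos with rfl | hn
    · simp
    have hn' := lintegral_div_rpow_le_one (μ := μ) (f := f) (l := (n : ℝ≥0∞)⁻¹)
      (fun x => (hp0 x).le) (by simp [h])
    rw [← lintegral_const_mul _ (hf.pow hpm)]
    refine (lintegral_mono fun x => ?_).trans hn'
    rw [div_eq_mul_inv, inv_inv, ENNReal.mul_rpow_of_nonneg _ _ (hp0 x).le, mul_comm]
    gcongr
    exact ENNReal.le_rpow_self_of_one_le (by exact_mod_cast hn) (hp x)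
  have hzero : ∫⁻ x, f x ^ p x ∂μ = 0 := by
    by_contra hne
    obtain ⟨n, hn⟩ := ENNReal.exists_nat_mul_gt hne one_ne_top
    exact (hmul n).not_gt hn
  filter_upwards [(lintegral_eq_zero_iff (hf.pow hpm)).1 hzero] with x hx
  exact (ENNReal.rpow_eq_zero_iff_of_pos (hp0 x)).1 hx

lemma lintegral_const_mul_rpow_le {P : ℝ} (hp : ∀ x, 0 ≤ p x) (hP : ∀ x, p x ≤ P) {t : ℝ≥0∞}
    (ht : 1 ≤ t) (htt : t ≠ ⊤) (hP0 : 0 ≤ P) :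
    ∫⁻ x, (t * f x) ^ p x ∂μ ≤ t ^ P * ∫⁻ x, f x ^ p x ∂μ := by
  rw [← lintegral_const_mul' _ _ (ENNReal.rpow_ne_top_of_nonneg hP0 htt)]
  refine lintegral_mono fun x => ?_
  rw [ENNReal.mul_rpow_of_nonneg _ _ (hp x)]
  gcongr
  exact hP x

lemma le_of_forall_le_rpow_mul {a b : ℝ≥0∞} {P : ℝ}
    (h : ∀ t : ℝ≥0∞, 1 < t → t ≠ ⊤ → a ≤ t ^ P * b) : a ≤ b := by
  have hlim : Tendsto (fun t : ℝ≥0∞ => t ^ P * b) (nhdsWithin 1 (Set.Ioi 1)) (nhds b) := by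
    have := ENNReal.Tendsto.mul_const
      ((ENNReal.continuous_rpow_const (y := P)).tendsto (1 : ℝ≥0∞)) (b := b) (Or.inl (by simp))
    simpa using this.mono_left nhdsWithin_le_nhds
  have : (nhdsWithin (1 : ℝ≥0∞) (Set.Ioi 1)).NeBot := nhdsGT_neBot_of_exists_gt ⟨⊤, one_lt_top⟩
  refine ge_of_tendsto hlim ?_
  filter_upwards [self_mem_nhdsWithin, nhdsWithin_le_nhds (Iio_mem_nhds one_lt_top)] with t ht htt
  exact h t ht (ne_of_lt htt)

lemma lintegral_div_luxNorm_rpow {P : ℝ} (hp : ∀ x, 0 < p x) (hP : ∀ x, p x ≤ P) (hP0 : 0 ≤ P)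
    (h0 : luxNorm μ (ofRealExp p) f ≠ 0) (ht : luxNorm μ (ofRealExp p) f ≠ ⊤) :
    ∫⁻ x, (f x / luxNorm μ (ofRealExp p) f) ^ p x ∂μ = 1 := by
  set L := luxNorm μ (ofRealExp p) f
  have hp0 : ∀ x, 0 ≤ p x := fun x => (hp x).le
  have hdiv : ∀ {t l : ℝ≥0∞}, t ≠ 0 → t ≠ ⊤ → ∀ x, f x / l = t * (f x / (t * l)) :=
    fun {t l} ht0 htt x => by
      rw [div_eq_mul_inv _ (t * l), ENNReal.mul_inv (.inl ht0) (.inl htt), mul_left_comm,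
        ← mul_assoc t, ENNReal.mul_inv_cancel ht0 htt, one_mul, div_eq_mul_inv]
  refine le_antisymm (le_of_forall_le_rpow_mul (P := P) fun t h1 htt => ?_)
    (le_of_forall_le_rpow_mul (P := P) fun t h1 htt => ?_)
  · have ht0 := (one_pos.trans h1).ne'
    simp only [hdiv ht0 htt (l := L)]
    refine (lintegral_const_mul_rpow_le hp0 hP h1.le htt hP0).trans ?_
    gcongr
    refine lintegral_div_rpow_le_one hp0 ?_
    simpa using (ENNReal.mul_lt_mul_iff_left h0 ht).2 h1
  · have ht0 := (one_pos.trans h1).ne'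
    have hlt : 1 < ∫⁻ x, (f x / (L / t)) ^ p x ∂μ := by
      refine lt_of_not_ge fun hle => (luxNorm_le hp0 (ENNReal.div_pos h0 htt) hle).not_gt ?_
      exact (ENNReal.div_lt_iff (.inl ht0) (.inl htt)).2
        (by simpa using (ENNReal.mul_lt_mul_iff_right h0 ht).2 h1)
    simp only [hdiv ht0 htt (l := L / t), ENNReal.mul_div_cancel ht0 htt] at hlt
    exact hlt.le.trans (lintegral_const_mul_rpow_le hp0 hP h1.le htt hP0)

lemma lintegral_mul_le_of_lintegral_rpow_le_one {p' : X → ℝ}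
    (hpp' : ∀ x, (p x).HolderConjugate (p' x)) (hpm : Measurable p) (hf : Measurable f)
    {l k : ℝ≥0∞} (hl0 : l ≠ 0) (hlt : l ≠ ⊤) (hk0 : k ≠ 0) (hkt : k ≠ ⊤)
    (hfl : ∫⁻ x, (f x / l) ^ p x ∂μ ≤ 1) (hgk : ∫⁻ x, (g x / k) ^ p' x ∂μ ≤ 1) :
    ∫⁻ x, f x * g x ∂μ ≤ 2 * (l * k) := by
  have hyoung : ∀ x, f x / l * (g x / k) ≤ (f x / l) ^ p x + (g x / k) ^ p' x := fun x =>
    (ENNReal.young_inequality _ _ (hpp' x)).trans <| add_le_add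
      (ENNReal.div_le_of_le_mul (le_mul_of_one_le_right' (by simpa using (hpp' x).lt.le)))
      (ENNReal.div_le_of_le_mul (le_mul_of_one_le_right' (by simpa using (hpp' x).symm.lt.le)))
  calc ∫⁻ x, f x * g x ∂μ = ∫⁻ x, l * k * (f x / l * (g x / k)) ∂μ := by
        refine lintegral_congr fun x => ?_
        rw [mul_mul_mul_comm, ENNReal.mul_div_cancel hl0 hlt, ENNReal.mul_div_cancel hk0 hkt]
    _ = l * k * ∫⁻ x, f x / l * (g x / k) ∂μ :=
        lintegral_const_mul' _ _ (ENNReal.mul_ne_top hlt hkt)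
    _ ≤ l * k * ∫⁻ x, (f x / l) ^ p x + (g x / k) ^ p' x ∂μ := by
        gcongr l * k * ?_
        exact lintegral_mono hyoung
    _ ≤ l * k * (1 + 1) := by
        rw [lintegral_add_left ((hf.div_const l).pow hpm)]
        gcongr
    _ = 2 * (l * k) := by rw [one_add_one_eq_two, mul_comm]

end Luxemburg

/-! ### Muckenhoupt weights -/

/-- The `L^{p(·)}` norm `‖v χ_B‖_{p(·)}` over the ball `B = B(z,r)`. -/
noncomputable def ballNorm (d : X → X → ℝ) (μ : Measure X) (p : X → ℝ) (v : X → ℝ≥0∞) (z : X)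
    (r : ℝ) : ℝ≥0∞ :=
  luxNorm μ (ofRealExp p) ((ball d z r).indicator v)

/-- The measure `v(y)^{p(y)} dμ(y)`, which plays the role of `w dμ` for a classical weight `w`. -/
noncomputable def powerMeasure (μ : Measure X) (p : X → ℝ) (v : X → ℝ≥0∞) : Measure X :=
  μ.withDensity fun y => v y ^ p y

/-- The condition `v ∈ A_{p(·)}` for a weight that is positive and finite at every point. -/
structure IsMuckenhoupt (d : X → X → ℝ) (μ : Measure X) (p : X → ℝ) (v : X → ℝ≥0∞) : Prop where
  measurable : Measurable v
  ne_zero : ∀ x, v x ≠ 0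
  ne_top : ∀ x, v x ≠ ⊤
  apvar : Apvar d μ (ofRealExp p) v

section MuckenhouptWeights

variable {d : X → X → ℝ} {μ : Measure X} {A₀ Cμ : ℝ} {x₀ : X} {p : LogHolderExponent d A₀ x₀}
  {v : X → ℝ≥0∞}

lemma ballNorm_mono (p : LogHolderExponent d A₀ x₀) {z z' : X} {r r' : ℝ}
    (h : ball d z r ⊆ ball d z' r') : ballNorm d μ p v z r ≤ ballNorm d μ p v z' r' :=
  luxNorm_mono_ae (fun x => (p.pos x).le)
    (ae_of_all _ (Set.indicator_le_indicator_of_subset h fun _ => zero_le))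

lemma ballNorm_ne_zero (hX : IsSHT d μ A₀ Cμ) (p : LogHolderExponent d A₀ x₀) (hv : Measurable v)
    (hv0 : ∀ x, v x ≠ 0) (z : X) {r : ℝ} (hr : 0 < r) : ballNorm d μ p v z r ≠ 0 := by
  intro h
  have hB := hX.measurableSet_ball z r
  refine (hX.ball_pos z r hr).ne' (measure_mono_null (fun x hx => ?_) (ae_iff.1
    (ae_eq_zero_of_luxNorm_eq_zero (fun x => (p.one_lt x).le) p.measurable (hv.indicator hB) h)))
  simpa using ⟨hx, hv0 x⟩

namespace IsMuckenhoupt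

lemma inv (hv : IsMuckenhoupt d μ p v) : IsMuckenhoupt d μ p.conj v⁻¹ where
  measurable := hv.measurable.inv
  ne_zero x := ENNReal.inv_ne_zero.2 (hv.ne_top x)
  ne_top x := ENNReal.inv_ne_top.2 (hv.ne_zero x)
  apvar := by
    obtain ⟨K, hK⟩ := hv.apvar
    refine ⟨K, fun z r hr => ?_⟩
    have hconj : (fun x => (p.conj x).conjExponent) = p :=
      funext fun x => (p.holderConjugate x).symm.conjExponent_eq
    have h := hK z r hr
    rw [conjExp_ofRealExp p.one_lt, mul_comm] at h
    rw [conjExp_ofRealExp p.conj.one_lt, hconj]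
    simp only [Pi.inv_apply, inv_inv]
    exact h

lemma exists_ballNorm_mul_ballNorm_inv_le (hv : IsMuckenhoupt d μ p v) :
    ∃ K : ℝ≥0, ∀ z r, 0 < r →
      ballNorm d μ p v z r * ballNorm d μ p.conj v⁻¹ z r ≤ K * μ (ball d z r) := by
  obtain ⟨K, hK⟩ := hv.apvar
  rw [conjExp_ofRealExp p.one_lt] at hK
  exact ⟨K, hK⟩

lemma ballNorm_ne_top (hX : IsSHT d μ A₀ Cμ) (hv : IsMuckenhoupt d μ p v) (z : X) {r : ℝ}
    (hr : 0 < r) : ballNorm d μ p v z r ≠ ⊤ := by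
  obtain ⟨K, hK⟩ := hv.exists_ballNorm_mul_ballNorm_inv_le
  intro h
  have htop := hK z r hr
  rw [h, ENNReal.top_mul
    (SHT.ballNorm_ne_zero hX p.conj hv.inv.measurable hv.inv.ne_zero z hr), top_le_iff] at htop
  exact ENNReal.mul_ne_top ENNReal.coe_ne_top (hX.ball_ne_top z r hr) htop

lemma ballNorm_ne_zero (hX : IsSHT d μ A₀ Cμ) (hv : IsMuckenhoupt d μ p v) (z : X) {r : ℝ}
    (hr : 0 < r) : ballNorm d μ p v z r ≠ 0 :=
  SHT.ballNorm_ne_zero hX p hv.measurable hv.ne_zero z hr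

lemma lintegral_div_ballNorm_rpow (hX : IsSHT d μ A₀ Cμ) (hv : IsMuckenhoupt d μ p v) (z : X)
    {r : ℝ} (hr : 0 < r) :
    ∫⁻ y, ((ball d z r).indicator v y / ballNorm d μ p v z r) ^ p y ∂μ = 1 :=
  lintegral_div_luxNorm_rpow p.pos p.le_upper (one_pos.trans p.one_lt_upper).le
    (hv.ballNorm_ne_zero hX z hr) (hv.ballNorm_ne_top hX z hr)

lemma lintegral_ballNorm_rpow_neg (hX : IsSHT d μ A₀ Cμ) (hv : IsMuckenhoupt d μ p v) (z : X)
    {r : ℝ} (hr : 0 < r) :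
    ∫⁻ y in ball d z r, ballNorm d μ p v z r ^ (-p y) ∂powerMeasure μ p v = 1 := by
  have hmeas : Measurable fun y => ballNorm d μ p v z r ^ (-p y) :=
    measurable_const.pow p.measurable.neg
  rw [← hv.lintegral_div_ballNorm_rpow hX z hr,
    lintegral_indicator_div_rpow p.pos (hX.measurableSet_ball z r), powerMeasure,
    setLIntegral_withDensity_eq_setLIntegral_mul _ (hv.measurable.pow p.measurable)
      hmeas (hX.measurableSet_ball z r)]
  refine lintegral_congr fun y => ?_
  rw [Pi.mul_apply, ENNReal.div_rpow_of_nonneg _ _ (p.pos y).le, ENNReal.rpow_neg, div_eq_mul_inv]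

lemma measure_ball_le_two_mul (hX : IsSHT d μ A₀ Cμ) (hv : IsMuckenhoupt d μ p v) (z : X)
    {r : ℝ} (hr : 0 < r) :
    μ (ball d z r) ≤ 2 * (ballNorm d μ p v z r * ballNorm d μ p.conj v⁻¹ z r) := by
  have hB := hX.measurableSet_ball z r
  have hone : ∀ y, (ball d z r).indicator v y * (ball d z r).indicator v⁻¹ y =
      (ball d z r).indicator 1 y := fun y => by
    by_cases hy : y ∈ ball d z r
    · simp [hy, ENNReal.mul_inv_cancel (hv.ne_zero y) (hv.ne_top y)]
    · simp [hy]
  calc μ (ball d z r) = ∫⁻ y, (ball d z r).indicator v y * (ball d z r).indicator v⁻¹ y ∂μ := by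
        simp only [hone, lintegral_indicator_one hB]
    _ ≤ _ := lintegral_mul_le_of_lintegral_rpow_le_one p.holderConjugate p.measurable
        (hv.measurable.indicator hB) (hv.ballNorm_ne_zero hX z hr) (hv.ballNorm_ne_top hX z hr)
        (hv.inv.ballNorm_ne_zero hX z hr) (hv.inv.ballNorm_ne_top hX z hr)
        (hv.lintegral_div_ballNorm_rpow hX z hr).le (hv.inv.lintegral_div_ballNorm_rpow hX z hr).le

lemma exists_ballNorm_mul_measure_le (hX : IsSHT d μ A₀ Cμ) (hv : IsMuckenhoupt d μ p v) :
    ∃ K : ℝ≥0, ∀ {z r z' r'}, 0 < r → 0 < r' → ball d z r ⊆ ball d z' r' →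
      ballNorm d μ p v z' r' * μ (ball d z r) ≤ K * ballNorm d μ p v z r * μ (ball d z' r') := by
  obtain ⟨K, hK⟩ := hv.exists_ballNorm_mul_ballNorm_inv_le
  refine ⟨2 * K, fun {z r z' r'} hr hr' h => ?_⟩
  calc ballNorm d μ p v z' r' * μ (ball d z r)
      ≤ ballNorm d μ p v z' r' * (2 * (ballNorm d μ p v z r * ballNorm d μ p.conj v⁻¹ z' r')) := by
        gcongr ballNorm d μ p v z' r' * ?_
        refine (hv.measure_ball_le_two_mul hX z hr).trans ?_
        gcongr 2 * (_ * ?_)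
        exact ballNorm_mono p.conj h
    _ = 2 * ballNorm d μ p v z r * (ballNorm d μ p v z' r' * ballNorm d μ p.conj v⁻¹ z' r') := by
        ring
    _ ≤ 2 * ballNorm d μ p v z r * (K * μ (ball d z' r')) := by
        gcongr 2 * ballNorm d μ p v z r * ?_
        exact hK z' r' hr'
    _ = _ := by push_cast; ring

lemma exists_ballNorm_le_pow_mul (hX : IsSHT d μ A₀ Cμ) (hv : IsMuckenhoupt d μ p v) :
    ∃ (C : ℝ≥0) (D : ℕ), ∀ {z r z' r' R}, 0 < r → 0 < r' → r ≤ R → ball d z r ⊆ ball d z' r' →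
      ball d z' r' ⊆ ball d z R →
      ballNorm d μ p v z' r' ≤ C * ENNReal.ofReal (R / r) ^ D * ballNorm d μ p v z r := by
  obtain ⟨D, hD⟩ := hX.exists_measure_ball_le_pow
  obtain ⟨K, hK⟩ := hv.exists_ballNorm_mul_measure_le hX
  refine ⟨K * 2 ^ D, D, fun {z r z' r' R} hr hr' hrR h h' => ?_⟩
  refine (ENNReal.mul_le_mul_iff_left (hX.ball_pos z r hr).ne' (hX.ball_ne_top z r hr)).1 ?_
  calc ballNorm d μ p v z' r' * μ (ball d z r)
      ≤ K * ballNorm d μ p v z r * μ (ball d z' r') := hK hr hr' h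
    _ ≤ K * ballNorm d μ p v z r * (ENNReal.ofReal ((2 * (R / r)) ^ D) * μ (ball d z r)) := by
        gcongr K * ballNorm d μ p v z r * ?_
        exact (measure_mono h').trans (hD z r R hr hrR)
    _ = _ := by
        have hRr : 0 ≤ R / r := div_nonneg (hr.le.trans hrR) hr.le
        rw [ENNReal.ofReal_pow (by positivity), ENNReal.ofReal_mul zero_le_two, mul_pow]
        push_cast
        rw [ENNReal.ofReal_ofNat]
        ring

lemma exists_ballNorm_basepoint_le (hX : IsSHT d μ A₀ Cμ) (hv : IsMuckenhoupt d μ p v) :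
    ∃ (C : ℝ≥0) (D : ℕ), ∀ R, 1 ≤ R → ballNorm d μ p v x₀ R ≤ C * ENNReal.ofReal R ^ D := by
  obtain ⟨C, D, hC⟩ := hv.exists_ballNorm_le_pow_mul hX
  refine ⟨C * (ballNorm d μ p v x₀ 1).toNNReal, D, fun R hR => ?_⟩
  have h := hC one_pos (one_pos.trans_le hR) hR (ball_subset_ball d x₀ hR) subset_rfl
  rw [div_one] at h
  rw [ENNReal.coe_mul, ENNReal.coe_toNNReal (hv.ballNorm_ne_top hX x₀ one_pos), mul_right_comm]
  exact h

lemma exists_ballNorm_le_scale_pow (hX : IsSHT d μ A₀ Cμ) (hv : IsMuckenhoupt d μ p v) :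
    ∃ (C : ℝ≥0) (D : ℕ), ∀ {z r}, 0 < r → IsLocalBall d A₀ x₀ z r →
      ballNorm d μ p v z r ≤ C * ENNReal.ofReal (scale d x₀ z r) ^ D := by
  obtain ⟨C, D, hC⟩ := hv.exists_ballNorm_basepoint_le hX
  have hA := hX.one_le_A₀
  refine ⟨C * (2 * A₀).toNNReal ^ D, D, fun {z r} hr hloc => ?_⟩
  have hbr := hX.one_le_bracket (x₀ := x₀) z
  calc ballNorm d μ p v z r ≤ ballNorm d μ p v x₀ (2 * A₀ * bracket d x₀ z) :=
        ballNorm_mono p (hX.ball_subset_ball_basepoint hr hloc)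
    _ ≤ C * ENNReal.ofReal (2 * A₀ * bracket d x₀ z) ^ D := hC _ (by nlinarith)
    _ ≤ C * ENNReal.ofReal (2 * A₀ * scale d x₀ z r) ^ D := by
        gcongr
        exact hX.bracket_le_scale z hr
    _ = _ := by
        rw [ENNReal.ofReal_mul (by positivity), mul_pow, ← mul_assoc]
        rfl

lemma exists_ballNorm_inv_le_scale_pow (hX : IsSHT d μ A₀ Cμ) (hv : IsMuckenhoupt d μ p v) :
    ∃ (C : ℝ≥0) (D : ℕ), ∀ {z r}, 0 < r → IsLocalBall d A₀ x₀ z r →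
      (ballNorm d μ p v z r)⁻¹ ≤ C * ENNReal.ofReal (scale d x₀ z r) ^ D := by
  obtain ⟨C, D, hC⟩ := hv.exists_ballNorm_le_pow_mul hX
  have hA := hX.one_le_A₀
  have h0 := hv.ballNorm_ne_zero hX x₀ one_pos
  have ht := hv.ballNorm_ne_top hX x₀ one_pos
  refine ⟨(ballNorm d μ p v x₀ 1)⁻¹.toNNReal * C * (3 * A₀ ^ 2).toNNReal ^ D, D,
    fun {z r} hr hloc => ?_⟩
  have hbr := hX.one_le_bracket (x₀ := x₀) z
  have hrb := hX.radius_le_bracket hr hloc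
  have hgrow := calc ballNorm d μ p v x₀ 1 ≤ ballNorm d μ p v x₀ (2 * A₀ * bracket d x₀ z) :=
        ballNorm_mono p (ball_subset_ball d x₀ (by nlinarith))
    _ ≤ C * ENNReal.ofReal (3 * A₀ ^ 2 * bracket d x₀ z / r) ^ D * ballNorm d μ p v z r :=
        hC hr (by positivity) (hrb.trans (le_mul_of_one_le_left (by positivity) (by nlinarith)))
          (hX.ball_subset_ball_basepoint hr hloc)
          (hX.ball_basepoint_subset_ball z)
    _ ≤ C * ((3 * A₀ ^ 2).toNNReal * ENNReal.ofReal (scale d x₀ z r)) ^ D *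
          ballNorm d μ p v z r := by
        rw [mul_div_assoc, ENNReal.ofReal_mul (by positivity)]
        gcongr _ * (_ * ENNReal.ofReal ?_) ^ D * _
        exact hX.bracket_div_le_scale z hr
  rw [← one_div, ENNReal.div_le_iff (hv.ballNorm_ne_zero hX z hr) (hv.ballNorm_ne_top hX z hr)]
  calc 1 = (ballNorm d μ p v x₀ 1)⁻¹ * ballNorm d μ p v x₀ 1 :=
        (ENNReal.inv_mul_cancel h0 ht).symm
    _ ≤ (ballNorm d μ p v x₀ 1)⁻¹ * (C * ((3 * A₀ ^ 2).toNNReal *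
          ENNReal.ofReal (scale d x₀ z r)) ^ D * ballNorm d μ p v z r) := by gcongr
    _ = _ := by
        push_cast
        rw [ENNReal.coe_toNNReal (ENNReal.inv_ne_top.2 h0)]
        ring

lemma exists_ballNorm_polynomial_bound (hX : IsSHT d μ A₀ Cμ) (hv : IsMuckenhoupt d μ p v) :
    ∃ (C : ℝ≥0) (N : ℝ), 1 ≤ C ∧ 0 ≤ N ∧ ∀ {z r}, 0 < r → IsLocalBall d A₀ x₀ z r →
      ballNorm d μ p v z r ≤ C * ENNReal.ofReal (scale d x₀ z r) ^ N ∧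
        (ballNorm d μ p v z r)⁻¹ ≤ C * ENNReal.ofReal (scale d x₀ z r) ^ N := by
  obtain ⟨C, D, hC⟩ := hv.exists_ballNorm_le_scale_pow hX
  obtain ⟨C', D', hC'⟩ := hv.exists_ballNorm_inv_le_scale_pow hX
  refine ⟨max 1 (max C C'), (max D D' : ℕ), le_max_left _ _, Nat.cast_nonneg _,
    fun {z r} hr hloc => ?_⟩
  have hS : 1 ≤ ENNReal.ofReal (scale d x₀ z r) :=
    ENNReal.one_le_ofReal.2 (hX.one_le_scale z hr)
  rw [ENNReal.rpow_natCast]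
  constructor
  · refine (hC hr hloc).trans ?_
    gcongr
    exacts [(le_max_left _ _).trans (le_max_right _ _), le_max_left _ _]
  · refine (hC' hr hloc).trans ?_
    gcongr
    exacts [(le_max_right _ _).trans (le_max_right _ _), le_max_right _ _]

lemma powerMeasure_ball_le_rpow (hX : IsSHT d μ A₀ Cμ) (hv : IsMuckenhoupt d μ p v) {z : X}
    {r P : ℝ} (hr : 0 < r) (hP : p.upper ≤ P) {A : ℝ≥0∞} (h1 : 1 ≤ A) (hA : A ≠ ⊤)
    (h : ballNorm d μ p v z r ≤ A) : powerMeasure μ p v (ball d z r) ≤ A ^ P := by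
  have hP0 : 0 ≤ P := (one_pos.trans p.one_lt_upper).le.trans hP
  have hle : A ^ (-P) * powerMeasure μ p v (ball d z r) ≤ 1 := by
    rw [← setLIntegral_const, ← hv.lintegral_ballNorm_rpow_neg hX z hr]
    refine lintegral_mono fun y => ?_
    rw [ENNReal.rpow_neg, ENNReal.rpow_neg]
    refine ENNReal.inv_le_inv.2 ((ENNReal.rpow_le_rpow h (p.pos y).le).trans ?_)
    exact ENNReal.rpow_le_rpow_of_exponent_le h1 ((p.le_upper y).trans hP)
  rwa [ENNReal.rpow_neg, mul_comm, ← div_eq_mul_inv, ENNReal.div_le_iff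
    (ENNReal.rpow_pos (one_pos.trans_le h1) hA).ne' (ENNReal.rpow_ne_top_of_nonneg hP0 hA),
    one_mul] at hle

lemma exists_powerMeasure_ball_basepoint_le (hX : IsSHT d μ A₀ Cμ) (hv : IsMuckenhoupt d μ p v) :
    ∃ (C : ℝ≥0) (E : ℕ), ∀ R, 1 ≤ R →
      powerMeasure μ p v (ball d x₀ R) ≤ C * ENNReal.ofReal R ^ E := by
  obtain ⟨C, D, hC⟩ := hv.exists_ballNorm_basepoint_le hX
  obtain ⟨n, hn⟩ := exists_nat_ge p.upper
  refine ⟨(max 1 C) ^ n, D * n, fun R hR => ?_⟩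
  have h := hv.powerMeasure_ball_le_rpow hX (one_pos.trans_le hR) hn
    (A := (max 1 C : ℝ≥0) * ENNReal.ofReal R ^ D)
    (one_le_mul (by exact_mod_cast le_max_left _ _) (one_le_pow₀ (ENNReal.one_le_ofReal.2 hR)))
    (by finiteness) ((hC R hR).trans (by gcongr; exact le_max_right _ _))
  rwa [ENNReal.rpow_natCast, mul_pow, ← pow_mul, ← ENNReal.coe_pow] at h

end IsMuckenhoupt

end MuckenhouptWeights

section Tail

variable {d : X → X → ℝ} {μ ν : Measure X} {A₀ Cμ : ℝ} {x₀ : X}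

lemma IsSHT.lintegral_bracket_rpow_ne_top (hX : IsSHT d μ A₀ Cμ) {C : ℝ≥0} {E : ℕ}
    (hC : ∀ R, 1 ≤ R → ν (ball d x₀ R) ≤ C * ENNReal.ofReal R ^ E) :
    ∫⁻ x, ENNReal.ofReal (bracket d x₀ x) ^ (-(E + 1 : ℝ)) ∂ν ≠ ⊤ := by
  have hannulus : ∀ x, ENNReal.ofReal (bracket d x₀ x) ^ (-(E + 1 : ℝ)) ≤
      ∑' k : ℕ, (ball d x₀ (2 ^ (k + 1))).indicator
        (fun _ => (((2 : ℝ≥0∞) ^ k) ^ (E + 1))⁻¹) x := by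
    intro x
    obtain ⟨k, hk, hk'⟩ := exists_nat_pow_near (hX.one_le_bracket (x₀ := x₀) x) one_lt_two
    have hx : x ∈ ball d x₀ (2 ^ (k + 1)) := by
      change d x₀ x < _
      rw [hX.d_symm]
      exact (dist_lt_bracket d x₀ x).trans hk'
    refine le_trans ?_ (ENNReal.le_tsum k)
    rw [Set.indicator_of_mem hx, ENNReal.rpow_neg, ← Nat.cast_add_one, ENNReal.rpow_natCast]
    gcongr
    simpa using ENNReal.ofReal_le_ofReal hk
  have hterm : ∀ k : ℕ, (((2 : ℝ≥0∞) ^ k) ^ (E + 1))⁻¹ * ν (ball d x₀ (2 ^ (k + 1))) ≤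
      C * 2 ^ E * 2⁻¹ ^ k := by
    intro k
    have ha0 : ((2 : ℝ≥0∞) ^ k) ^ E ≠ 0 := by simp
    have hat : ((2 : ℝ≥0∞) ^ k) ^ E ≠ ⊤ := by finiteness
    calc (((2 : ℝ≥0∞) ^ k) ^ (E + 1))⁻¹ * ν (ball d x₀ (2 ^ (k + 1)))
        ≤ (((2 : ℝ≥0∞) ^ k) ^ (E + 1))⁻¹ * (C * ENNReal.ofReal (2 ^ (k + 1)) ^ E) := by
          gcongr
          exact hC _ (one_le_pow₀ one_le_two)
      _ = C * 2 ^ E * 2⁻¹ ^ k * ((((2 : ℝ≥0∞) ^ k) ^ E)⁻¹ * ((2 : ℝ≥0∞) ^ k) ^ E) := by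
          rw [pow_succ _ E, ENNReal.mul_inv (.inl ha0) (.inl hat), ENNReal.ofReal_pow zero_le_two,
            ENNReal.ofReal_ofNat, pow_succ _ k, mul_pow, ← ENNReal.inv_pow (a := 2) (n := k)]
          ring
      _ = C * 2 ^ E * 2⁻¹ ^ k := by rw [ENNReal.inv_mul_cancel ha0 hat, mul_one]
  refine ne_top_of_le_ne_top (?_ : (C * 2 ^ E * 2 : ℝ≥0∞) ≠ ⊤) ?_
  · finiteness
  calc ∫⁻ x, ENNReal.ofReal (bracket d x₀ x) ^ (-(E + 1 : ℝ)) ∂ν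
      ≤ ∑' k : ℕ, (((2 : ℝ≥0∞) ^ k) ^ (E + 1))⁻¹ * ν (ball d x₀ (2 ^ (k + 1))) := by
        refine (lintegral_mono hannulus).trans_eq ?_
        rw [lintegral_tsum fun k =>
          (measurable_const.indicator (hX.measurableSet_ball _ _)).aemeasurable]
        simp only [lintegral_indicator_const (hX.measurableSet_ball _ _)]
    _ ≤ ∑' k : ℕ, (C * 2 ^ E * 2⁻¹ ^ k : ℝ≥0∞) := ENNReal.tsum_le_tsum hterm
    _ = C * 2 ^ E * 2 := by
        rw [ENNReal.tsum_mul_left, ENNReal.tsum_geometric, ENNReal.one_sub_inv_two, inv_inv]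

lemma IsSHT.exists_forall_lintegral_bracket_rpow_le (hX : IsSHT d μ A₀ Cμ) {C : ℝ≥0} {E : ℕ}
    (hC : ∀ R, 1 ≤ R → ν (ball d x₀ R) ≤ C * ENNReal.ofReal R ^ E) {η : ℝ≥0∞} (hη : η ≠ 0) :
    ∃ N₀ : ℝ, 0 < N₀ ∧ ∀ N, N₀ ≤ N →
      ∫⁻ x, ENNReal.ofReal (bracket d x₀ x) ^ (-N) ∂ν ≤ η := by
  set I := ∫⁻ x, ENNReal.ofReal (bracket d x₀ x) ^ (-(E + 1 : ℝ)) ∂ν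
  have hlim : Tendsto (fun m : ℕ => (2⁻¹ : ℝ≥0∞) ^ m * I) atTop (nhds 0) := by
    have h := ENNReal.Tendsto.mul_const (ENNReal.tendsto_pow_atTop_nhds_zero_of_lt_one
      ENNReal.one_half_lt_one) (.inr (hX.lintegral_bracket_rpow_ne_top hC))
    rwa [zero_mul] at h
  obtain ⟨m, hm⟩ := (hlim.eventually (Iio_mem_nhds hη.bot_lt)).exists
  refine ⟨E + 1 + m, by positivity, fun N hN => le_trans ?_ hm.le⟩
  rw [← lintegral_const_mul _ (hX.measurable_bracket.ennreal_ofReal.pow_const _)]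
  refine lintegral_mono fun x => ?_
  have htwo : (2 : ℝ≥0∞) ≤ ENNReal.ofReal (bracket d x₀ x) := by
    rw [← ENNReal.ofReal_ofNat]
    exact ENNReal.ofReal_le_ofReal
      ((by linarith [Real.add_one_le_exp 1] : (2 : ℝ) ≤ Real.exp 1).trans (hX.exp_one_le_bracket x))
  set S := ENNReal.ofReal (bracket d x₀ x)
  calc S ^ (-N) ≤ S ^ (-(m : ℝ) + -(E + 1 : ℝ)) :=
        ENNReal.rpow_le_rpow_of_exponent_le (one_le_two.trans htwo) (by linarith)
    _ = S⁻¹ ^ m * S ^ (-(E + 1 : ℝ)) := by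
        rw [ENNReal.rpow_add _ _ (two_pos.trans_le htwo).ne' ENNReal.ofReal_ne_top,
          ENNReal.rpow_neg, ENNReal.rpow_natCast, ENNReal.inv_pow]
    _ ≤ 2⁻¹ ^ m * S ^ (-(E + 1 : ℝ)) := by gcongr

lemma IsMuckenhoupt.exists_forall_lintegral_bracket_rpow_le {p : LogHolderExponent d A₀ x₀}
    {v : X → ℝ≥0∞} (hX : IsSHT d μ A₀ Cμ) (hv : IsMuckenhoupt d μ p v) {η : ℝ≥0∞} (hη : η ≠ 0) :
    ∃ N₀ : ℝ, 0 < N₀ ∧ ∀ N, N₀ ≤ N →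
      ∫⁻ x, ENNReal.ofReal (bracket d x₀ x) ^ (-N) ∂powerMeasure μ p v ≤ η := by
  obtain ⟨C, E, hC⟩ := hv.exists_powerMeasure_ball_basepoint_le hX
  exact hX.exists_forall_lintegral_bracket_rpow_le hC hη

end Tail

section PowerMeasure

lemma le_mul_rpow_of_rpow_neg_mul_le {a V C : ℝ≥0∞} {s : ℝ} (ha0 : a ≠ 0) (hat : a ≠ ⊤)
    (h : a ^ (-s) * V ≤ C) : V ≤ C * a ^ s := by
  rwa [ENNReal.rpow_neg, mul_comm, ← div_eq_mul_inv, ENNReal.div_le_iff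
    (ENNReal.rpow_pos ha0.bot_lt hat).ne' (ENNReal.rpow_ne_top_of_ne_zero ha0 hat)] at h

lemma rpow_le_mul_of_one_le_mul_rpow_neg_mul {a V C : ℝ≥0∞} {s : ℝ} (ha0 : a ≠ 0) (hat : a ≠ ⊤)
    (h : 1 ≤ C * (a ^ (-s) * V)) : a ^ s ≤ C * V :=
  calc a ^ s = a ^ s * 1 := (mul_one _).symm
    _ ≤ a ^ s * (C * (a ^ (-s) * V)) := by gcongr
    _ = C * V * (a ^ s * (a ^ s)⁻¹) := by rw [ENNReal.rpow_neg]; ring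
    _ = C * V := by
        rw [ENNReal.mul_inv_cancel (ENNReal.rpow_pos ha0.bot_lt hat).ne'
          (ENNReal.rpow_ne_top_of_ne_zero ha0 hat), mul_one]

lemma le_mul_of_le_mul_rpow {a b V W C G : ℝ≥0∞} {s P : ℝ} (hs : 0 ≤ s) (hsP : s ≤ P) (hG : 1 ≤ G)
    (hba : b ≤ G * a) (hW : W ≤ C * b ^ s) (hV : a ^ s ≤ C * V) : W ≤ C ^ 2 * G ^ P * V :=
  calc W ≤ C * (G * a) ^ s := hW.trans (by gcongr)
    _ = C * G ^ s * a ^ s := by rw [ENNReal.mul_rpow_of_nonneg _ _ hs, mul_assoc]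
    _ ≤ C * G ^ P * (C * V) := by gcongr
    _ = C ^ 2 * G ^ P * V := by ring

variable {d : X → X → ℝ} {μ : Measure X} {A₀ Cμ : ℝ} {x₀ : X} {p : LogHolderExponent d A₀ x₀}
  {v : X → ℝ≥0∞}

lemma LogHolderExponent.exists_rpow_le_add (p : LogHolderExponent d A₀ x₀)
    (hX : IsSHT d μ A₀ Cμ) {T : ℝ≥0∞} (hT : T ≠ ⊤) {M : ℝ} (hM : 0 < M) :
    ∃ E : ℝ≥0, ∀ {t}, t ≤ T → ∀ y,
      t ^ p.limit ≤ E * t ^ p y + ENNReal.ofReal (bracket d x₀ y) ^ (-M) ∧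
        t ^ p y ≤ E * t ^ p.limit + ENNReal.ofReal (bracket d x₀ y) ^ (-M) := by
  refine ⟨(max 1 T.toNNReal) ^ p.upper * (Real.exp p.oscConst).toNNReal ^ M,
    fun {t} ht y => ?_⟩
  rw [ENNReal.coe_mul, ENNReal.coe_rpow_of_nonneg _ (one_pos.trans p.one_lt_upper).le,
    ENNReal.coe_rpow_of_nonneg _ hM.le, ENNReal.coe_max, ENNReal.coe_toNNReal hT]
  have htT : t ≤ max 1 T := le_max_of_le_right ht
  have hTt : max 1 T ≠ ⊤ := (max_lt one_lt_top hT.lt_top).ne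
  have he : 1 ≤ ENNReal.ofReal (bracket d x₀ y) := ENNReal.one_le_ofReal.2 (hX.one_le_bracket y)
  constructor
  · refine rpow_le_mul_rpow_add (le_max_left _ _) hTt htT he ENNReal.ofReal_ne_top
      (p.abs_sub_le_upper p.limit_mem_Icc (p.mem_Icc y)) ?_ p.one_lt_limit.le hM
    rw [abs_sub_comm]
    exact p.bracket_rpow_le hX y
  · exact rpow_le_mul_rpow_add (le_max_left _ _) hTt htT he ENNReal.ofReal_ne_top
      (p.abs_sub_le_upper (p.mem_Icc y) p.limit_mem_Icc) (p.bracket_rpow_le hX y) (p.one_lt y).le hM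

lemma LogHolderExponent.exists_rpow_neg_le_add (p : LogHolderExponent d A₀ x₀)
    (hX : IsSHT d μ A₀ Cμ) {c : ℝ≥0∞} (hc : c ≠ 0) {M : ℝ} (hM : 0 < M) :
    ∃ E : ℝ≥0, ∀ {t}, c ≤ t → ∀ y,
      t ^ (-p.limit) ≤ E * t ^ (-p y) + ENNReal.ofReal (bracket d x₀ y) ^ (-M) ∧
        t ^ (-p y) ≤ E * t ^ (-p.limit) + ENNReal.ofReal (bracket d x₀ y) ^ (-M) := by
  obtain ⟨E, hE⟩ := p.exists_rpow_le_add hX (ENNReal.inv_ne_top.2 hc) hM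
  refine ⟨E, fun {t} hct y => ?_⟩
  simp only [ENNReal.rpow_neg t, ← ENNReal.inv_rpow t]
  exact hE (ENNReal.inv_le_inv.2 hct) y

namespace IsMuckenhoupt

lemma exists_ballNorm_rpow_neg_le (hX : IsSHT d μ A₀ Cμ) (hv : IsMuckenhoupt d μ p v) :
    ∃ E : ℝ≥0, ∀ {z r}, 0 < r → IsLocalBall d A₀ x₀ z r → ∀ x ∈ ball d z r, ∀ y ∈ ball d z r,
      ballNorm d μ p v z r ^ (-p x) ≤ E * ballNorm d μ p v z r ^ (-p y) := by
  obtain ⟨C, N, hC, hN, hbound⟩ := hv.exists_ballNorm_polynomial_bound hX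
  refine ⟨C ^ p.upper * (Real.exp p.oscConst).toNNReal ^ N, fun {z r} hr hloc x hx y hy => ?_⟩
  rw [ENNReal.coe_mul, ENNReal.coe_rpow_of_nonneg _ (one_pos.trans p.one_lt_upper).le,
    ENNReal.coe_rpow_of_nonneg _ hN]
  have hsub : |(-p x) - (-p y)| = |p y - p x| := by rw [neg_sub_neg]
  exact rpow_le_mul_rpow_of_polynomial_bound (hv.ballNorm_ne_zero hX z hr)
    (hv.ballNorm_ne_top hX z hr) (by exact_mod_cast hC) hN (hbound hr hloc).1 (hbound hr hloc).2
    (hsub ▸ p.abs_sub_le_upper (p.mem_Icc y) (p.mem_Icc x))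
    (hsub ▸ p.scale_rpow_le hX hr hloc hy hx)

lemma exists_powerMeasure_ball_comparable_of_isLocalBall (hX : IsSHT d μ A₀ Cμ)
    (hv : IsMuckenhoupt d μ p v) :
    ∃ C : ℝ≥0, ∀ {z r}, 0 < r → IsLocalBall d A₀ x₀ z r → ∀ x ∈ ball d z r,
      powerMeasure μ p v (ball d z r) ≤ C * ballNorm d μ p v z r ^ p x ∧
        ballNorm d μ p v z r ^ p x ≤ C * powerMeasure μ p v (ball d z r) := by
  obtain ⟨E, hE⟩ := hv.exists_ballNorm_rpow_neg_le hX
  refine ⟨E, fun {z r} hr hloc x hx => ?_⟩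
  have h0 := hv.ballNorm_ne_zero hX z hr
  have ht := hv.ballNorm_ne_top hX z hr
  have hB := hX.measurableSet_ball z r
  have hint := hv.lintegral_ballNorm_rpow_neg hX z hr
  constructor
  · refine le_mul_rpow_of_rpow_neg_mul_le h0 ht ?_
    rw [← setLIntegral_const, ← mul_one (E : ℝ≥0∞), ← hint,
      ← lintegral_const_mul' _ _ ENNReal.coe_ne_top]
    exact setLIntegral_mono' hB fun y hy => hE hr hloc x hx y hy
  · refine rpow_le_mul_of_one_le_mul_rpow_neg_mul h0 ht ?_
    rw [← mul_assoc, ← setLIntegral_const, ← hint]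
    exact setLIntegral_mono' hB fun y hy => hE hr hloc y hy x hx

lemma exists_powerMeasure_ball_comparable_of_le_ballNorm (hX : IsSHT d μ A₀ Cμ)
    (hv : IsMuckenhoupt d μ p v) {c : ℝ≥0∞} (hc : c ≠ 0) :
    ∃ C : ℝ≥0, ∀ {z r}, 0 < r → c ≤ ballNorm d μ p v z r →
      powerMeasure μ p v (ball d z r) ≤ C * ballNorm d μ p v z r ^ p.limit ∧
        ballNorm d μ p v z r ^ p.limit ≤ C * powerMeasure μ p v (ball d z r) := by
  obtain ⟨M, hM, htail⟩ := hv.exists_forall_lintegral_bracket_rpow_le hX (η := 2⁻¹) (by simp)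
  obtain ⟨E, hE⟩ := p.exists_rpow_neg_le_add hX hc hM
  refine ⟨2 * E + 1, fun {z r} hr hcN => ?_⟩
  have h0 := hv.ballNorm_ne_zero hX z hr
  have ht := hv.ballNorm_ne_top hX z hr
  have hint := hv.lintegral_ballNorm_rpow_neg hX z hr
  have hmeas : Measurable fun y => ENNReal.ofReal (bracket d x₀ y) ^ (-M) :=
    hX.measurable_bracket.ennreal_ofReal.pow_const _
  have hball : ∫⁻ y in ball d z r, ENNReal.ofReal (bracket d x₀ y) ^ (-M) ∂powerMeasure μ p v ≤
      2⁻¹ := (setLIntegral_le_lintegral _ _).trans (htail M le_rfl)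
  constructor
  · refine le_mul_rpow_of_rpow_neg_mul_le h0 ht ?_
    rw [← setLIntegral_const]
    refine (lintegral_mono fun y => (hE hcN y).1).trans ?_
    rw [lintegral_add_right _ hmeas, lintegral_const_mul' _ _ ENNReal.coe_ne_top, hint, mul_one]
    push_cast
    gcongr
    · exact le_mul_of_one_le_left (zero_le (a := (E : ℝ≥0∞))) one_le_two
    · exact hball.trans (ENNReal.inv_le_one.2 one_le_two)
  · have hhalf : 1 ≤ E * (ballNorm d μ p v z r ^ (-p.limit) * powerMeasure μ p v (ball d z r)) +
        2⁻¹ := by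
      rw [← mul_assoc, ← setLIntegral_const, ← hint]
      refine (lintegral_mono fun y => (hE hcN y).2).trans ?_
      rw [lintegral_add_right _ hmeas]
      gcongr
    refine rpow_le_mul_of_one_le_mul_rpow_neg_mul h0 ht ?_
    have htwo :
        2⁻¹ ≤ E * (ballNorm d μ p v z r ^ (-p.limit) * powerMeasure μ p v (ball d z r)) := by
      rw [← ENNReal.inv_two_add_inv_two] at hhalf
      exact (ENNReal.add_le_add_iff_right (by simp)).1 hhalf
    calc (1 : ℝ≥0∞) = 2 * 2⁻¹ := (ENNReal.mul_inv_cancel two_ne_zero ofNat_ne_top).symm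
      _ ≤ 2 * (E * (ballNorm d μ p v z r ^ (-p.limit) * powerMeasure μ p v (ball d z r))) := by
          gcongr
      _ ≤ _ := by
          rw [← mul_assoc]
          push_cast
          gcongr ?_ * _
          exact le_self_add

lemma powerMeasure_ball_pos (hX : IsSHT d μ A₀ Cμ) (hv : IsMuckenhoupt d μ p v) (z : X) {r : ℝ}
    (hr : 0 < r) : 0 < powerMeasure μ p v (ball d z r) := by
  refine pos_iff_ne_zero.2 fun h => ?_
  have hint := hv.lintegral_ballNorm_rpow_neg hX z hr
  rw [Measure.restrict_eq_zero.2 h, lintegral_zero_measure] at hint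
  exact zero_ne_one hint

lemma powerMeasure_ball_ne_top (hX : IsSHT d μ A₀ Cμ) (hv : IsMuckenhoupt d μ p v) (z : X)
    {r : ℝ} (hr : 0 < r) : powerMeasure μ p v (ball d z r) ≠ ⊤ :=
  ne_top_of_le_ne_top (ENNReal.rpow_ne_top_of_nonneg (one_pos.trans p.one_lt_upper).le
      (max_lt one_lt_top (hv.ballNorm_ne_top hX z hr).lt_top).ne)
    (hv.powerMeasure_ball_le_rpow hX hr le_rfl (le_max_left 1 _)
      (max_lt one_lt_top (hv.ballNorm_ne_top hX z hr).lt_top).ne (le_max_right _ _))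

lemma exists_ballNorm_mul_radius_le (hX : IsSHT d μ A₀ Cμ) (hv : IsMuckenhoupt d μ p v) {l : ℝ}
    (hl : 1 ≤ l) :
    ∃ G : ℝ≥0, ∀ z r, 0 < r → ballNorm d μ p v z (l * r) ≤ G * ballNorm d μ p v z r := by
  obtain ⟨C, D, hC⟩ := hv.exists_ballNorm_le_pow_mul hX
  refine ⟨C * l.toNNReal ^ D, fun z r hr => ?_⟩
  have hrl : r ≤ l * r := le_mul_of_one_le_left hr.le hl
  have h := hC hr (hr.trans_le hrl) hrl (ball_subset_ball d z hrl) subset_rfl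
  rw [mul_div_cancel_right₀ _ hr.ne'] at h
  exact_mod_cast h

/-- A ball which is not local contains the unit ball at the base point up to dilation. -/
lemma exists_le_ballNorm_of_not_isLocalBall (hX : IsSHT d μ A₀ Cμ) (hv : IsMuckenhoupt d μ p v) :
    ∃ c : ℝ≥0∞, c ≠ 0 ∧ ∀ {z r}, 0 < r → ¬ IsLocalBall d A₀ x₀ z (2 * r) →
      c ≤ ballNorm d μ p v z r := by
  have hA := hX.one_le_A₀
  obtain ⟨G, hG⟩ := hv.exists_ballNorm_mul_radius_le hX (l := 6 * A₀ ^ 2) (by nlinarith)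
  refine ⟨ballNorm d μ p v x₀ 1 / G, ENNReal.div_ne_zero.2
    ⟨hv.ballNorm_ne_zero hX x₀ one_pos, ENNReal.coe_ne_top⟩, fun {z r} hr hloc => ?_⟩
  obtain ⟨hr1, hdist⟩ := not_or.1 hloc
  rw [not_lt] at hr1 hdist
  refine ENNReal.div_le_of_le_mul' ((ballNorm_mono p fun y hy => ?_).trans (hG z r hr))
  calc d z y ≤ A₀ * (d z x₀ + d x₀ y) := hX.d_triangle z y x₀
    _ < A₀ * (2 * A₀ * (2 * r) + 2 * r) :=
        mul_lt_mul_of_pos_left (add_lt_add_of_le_of_lt hdist (hy.trans_le hr1)) hX.A₀_pos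
    _ ≤ 6 * A₀ ^ 2 * r := by
        nlinarith [mul_nonneg (mul_nonneg hr.le hX.A₀_pos.le) (sub_nonneg.2 hA)]

lemma exists_powerMeasure_doubling (hX : IsSHT d μ A₀ Cμ) (hv : IsMuckenhoupt d μ p v) :
    ∃ C : ℝ≥0, ∀ z r, 0 < r →
      powerMeasure μ p v (ball d z (2 * r)) ≤ C * powerMeasure μ p v (ball d z r) := by
  obtain ⟨c, hc, hlarge⟩ := hv.exists_le_ballNorm_of_not_isLocalBall hX
  obtain ⟨C₁, hC₁⟩ := hv.exists_powerMeasure_ball_comparable_of_isLocalBall hX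
  obtain ⟨C₂, hC₂⟩ := hv.exists_powerMeasure_ball_comparable_of_le_ballNorm hX hc
  obtain ⟨G, hG⟩ := hv.exists_ballNorm_mul_radius_le hX one_le_two
  have hG' : ∀ z r, 0 < r → ballNorm d μ p v z (2 * r) ≤ (max 1 G : ℝ≥0) * ballNorm d μ p v z r :=
    fun z r hr => (hG z r hr).trans (by gcongr; exact le_max_right _ _)
  refine ⟨(max C₁ C₂) ^ 2 * (max 1 G) ^ p.upper, fun z r hr => ?_⟩
  have h2r : r ≤ 2 * r := by linarith
  have h1G : (1 : ℝ≥0∞) ≤ (max 1 G : ℝ≥0) := by exact_mod_cast le_max_left 1 G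
  rw [ENNReal.coe_mul, ENNReal.coe_pow,
    ENNReal.coe_rpow_of_nonneg _ (one_pos.trans p.one_lt_upper).le]
  by_cases hloc : IsLocalBall d A₀ x₀ z (2 * r)
  · have hloc' : IsLocalBall d A₀ x₀ z r := hloc.imp h2r.trans_lt
      (lt_of_le_of_lt (mul_le_mul_of_nonneg_left h2r (by linarith [hX.A₀_pos])))
    refine le_mul_of_le_mul_rpow (p.pos z).le (p.le_upper z) h1G (hG' z r hr)
      ((hC₁ (hr.trans_le h2r) hloc z (hX.mem_ball_self z (hr.trans_le h2r))).1.trans ?_)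
      ((hC₁ hr hloc' z (hX.mem_ball_self z hr)).2.trans ?_)
    all_goals gcongr; exact le_max_left _ _
  · have hcr := hlarge hr hloc
    refine le_mul_of_le_mul_rpow (one_pos.trans p.one_lt_limit).le p.limit_le_upper h1G
      (hG' z r hr) ((hC₂ (hr.trans_le h2r)
        (hcr.trans (ballNorm_mono p (ball_subset_ball d z h2r)))).1.trans ?_)
      ((hC₂ hr hcr).2.trans ?_)
    all_goals gcongr; exact le_max_right _ _

lemma exists_isSHT_powerMeasure (hX : IsSHT d μ A₀ Cμ) (hv : IsMuckenhoupt d μ p v) :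
    ∃ C, IsSHT d (powerMeasure μ p v) A₀ C := by
  obtain ⟨C, hC⟩ := hv.exists_powerMeasure_doubling hX
  exact ⟨max 1 C,
    { hX with
      one_le_Cμ := le_max_left _ _
      ball_pos := fun z r hr => hv.powerMeasure_ball_pos hX z hr
      ball_ne_top := fun z r hr => hv.powerMeasure_ball_ne_top hX z hr
      doubling := fun z r hr => (hC z r hr).trans (by
        rw [← ENNReal.ofReal_coe_nnreal]
        gcongr
        exact le_max_right _ _) }⟩

lemma exists_powerMeasure_ball_inv_le (hX : IsSHT d μ A₀ Cμ) (hv : IsMuckenhoupt d μ p v) :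
    ∃ (C : ℝ≥0) (N : ℝ), 1 ≤ C ∧ 0 ≤ N ∧ ∀ {z r}, 0 < r → IsLocalBall d A₀ x₀ z r →
      (powerMeasure μ p v (ball d z r))⁻¹ ≤ C * ENNReal.ofReal (scale d x₀ z r) ^ N := by
  obtain ⟨C₁, hC₁⟩ := hv.exists_powerMeasure_ball_comparable_of_isLocalBall hX
  obtain ⟨C₂, N, hC₂, hN, hbound⟩ := hv.exists_ballNorm_polynomial_bound hX
  have hP := (one_pos.trans p.one_lt_upper).le
  refine ⟨max 1 (C₁ * C₂ ^ p.upper), N * p.upper, le_max_left _ _, mul_nonneg hN hP,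
    fun {z r} hr hloc => ?_⟩
  have hS : 1 ≤ ENNReal.ofReal (scale d x₀ z r) := ENNReal.one_le_ofReal.2 (hX.one_le_scale z hr)
  have hp0 := p.pos z
  have hν0 := (hv.powerMeasure_ball_pos hX z hr).ne'
  have hνt := hv.powerMeasure_ball_ne_top hX z hr
  have hC₂' : (1 : ℝ≥0∞) ≤ C₂ := by exact_mod_cast hC₂
  calc (powerMeasure μ p v (ball d z r))⁻¹ ≤ C₁ * (ballNorm d μ p v z r)⁻¹ ^ p z := by
        rw [ENNReal.inv_rpow, ← div_eq_mul_inv, ENNReal.le_div_iff_mul_le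
          (.inl (ENNReal.rpow_pos (hv.ballNorm_ne_zero hX z hr).bot_lt
            (hv.ballNorm_ne_top hX z hr)).ne')
          (.inr ENNReal.coe_ne_top), mul_comm, ← div_eq_mul_inv, ENNReal.div_le_iff hν0 hνt]
        exact (hC₁ hr hloc z (hX.mem_ball_self z hr)).2
    _ ≤ C₁ * (C₂ * ENNReal.ofReal (scale d x₀ z r) ^ N) ^ p z := by
        gcongr
        exact (hbound hr hloc).2
    _ ≤ C₁ * (C₂ * ENNReal.ofReal (scale d x₀ z r) ^ N) ^ p.upper := by
        gcongr
        · exact one_le_mul hC₂' ((by simpa using ENNReal.rpow_le_rpow_of_exponent_le hS hN))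
        · exact p.le_upper z
    _ = (C₁ * C₂ ^ p.upper : ℝ≥0) * ENNReal.ofReal (scale d x₀ z r) ^ (N * p.upper) := by
        rw [ENNReal.mul_rpow_of_nonneg _ _ hP, ← ENNReal.rpow_mul, ENNReal.coe_mul,
          ENNReal.coe_rpow_of_nonneg _ hP, mul_assoc]
    _ ≤ _ := by
        gcongr
        exact le_max_right _ _

end IsMuckenhoupt

end PowerMeasure

omit [MeasurableSpace X] in
lemma one_le_rpow_of_nonneg {a : ℝ≥0∞} {N : ℝ} (ha : 1 ≤ a) (hN : 0 ≤ N) : 1 ≤ a ^ N := by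
  simpa using ENNReal.rpow_le_rpow_of_exponent_le ha hN

lemma mul_rpow_le_mul_rpow {S : ℝ≥0∞} (hS : 1 ≤ S) {C C' : ℝ≥0} {N N' : ℝ} (hC : C ≤ C')
    (hN : N ≤ N') : C * S ^ N ≤ C' * S ^ N' :=
  mul_le_mul' (by exact_mod_cast hC) (ENNReal.rpow_le_rpow_of_exponent_le hS hN)

section Averages

variable {ν : Measure X} {B : Set X} {f : X → ℝ≥0∞}

lemma average_rpow_le (h0 : ν B ≠ 0) (ht : ν B ≠ ⊤) (hf : Measurable f) {a : ℝ} (ha : 1 ≤ a) :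
    ((ν B)⁻¹ * ∫⁻ y in B, f y ∂ν) ^ a ≤ (ν B)⁻¹ * ∫⁻ y in B, f y ^ a ∂ν := by
  have ha0 : 0 < a := one_pos.trans_le ha
  have h := ENNReal.rpow_le_rpow (eLpNorm'_le_eLpNorm'_mul_rpow_measure_univ (μ := ν.restrict B)
    one_pos ha hf.aestronglyMeasurable) ha0.le
  simp only [eLpNorm', enorm_eq_self, ENNReal.rpow_one, div_one, Measure.restrict_apply_univ] at h
  rw [ENNReal.mul_rpow_of_nonneg _ _ ha0.le, ← ENNReal.rpow_mul, ← ENNReal.rpow_mul,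
    one_div_mul_cancel ha0.ne', ENNReal.rpow_one, sub_mul, one_mul,
    one_div_mul_cancel ha0.ne'] at h
  calc ((ν B)⁻¹ * ∫⁻ y in B, f y ∂ν) ^ a
      ≤ (ν B)⁻¹ ^ a * ((∫⁻ y in B, f y ^ a ∂ν) * ν B ^ (a - 1)) := by
        rw [ENNReal.mul_rpow_of_nonneg _ _ ha0.le]
        gcongr
    _ = ν B ^ (-a) * ν B ^ (a - 1) * ∫⁻ y in B, f y ^ a ∂ν := by
        rw [ENNReal.inv_rpow, ENNReal.rpow_neg]
        ring
    _ = (ν B)⁻¹ * ∫⁻ y in B, f y ^ a ∂ν := by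
        rw [← ENNReal.rpow_add _ _ h0 ht, ← ENNReal.rpow_neg_one]
        ring_nf

lemma inv_average_le (h0 : ν B ≠ 0) (ht : ν B ≠ ⊤) (hB : MeasurableSet B) {a : ℝ≥0∞}
    (h : ∀ u ∈ B, (f u)⁻¹ ≤ a) : ((ν B)⁻¹ * ∫⁻ u in B, f u ∂ν)⁻¹ ≤ a := by
  rw [ENNReal.inv_le_iff_inv_le]
  calc a⁻¹ = (ν B)⁻¹ * ∫⁻ _ in B, a⁻¹ ∂ν := by
        rw [setLIntegral_const, mul_left_comm, ENNReal.inv_mul_cancel h0 ht, mul_one]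
    _ ≤ (ν B)⁻¹ * ∫⁻ u in B, f u ∂ν := by
        gcongr (ν B)⁻¹ * ?_
        exact setLIntegral_mono' hB fun u hu => ENNReal.inv_le_iff_inv_le.1 (h u hu)

lemma average_le_one_add {p : X → ℝ} (hp : ∀ u, 1 ≤ p u) :
    (ν B)⁻¹ * ∫⁻ u in B, f u ∂ν ≤ 1 + (ν B)⁻¹ * ∫⁻ u, f u ^ p u ∂ν := by
  have hpoint : ∀ u, f u ≤ 1 + f u ^ p u := fun u => by
    rcases le_total (f u) 1 with h | h
    · exact h.trans le_self_add
    · exact (ENNReal.le_rpow_self_of_one_le h (hp u)).trans le_add_self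
  calc (ν B)⁻¹ * ∫⁻ u in B, f u ∂ν ≤ (ν B)⁻¹ * ∫⁻ u in B, (1 + f u ^ p u) ∂ν := by
        gcongr (ν B)⁻¹ * ?_
        exact lintegral_mono hpoint
    _ = (ν B)⁻¹ * ν B + (ν B)⁻¹ * ∫⁻ u in B, f u ^ p u ∂ν := by
        rw [lintegral_add_left measurable_const, setLIntegral_const, one_mul, mul_add]
    _ ≤ 1 + (ν B)⁻¹ * ∫⁻ u, f u ^ p u ∂ν := by
        gcongr ?_ + _ * ?_
        · exact ENNReal.inv_mul_le_one _
        · exact setLIntegral_le_lintegral _ _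

lemma lintegral_add_rpow_le {p : X → ℝ} {P : ℝ} (hp : ∀ u, 1 ≤ p u) (hpP : ∀ u, p u ≤ P)
    {e : X → ℝ≥0∞} (he : Measurable e) (he1 : ∀ u, e u ≤ 1) :
    ∫⁻ u, (f u + e u) ^ p u ∂ν ≤ 2 ^ P * (∫⁻ u, f u ^ p u ∂ν + ∫⁻ u, e u ∂ν) := by
  rw [← lintegral_add_right _ he, ← lintegral_const_mul' _ _
    (ENNReal.rpow_ne_top_of_ne_zero two_ne_zero ofNat_ne_top)]
  refine lintegral_mono fun u =>
    (ENNReal.rpow_add_le_mul_rpow_add_rpow _ _ (hp u)).trans ?_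
  gcongr 2 ^ ?_ * (_ + ?_)
  · exact one_le_two
  · linarith [hpP u]
  · exact ENNReal.rpow_le_self_of_le_one (he1 u) (hp u)

end Averages

section LocalAverages

variable {d : X → X → ℝ} {μ ν : Measure X} {A₀ Cμ : ℝ} {x₀ : X}

lemma IsSHT.bracket_le_mul_scale (hX : IsSHT d μ A₀ Cμ) {z u : X} {r : ℝ} (hr : 0 < r)
    (hloc : IsLocalBall d A₀ x₀ z r) (hu : u ∈ ball d z r) :
    bracket d x₀ u ≤ 3 * A₀ * scale d x₀ z r := by
  have hdist : d x₀ u < 2 * A₀ * bracket d x₀ z := hX.ball_subset_ball_basepoint hr hloc hu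
  rw [hX.d_symm] at hdist
  calc bracket d x₀ u = Real.exp 1 + d u x₀ := rfl
    _ ≤ 3 * A₀ * bracket d x₀ z := by
        nlinarith [hX.one_le_A₀, hX.bracket_pos (x₀ := x₀) z, hX.exp_one_le_bracket (x₀ := x₀) z]
    _ ≤ 3 * A₀ * scale d x₀ z r := by
        gcongr
        · linarith [hX.one_le_A₀]
        · exact hX.bracket_le_scale z hr

lemma IsSHT.inv_bracket_rpow_neg_le (hX : IsSHT d μ A₀ Cμ) {z u : X} {r N : ℝ} (hr : 0 < r)
    (hloc : IsLocalBall d A₀ x₀ z r) (hu : u ∈ ball d z r) (hN : 0 ≤ N) :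
    (ENNReal.ofReal (bracket d x₀ u) ^ (-N))⁻¹ ≤
      ((3 * A₀).toNNReal ^ N : ℝ≥0) * ENNReal.ofReal (scale d x₀ z r) ^ N := by
  rw [ENNReal.rpow_neg, inv_inv, ENNReal.coe_rpow_of_nonneg _ hN,
    ← ENNReal.mul_rpow_of_nonneg _ _ hN]
  refine ENNReal.rpow_le_rpow ?_ hN
  change _ ≤ ENNReal.ofReal (3 * A₀) * _
  rw [← ENNReal.ofReal_mul (by linarith [hX.one_le_A₀])]
  exact ENNReal.ofReal_le_ofReal (hX.bracket_le_mul_scale hr hloc hu)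

namespace LogHolderExponent

lemma iInf_ball_le (p : LogHolderExponent d A₀ x₀) {z y : X} {r : ℝ} (hy : y ∈ ball d z r) :
    ⨅ u : ball d z r, p u ≤ p y :=
  ciInf_le (f := fun u : ball d z r => p u) ⟨p.lower, Set.forall_mem_range.2 fun u => p.lower_le u⟩
    ⟨y, hy⟩

lemma lower_le_iInf_ball (p : LogHolderExponent d A₀ x₀) {z y : X} {r : ℝ}
    (hy : y ∈ ball d z r) :
    p.lower ≤ ⨅ u : ball d z r, p u :=
  have : Nonempty (ball d z r) := ⟨y, hy⟩
  le_ciInf fun u => p.lower_le u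

lemma scale_rpow_sub_iInf_le (p : LogHolderExponent d A₀ x₀) (hX : IsSHT d μ A₀ Cμ) {z y : X}
    {r : ℝ} (hr : 0 < r) (hloc : IsLocalBall d A₀ x₀ z r) (hy : y ∈ ball d z r) :
    ENNReal.ofReal (scale d x₀ z r) ^ (p y - ⨅ u : ball d z r, p u) ≤
      ENNReal.ofReal (Real.exp p.oscConst) := by
  have : Nonempty (ball d z r) := ⟨y, hy⟩
  have hlog : 0 < Real.log (scale d x₀ z r) := one_pos.trans_le (hX.one_le_log_scale z hr)
  refine ofReal_rpow_le_exp (one_pos.trans_le (hX.one_le_scale z hr))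
    (sub_nonneg.2 (p.iInf_ball_le hy)) ?_
  rw [← le_div_iff₀ hlog, sub_le_comm]
  refine le_ciInf fun u => ?_
  rw [sub_le_comm, le_div_iff₀ hlog]
  exact (mul_le_mul_of_nonneg_right (le_abs_self _) hlog.le).trans
    (p.osc_local hr hloc y hy u u.2)

/-- A comparison of powers of `t` whose exponents are scaled down by `p.lower`, so that the strong
type inequality with exponent `p.lower > 1` remains available. -/
lemma rpow_div_lower_comparable (p : LogHolderExponent d A₀ x₀) (hX : IsSHT d μ A₀ Cμ) {z y : X}
    {r : ℝ} (hr : 0 < r) (hloc : IsLocalBall d A₀ x₀ z r) (hy : y ∈ ball d z r) {t : ℝ≥0∞}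
    {C : ℝ≥0} {N : ℝ} (hC : 1 ≤ C) (hN : 0 ≤ N) (h : t ≤ C * ENNReal.ofReal (scale d x₀ z r) ^ N)
    (h' : t⁻¹ ≤ C * ENNReal.ofReal (scale d x₀ z r) ^ N) {a b : ℝ}
    (hab : |a - b| ≤ p y - ⨅ u : ball d z r, p u) :
    t ^ (a / p.lower) ≤
      C ^ p.upper * ENNReal.ofReal (Real.exp p.oscConst) ^ N * t ^ (b / p.lower) := by
  have hS : 1 ≤ ENNReal.ofReal (scale d x₀ z r) := ENNReal.one_le_ofReal.2 (hX.one_le_scale z hr)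
  have hfin : C * ENNReal.ofReal (scale d x₀ z r) ^ N ≠ ⊤ := by finiteness
  have hlower := p.one_lt_lower
  have hdiff : |a / p.lower - b / p.lower| ≤ p y - ⨅ u : ball d z r, p u := by
    rw [← _root_.sub_div, abs_div, abs_of_pos (one_pos.trans hlower)]
    exact (div_le_self (abs_nonneg _) hlower.le).trans hab
  refine rpow_le_mul_rpow_of_polynomial_bound (ENNReal.inv_ne_top.1 (ne_top_of_le_ne_top hfin h'))
    (ne_top_of_le_ne_top hfin h) (by exact_mod_cast hC) hN h h' ?_
    ((ENNReal.rpow_le_rpow_of_exponent_le hS hdiff).trans (p.scale_rpow_sub_iInf_le hX hr hloc hy))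
  linarith [p.le_upper y, p.lower_le_iInf_ball hy]

lemma rpow_sub_one_comparable (p : LogHolderExponent d A₀ x₀) (hX : IsSHT d μ A₀ Cμ) {z x y : X}
    {r : ℝ} (hr : 0 < r) (hloc : IsLocalBall d A₀ x₀ z r) (hx : x ∈ ball d z r)
    (hy : y ∈ ball d z r) {t : ℝ≥0∞} {C : ℝ≥0} {N : ℝ} (hC : 1 ≤ C) (hN : 0 ≤ N)
    (h : t ≤ C * ENNReal.ofReal (scale d x₀ z r) ^ N)
    (h' : t⁻¹ ≤ C * ENNReal.ofReal (scale d x₀ z r) ^ N) :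
    t ^ (p x - 1) ≤ C ^ p.upper * ENNReal.ofReal (Real.exp p.oscConst) ^ N * t ^ (p y - 1) := by
  have hfin : C * ENNReal.ofReal (scale d x₀ z r) ^ N ≠ ⊤ := by finiteness
  have hdiff : |p x - 1 - (p y - 1)| = |p x - p y| := by rw [sub_sub_sub_cancel_right]
  exact rpow_le_mul_rpow_of_polynomial_bound (ENNReal.inv_ne_top.1 (ne_top_of_le_ne_top hfin h'))
    (ne_top_of_le_ne_top hfin h) (by exact_mod_cast hC) hN h h'
    (hdiff.trans_le (p.abs_sub_le_upper (p.mem_Icc x) (p.mem_Icc y)))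
    (hdiff ▸ p.scale_rpow_le hX hr hloc hx hy)

/-- On a local ball `p` may be replaced by its infimum, to which Jensen's inequality applies. -/
lemma average_rpow_div_lower_le (p : LogHolderExponent d A₀ x₀) (hX : IsSHT d μ A₀ Cμ)
    (hν : ∀ z r, 0 < r → ν (ball d z r) ≠ 0 ∧ ν (ball d z r) ≠ ⊤) {z y : X} {r : ℝ} (hr : 0 < r)
    (hloc : IsLocalBall d A₀ x₀ z r) (hy : y ∈ ball d z r) {f : X → ℝ≥0∞} (hf : Measurable f)
    {C : ℝ≥0} {N : ℝ} (hC : 1 ≤ C) (hN : 0 ≤ N)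
    (hlow : ∀ u ∈ ball d z r, (f u)⁻¹ ≤ C * ENNReal.ofReal (scale d x₀ z r) ^ N)
    {t : ℝ≥0∞} (ht : t = (ν (ball d z r))⁻¹ * ∫⁻ u in ball d z r, f u ∂ν)
    (hup : t ≤ C * ENNReal.ofReal (scale d x₀ z r) ^ N)
    (hup' : t⁻¹ ≤ C * ENNReal.ofReal (scale d x₀ z r) ^ N) :
    t ^ (p y / p.lower) ≤ (C ^ p.upper * ENNReal.ofReal (Real.exp p.oscConst) ^ N) ^ 2 *
      ((ν (ball d z r))⁻¹ * ∫⁻ u in ball d z r, f u ^ (p u / p.lower) ∂ν) := by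
  set E : ℝ≥0∞ := C ^ p.upper * ENNReal.ofReal (Real.exp p.oscConst) ^ N
  set q := ⨅ u : ball d z r, p u
  have hlower : 0 < p.lower := one_pos.trans p.one_lt_lower
  have hC' : (1 : ℝ≥0∞) ≤ C := by exact_mod_cast hC
  have hE1 : 1 ≤ E := one_le_mul (one_le_rpow_of_nonneg hC' (one_pos.trans p.one_lt_upper).le)
    (one_le_rpow_of_nonneg (ENNReal.one_le_ofReal.2 (Real.one_le_exp p.oscConst_nonneg)) hN)
  have hS : 1 ≤ C * ENNReal.ofReal (scale d x₀ z r) ^ N := one_le_mul hC'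
    (one_le_rpow_of_nonneg (ENNReal.one_le_ofReal.2 (hX.one_le_scale z hr)) hN)
  have hpoint : ∀ u ∈ ball d z r, f u ^ (q / p.lower) ≤ E * f u ^ (p u / p.lower) := fun u hu => by
    have hqu := p.iInf_ball_le hu
    rcases le_total 1 (f u) with h | h
    · exact (ENNReal.rpow_le_rpow_of_exponent_le h (by gcongr)).trans (le_mul_of_one_le_left' hE1)
    · refine p.rpow_div_lower_comparable hX hr hloc hu hC hN (h.trans hS) (hlow u hu) ?_
      rw [abs_sub_comm, abs_of_nonneg (sub_nonneg.2 hqu)]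
  calc t ^ (p y / p.lower) ≤ E * t ^ (q / p.lower) :=
        p.rpow_div_lower_comparable hX hr hloc hy hC hN hup hup'
          (abs_of_nonneg (sub_nonneg.2 (p.iInf_ball_le hy))).le
    _ ≤ E * ((ν (ball d z r))⁻¹ * ∫⁻ u in ball d z r, f u ^ (q / p.lower) ∂ν) := by
        rw [ht]
        gcongr E * ?_
        exact average_rpow_le (hν z r hr).1 (hν z r hr).2 hf
          ((one_le_div hlower).2 (p.lower_le_iInf_ball hy))
    _ ≤ E * ((ν (ball d z r))⁻¹ * ∫⁻ u in ball d z r, E * f u ^ (p u / p.lower) ∂ν) := by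
        gcongr E * (_ * ?_)
        exact setLIntegral_mono' (hX.measurableSet_ball z r) hpoint
    _ = E ^ 2 * ((ν (ball d z r))⁻¹ * ∫⁻ u in ball d z r, f u ^ (p u / p.lower) ∂ν) := by
        rw [lintegral_const_mul' _ _ (by finiteness)]
        ring

lemma const_mul_rpow_le (p : LogHolderExponent d A₀ x₀) {D τ b : ℝ≥0∞} {L : ℝ≥0} (hL : 1 ≤ L)
    (hDL : D ≤ L) {x : X} (h : τ ^ p x ≤ b) : (D * τ) ^ p x ≤ L ^ p.upper * b := by
  rw [ENNReal.mul_rpow_of_nonneg _ _ (p.pos x).le]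
  refine mul_le_mul' ((ENNReal.rpow_le_rpow hDL (p.pos x).le).trans ?_) h
  exact ENNReal.rpow_le_rpow_of_exponent_le (by exact_mod_cast hL) (p.le_upper x)

end LogHolderExponent

end LocalAverages

section Duality

omit [MeasurableSpace X] in
lemma rpow_mul_le_of_mul_le {a b m w s : ℝ≥0∞} {C K : ℝ≥0} {p p' P : ℝ} (h : p.HolderConjugate p')
    (hP : p ≤ P) (hC : 1 ≤ C) (hK : 1 ≤ K) (hm0 : m ≠ 0) (hmt : m ≠ ⊤) (hw : w ≤ C * a ^ p)
    (hs : s ≤ C * b ^ p') (hab : a * b ≤ K * m) :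
    (m⁻¹ * s) ^ (p - 1) * w ≤ (C * K : ℝ≥0∞) ^ P * m := by
  have hp : 0 ≤ p - 1 := h.sub_one_pos.le
  have hCK : (1 : ℝ≥0∞) ≤ C * K := one_le_mul (by exact_mod_cast hC) (by exact_mod_cast hK)
  calc (m⁻¹ * s) ^ (p - 1) * w ≤ (m⁻¹ * (C * b ^ p')) ^ (p - 1) * (C * a ^ p) := by gcongr
    _ = m ^ (-(p - 1)) * ((C : ℝ≥0∞) ^ (p - 1) * C ^ (1 : ℝ)) * (a * b) ^ p := by
        rw [ENNReal.mul_rpow_of_nonneg _ _ hp, ENNReal.mul_rpow_of_nonneg _ _ hp,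
          ← ENNReal.rpow_mul, mul_comm p', h.sub_one_mul_conj, ENNReal.mul_rpow_of_nonneg _ _
          h.nonneg, ENNReal.inv_rpow, ENNReal.rpow_neg, ENNReal.rpow_one]
        ring
    _ ≤ m ^ (-(p - 1)) * (C : ℝ≥0∞) ^ p * (K * m) ^ p := by
        rw [← ENNReal.rpow_add_of_nonneg _ _ hp zero_le_one, sub_add_cancel]
        gcongr
        exact h.nonneg
    _ = (C * K : ℝ≥0∞) ^ p * (m ^ (-(p - 1)) * m ^ p) := by
        rw [ENNReal.mul_rpow_of_nonneg _ _ h.nonneg, ENNReal.mul_rpow_of_nonneg _ _ h.nonneg]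
        ring
    _ ≤ (C * K : ℝ≥0∞) ^ P * m := by
        rw [← ENNReal.rpow_add _ _ hm0 hmt]
        refine mul_le_mul' (ENNReal.rpow_le_rpow_of_exponent_le hCK hP) ?_
        simp

omit [MeasurableSpace X] in
lemma rpow_le_of_rpow_mul_le {A m w s t τ D : ℝ≥0∞} {p p' : ℝ} (h : p.HolderConjugate p')
    (hw0 : w ≠ 0) (hwt : w ≠ ⊤) (hA : A ≤ m⁻¹ * s * t) (hcross : (m⁻¹ * s) ^ (p - 1) * w ≤ D * m)
    (ht : m * t ^ (p - 1) ≤ w * τ) : A ^ p ≤ (D * τ) ^ p' := by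
  have hp : 0 ≤ p - 1 := h.sub_one_pos.le
  have hbound : w * A ^ (p - 1) ≤ w * (D * τ) :=
    calc w * A ^ (p - 1) ≤ w * (m⁻¹ * s * t) ^ (p - 1) := by gcongr
      _ = (m⁻¹ * s) ^ (p - 1) * w * t ^ (p - 1) := by
          rw [ENNReal.mul_rpow_of_nonneg _ _ hp]
          ring
      _ ≤ D * m * t ^ (p - 1) := by gcongr
      _ = D * (m * t ^ (p - 1)) := mul_assoc _ _ _
      _ ≤ D * (w * τ) := by gcongr
      _ = w * (D * τ) := mul_left_comm _ _ _
  calc A ^ p = (A ^ (p - 1)) ^ p' := by rw [← ENNReal.rpow_mul, h.sub_one_mul_conj]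
    _ ≤ (D * τ) ^ p' :=
        ENNReal.rpow_le_rpow ((ENNReal.mul_le_mul_iff_right hw0 hwt).1 hbound) h.symm.nonneg

variable {μ : Measure X} {p p' : X → ℝ} {v φ Q : X → ℝ≥0∞}

lemma lintegral_powerMeasure (hp : Measurable p) (hv : Measurable v) (hφ : Measurable φ) :
    ∫⁻ x, φ x ∂powerMeasure μ p v = ∫⁻ x, v x ^ p x * φ x ∂μ :=
  lintegral_withDensity_eq_lintegral_mul μ (hv.pow hp) hφ

lemma setLIntegral_mul_rpow_neg_powerMeasure (hp : Measurable p) (hv : Measurable v)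
    (hv0 : ∀ x, v x ≠ 0) (hvt : ∀ x, v x ≠ ⊤) (hφ : Measurable φ) {B : Set X}
    (hB : MeasurableSet B) :
    ∫⁻ x in B, φ x * v x ^ (-p x) ∂powerMeasure μ p v = ∫⁻ x in B, φ x ∂μ := by
  rw [powerMeasure, restrict_withDensity hB]
  refine (lintegral_powerMeasure hp hv (φ := fun x => φ x * v x ^ (-p x))
    (hφ.mul (hv.pow hp.neg))).trans (lintegral_congr fun x => ?_)
  rw [mul_left_comm, ← ENNReal.rpow_add _ _ (hv0 x) (hvt x), add_neg_cancel, ENNReal.rpow_zero,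
    mul_one]

lemma lintegral_rpow_inv_mul_rpow_neg_powerMeasure (hpp' : ∀ x, (p x).HolderConjugate (p' x))
    (hp : Measurable p) (hp' : Measurable p') (hv : Measurable v) (hv0 : ∀ x, v x ≠ 0)
    (hvt : ∀ x, v x ≠ ⊤) (hQ : Measurable Q) :
    ∫⁻ x, (Q x ^ (p' x)⁻¹ * v x ^ (-p x)) ^ p' x ∂powerMeasure μ p v =
      ∫⁻ x, Q x ∂powerMeasure μ p' v⁻¹ := by
  have hmeas : Measurable fun x => (Q x ^ (p' x)⁻¹ * v x ^ (-p x)) ^ p' x :=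
    ((hQ.pow hp'.inv).mul (hv.pow hp.neg)).pow hp'
  rw [lintegral_powerMeasure hp hv hmeas,
    lintegral_powerMeasure hp' hv.inv hQ]
  refine lintegral_congr fun x => ?_
  have h := hpp' x
  have hexp : p x + -p x * p' x = -p' x := by linarith [h.mul_eq_add]
  rw [ENNReal.mul_rpow_of_nonneg _ _ h.symm.nonneg, ← ENNReal.rpow_mul,
    inv_mul_cancel₀ h.symm.ne_zero, ENNReal.rpow_one, ← ENNReal.rpow_mul, mul_left_comm,
    ← ENNReal.rpow_add _ _ (hv0 x) (hvt x), hexp, Pi.inv_apply, ENNReal.inv_rpow,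
    ENNReal.rpow_neg, mul_comm]

lemma measure_mul_rpow_sub_one_le (hpp' : ∀ x, (p x).HolderConjugate (p' x)) {B : Set X}
    (hB : MeasurableSet B) (hφ : Measurable fun y => Q y ^ (p' y)⁻¹) {t C : ℝ≥0∞} {a : ℝ}
    (hQ : ∀ y ∈ B, t ^ p y ≤ Q y) (ht : ∀ y ∈ B, t ^ (a - 1) ≤ C * t ^ (p y - 1)) :
    μ B * t ^ (a - 1) ≤ C * ∫⁻ y in B, Q y ^ (p' y)⁻¹ ∂μ := by
  rw [mul_comm, ← setLIntegral_const, ← lintegral_const_mul _ hφ]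
  refine setLIntegral_mono' hB fun y hy => (ht y hy).trans ?_
  rw [← (hpp' y).div_conj_eq_sub_one, div_eq_mul_inv, ENNReal.rpow_mul]
  gcongr
  · exact inv_nonneg.2 (hpp' y).symm.nonneg
  · exact hQ y hy

end Duality

section LocalMajorant

variable {d : X → X → ℝ} {μ : Measure X} {A₀ Cμ : ℝ} {x₀ : X} {q : LogHolderExponent d A₀ x₀}
  {v : X → ℝ≥0∞}

namespace IsMuckenhoupt

lemma exists_average_le_of_lintegral_rpow_le (hX : IsSHT d μ A₀ Cμ) (hv : IsMuckenhoupt d μ q v)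
    (p : LogHolderExponent d A₀ x₀) (R : ℝ≥0) :
    ∃ (C : ℝ≥0) (N : ℝ), 1 ≤ C ∧ 0 ≤ N ∧ ∀ f : X → ℝ≥0∞,
      ∫⁻ u, f u ^ p u ∂powerMeasure μ q v ≤ R → ∀ {z r}, 0 < r → IsLocalBall d A₀ x₀ z r →
        (powerMeasure μ q v (ball d z r))⁻¹ * ∫⁻ u in ball d z r, f u ∂powerMeasure μ q v ≤
          C * ENNReal.ofReal (scale d x₀ z r) ^ N := by
  obtain ⟨C, N, -, hN, hinv⟩ := hv.exists_powerMeasure_ball_inv_le hX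
  refine ⟨1 + C * R, N, le_self_add, hN, fun f hf {z r} hr hloc => ?_⟩
  set S := ENNReal.ofReal (scale d x₀ z r)
  calc (powerMeasure μ q v (ball d z r))⁻¹ * ∫⁻ u in ball d z r, f u ∂powerMeasure μ q v
      ≤ 1 + C * S ^ N * R := (average_le_one_add fun u => (p.one_lt u).le).trans
        (by gcongr 1 + ?_ * ?_; exact hinv hr hloc)
    _ ≤ S ^ N + C * S ^ N * R := by
        gcongr
        exact one_le_rpow_of_nonneg (ENNReal.one_le_ofReal.2 (hX.one_le_scale z hr)) hN
    _ = (1 + C * R : ℝ≥0) * S ^ N := by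
        push_cast
        ring

/-- Adding a negative power of the bracket bounds `g` from below by a power of the scale. -/
lemma exists_regularization (hX : IsSHT d μ A₀ Cμ) (hv : IsMuckenhoupt d μ q v)
    (p : LogHolderExponent d A₀ x₀) (R : ℝ≥0) :
    ∃ (C : ℝ≥0) (N : ℝ), 1 ≤ C ∧ 0 ≤ N ∧ ∀ g : X → ℝ≥0∞, Measurable g →
      ∫⁻ u, g u ^ p u ∂powerMeasure μ q v ≤ R → ∃ f : X → ℝ≥0∞, Measurable f ∧ g ≤ f ∧
        ∫⁻ u, f u ^ p u ∂powerMeasure μ q v ≤ C ∧ ∀ {z r}, 0 < r → IsLocalBall d A₀ x₀ z r →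
          (∀ u ∈ ball d z r, (f u)⁻¹ ≤ C * ENNReal.ofReal (scale d x₀ z r) ^ N) ∧
          (powerMeasure μ q v (ball d z r))⁻¹ * ∫⁻ u in ball d z r, f u ∂powerMeasure μ q v ≤
            C * ENNReal.ofReal (scale d x₀ z r) ^ N := by
  have hP := (one_pos.trans p.one_lt_upper).le
  set R₁ : ℝ≥0 := 2 ^ p.upper * (R + 1) with hR₁
  obtain ⟨N₁, hN₁, htail⟩ := hv.exists_forall_lintegral_bracket_rpow_le hX one_ne_zero
  obtain ⟨C₂, N₂, hC₂, hN₂, havg⟩ := hv.exists_average_le_of_lintegral_rpow_le hX p R₁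
  set e : X → ℝ≥0∞ := fun u => ENNReal.ofReal (bracket d x₀ u) ^ (-N₁)
  have hemeas : Measurable e := hX.measurable_bracket.ennreal_ofReal.pow_const _
  have he1 : ∀ u, e u ≤ 1 := fun u => ENNReal.rpow_le_one_of_one_le_of_neg
    (ENNReal.one_le_ofReal.2 (hX.one_le_bracket u)) (neg_lt_zero.2 hN₁)
  refine ⟨max C₂ (max R₁ ((3 * A₀).toNNReal ^ N₁)), max N₁ N₂, le_max_of_le_left hC₂,
    le_max_of_le_right hN₂, fun g hg hgR => ⟨g + e, hg.add hemeas, le_self_add, ?_⟩⟩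
  have hf : ∫⁻ u, (g u + e u) ^ p u ∂powerMeasure μ q v ≤ R₁ := by
    refine (lintegral_add_rpow_le (fun u => (p.one_lt u).le) p.le_upper hemeas he1).trans ?_
    rw [hR₁, ENNReal.coe_mul, ENNReal.coe_rpow_of_nonneg _ hP]
    push_cast
    gcongr 2 ^ _ * (?_ + ?_)
    exact htail N₁ le_rfl
  refine ⟨hf.trans (by exact_mod_cast le_max_of_le_right (le_max_left _ _)),
    fun {z r} hr hloc => ?_⟩
  have hS := ENNReal.one_le_ofReal.2 (hX.one_le_scale (x₀ := x₀) z hr)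
  constructor
  · intro u hu
    exact (ENNReal.inv_le_inv.2 le_add_self).trans
      ((hX.inv_bracket_rpow_neg_le hr hloc hu hN₁.le).trans (mul_rpow_le_mul_rpow hS
        (le_max_of_le_right (le_max_right _ _)) (le_max_left _ _)))
  · exact (havg _ hf hr hloc).trans
      (mul_rpow_le_mul_rpow hS (le_max_left _ _) (le_max_right _ _))

/-- The majorant is a power of a maximal function. It carries the average itself along, because
the bound is used at two different points of the ball. -/
lemma exists_average_majorant_of_isLocalBall (hX : IsSHT d μ A₀ Cμ) (hv : IsMuckenhoupt d μ q v)
    (p : LogHolderExponent d A₀ x₀) (R : ℝ≥0) :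
    ∃ C : ℝ≥0, ∀ g : X → ℝ≥0∞, Measurable g → ∫⁻ u, g u ^ p u ∂powerMeasure μ q v ≤ R →
      ∃ Q : X → ℝ≥0∞, Measurable Q ∧ ∫⁻ u, Q u ∂powerMeasure μ q v ≤ C ∧
        ∀ {z r}, 0 < r → IsLocalBall d A₀ x₀ z r → ∃ t : ℝ≥0∞,
          ∫⁻ u in ball d z r, g u ∂powerMeasure μ q v ≤ powerMeasure μ q v (ball d z r) * t ∧
          (∀ y ∈ ball d z r, t ^ p y ≤ Q y) ∧
          ∀ x ∈ ball d z r, ∀ y ∈ ball d z r, t ^ (p x - 1) ≤ C * t ^ (p y - 1) := by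
  obtain ⟨C₁, N, hC₁, hN, hreg⟩ := hv.exists_regularization hX p R
  obtain ⟨Cν, hν⟩ := hv.exists_isSHT_powerMeasure hX
  obtain ⟨K, hK⟩ := hν.strong_type_maximal p.one_lt_lower
  set ν := powerMeasure μ q v
  have hνB : ∀ z r, 0 < r → ν (ball d z r) ≠ 0 ∧ ν (ball d z r) ≠ ⊤ := fun z r hr =>
    ⟨(hν.ball_pos z r hr).ne', hν.ball_ne_top z r hr⟩
  have hlower := one_pos.trans p.one_lt_lower
  set E : ℝ≥0∞ := C₁ ^ p.upper * ENNReal.ofReal (Real.exp p.oscConst) ^ N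
  have hE : E ≠ ⊤ := by finiteness
  set D : ℝ≥0∞ := E + (E ^ 2) ^ p.lower * (K * C₁)
  have hD : (D.toNNReal : ℝ≥0∞) = D := ENNReal.coe_toNNReal (by finiteness)
  refine ⟨D.toNNReal, fun g hg hgR => ?_⟩
  obtain ⟨f, hf, hgf, hfC, hball⟩ := hreg g hg hgR
  obtain ⟨H, hH, hMH, hHs⟩ := hK (fun u => f u ^ (p u / p.lower))
    (hf.pow (p.measurable.div_const _))
  rw [hD]
  refine ⟨fun u => (E ^ 2 * H u) ^ p.lower, (hH.const_mul _).pow_const _, ?_,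
    fun {z r} hr hloc => ?_⟩
  · simp only [← ENNReal.rpow_mul, div_mul_cancel₀ _ hlower.ne'] at hHs
    simp only [ENNReal.mul_rpow_of_nonneg _ _ hlower.le]
    rw [lintegral_const_mul' _ _ (by finiteness)]
    calc (E ^ 2) ^ p.lower * ∫⁻ u, H u ^ p.lower ∂ν
        ≤ (E ^ 2) ^ p.lower * (K * C₁) := by gcongr; exact hHs.trans (by gcongr)
      _ ≤ D := le_add_self
  obtain ⟨hlow, hup⟩ := hball hr hloc
  obtain ⟨hν0, hνt⟩ := hνB z r hr
  set t := (ν (ball d z r))⁻¹ * ∫⁻ u in ball d z r, f u ∂ν with ht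
  have hup' := inv_average_le hν0 hνt (hX.measurableSet_ball z r) hlow
  refine ⟨t, ?_, fun y hy => ?_, fun x hx y hy => ?_⟩
  · rw [ht, ENNReal.mul_inv_cancel_left hν0 hνt]
    exact lintegral_mono hgf
  · rw [← div_mul_cancel₀ (p y) hlower.ne', ENNReal.rpow_mul]
    refine ENNReal.rpow_le_rpow ((p.average_rpow_div_lower_le hX hνB hr hloc hy hf hC₁ hN hlow ht
      hup hup').trans ?_) hlower.le
    gcongr _ * ?_
    exact (average_le_maximal hr hy).trans (hMH y)
  · refine (p.rpow_sub_one_comparable hX hr hloc hx hy hC₁ hN hup hup').trans ?_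
    gcongr
    exact le_self_add

end IsMuckenhoupt

end LocalMajorant

section LocalEstimate

variable {d : X → X → ℝ} {μ : Measure X} {A₀ Cμ : ℝ} {x₀ : X} {p : LogHolderExponent d A₀ x₀}
  {v : X → ℝ≥0∞}

namespace IsMuckenhoupt

lemma exists_powerMeasure_mul_powerMeasure_le_of_isLocalBall (hX : IsSHT d μ A₀ Cμ)
    (hv : IsMuckenhoupt d μ p v) :
    ∃ D : ℝ≥0, ∀ {z r}, 0 < r → IsLocalBall d A₀ x₀ z r → ∀ x ∈ ball d z r,
      ((μ (ball d z r))⁻¹ * powerMeasure μ p.conj v⁻¹ (ball d z r)) ^ (p x - 1) *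
        powerMeasure μ p v (ball d z r) ≤ D * μ (ball d z r) := by
  obtain ⟨C₁, hC₁⟩ := hv.exists_powerMeasure_ball_comparable_of_isLocalBall hX
  obtain ⟨C₂, hC₂⟩ := hv.inv.exists_powerMeasure_ball_comparable_of_isLocalBall hX
  obtain ⟨K, hK⟩ := hv.exists_ballNorm_mul_ballNorm_inv_le
  set C := max 1 (max C₁ C₂)
  refine ⟨(C * max 1 K) ^ p.upper, fun {z r} hr hloc x hx => ?_⟩
  rw [ENNReal.coe_rpow_of_nonneg _ (one_pos.trans p.one_lt_upper).le, ENNReal.coe_mul]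
  refine rpow_mul_le_of_mul_le (p.holderConjugate x) (p.le_upper x) (le_max_left _ _)
    (le_max_left _ _) (hX.ball_pos z r hr).ne' (hX.ball_ne_top z r hr)
    ((hC₁ hr hloc x hx).1.trans ?_) ((hC₂ hr hloc x hx).1.trans ?_) ((hK z r hr).trans ?_)
  · gcongr
    exact le_max_of_le_right (le_max_left _ _)
  · gcongr
    exact le_max_of_le_right (le_max_right _ _)
  · gcongr
    exact le_max_right _ _

/-- The average of `g` over a local ball is controlled by two maximal functions: one for the dual
measure, and one for `v ^ p` applied to a function obtained from the first by duality. -/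
lemma exists_local_average_majorant (hX : IsSHT d μ A₀ Cμ) (hv : IsMuckenhoupt d μ p v) :
    ∃ C : ℝ≥0, ∀ g : X → ℝ≥0∞, Measurable g →
      ∫⁻ u, g u ^ p u ∂powerMeasure μ p.conj v⁻¹ ≤ 1 → ∃ Ψ : X → ℝ≥0∞, Measurable Ψ ∧
        ∫⁻ u, Ψ u ∂powerMeasure μ p v ≤ C ∧ ∀ {z r}, 0 < r → IsLocalBall d A₀ x₀ z r →
          ∀ x ∈ ball d z r, ((μ (ball d z r))⁻¹ *
            ∫⁻ u in ball d z r, g u ∂powerMeasure μ p.conj v⁻¹) ^ p x ≤ Ψ x := by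
  obtain ⟨D, hD⟩ := hv.exists_powerMeasure_mul_powerMeasure_le_of_isLocalBall hX
  obtain ⟨C₁, hmaj₁⟩ := hv.inv.exists_average_majorant_of_isLocalBall hX p 1
  obtain ⟨C₂, hmaj₂⟩ := hv.exists_average_majorant_of_isLocalBall hX p.conj C₁
  set L := max 1 (D * C₁)
  have hupper : 0 ≤ p.conj.upper := (one_pos.trans p.conj.one_lt_upper).le
  refine ⟨L ^ p.conj.upper * C₂, fun g hg hg1 => ?_⟩
  obtain ⟨Q₁, hQ₁, hQ₁C, hball₁⟩ := hmaj₁ g hg (by simpa using hg1)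
  set φ : X → ℝ≥0∞ := fun x => Q₁ x ^ (p.conj x)⁻¹
  have hφ : Measurable φ := hQ₁.pow p.conj.measurable.inv
  obtain ⟨Q₂, hQ₂, hQ₂C, hball₂⟩ := hmaj₂ (fun x => φ x * v x ^ (-p x))
    (hφ.mul (hv.measurable.pow p.measurable.neg))
    ((lintegral_rpow_inv_mul_rpow_neg_powerMeasure p.holderConjugate p.measurable
      p.conj.measurable hv.measurable hv.ne_zero hv.ne_top hQ₁).trans_le hQ₁C)
  refine ⟨fun x => L ^ p.conj.upper * Q₂ x, hQ₂.const_mul _, ?_, fun {z r} hr hloc x hx => ?_⟩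
  · rw [lintegral_const_mul' _ _ (by finiteness)]
    push_cast [ENNReal.coe_rpow_of_nonneg _ hupper]
    gcongr
  obtain ⟨t, hgt, htQ, hosc⟩ := hball₁ hr hloc
  obtain ⟨τ, hφτ, hτQ, -⟩ := hball₂ hr hloc
  have hB := hX.measurableSet_ball z r
  rw [setLIntegral_mul_rpow_neg_powerMeasure p.measurable hv.measurable hv.ne_zero hv.ne_top hφ hB]
    at hφτ
  have hmass : μ (ball d z r) * t ^ (p x - 1) ≤ powerMeasure μ p v (ball d z r) * (C₁ * τ) :=
    calc μ (ball d z r) * t ^ (p x - 1) ≤ C₁ * ∫⁻ y in ball d z r, φ y ∂μ :=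
          measure_mul_rpow_sub_one_le p.holderConjugate hB hφ htQ (hosc x hx)
      _ ≤ C₁ * (powerMeasure μ p v (ball d z r) * τ) := by gcongr
      _ = _ := mul_left_comm _ _ _
  calc ((μ (ball d z r))⁻¹ * ∫⁻ u in ball d z r, g u ∂powerMeasure μ p.conj v⁻¹) ^ p x
      ≤ (D * (C₁ * τ)) ^ p.conj x :=
        rpow_le_of_rpow_mul_le (p.holderConjugate x) (hv.powerMeasure_ball_pos hX z hr).ne'
          (hv.powerMeasure_ball_ne_top hX z hr) (by rw [mul_assoc]; gcongr) (hD hr hloc x hx) hmass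
    _ ≤ L ^ p.conj.upper * Q₂ x := by
        rw [← mul_assoc]
        exact p.conj.const_mul_rpow_le (le_max_left _ _)
          (by exact_mod_cast le_max_right 1 (D * C₁)) (hτQ x hx)

end IsMuckenhoupt

end LocalEstimate

section LargeBalls

variable {d : X → X → ℝ} {μ : Measure X} {A₀ Cμ : ℝ} {x₀ : X} {p q : LogHolderExponent d A₀ x₀}
  {v : X → ℝ≥0∞}

lemma measure_le_two_mul_measure_inter_compl {B s : Set X} (hs : MeasurableSet s) (hB : μ B ≠ ⊤)
    (h : μ (B ∩ s) ≤ μ B / 2) : μ B ≤ 2 * μ (B ∩ sᶜ) := by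
  have hhalf : μ B / 2 ≤ μ (B ∩ sᶜ) := by
    refine (ENNReal.add_le_add_iff_left (a := μ B / 2) (by finiteness)).1 ?_
    rw [ENNReal.add_halves, ← Set.sdiff_eq, ← measure_inter_add_sdiff B hs]
    gcongr
    rwa [measure_inter_add_sdiff B hs]
  calc μ B = 2 * (μ B / 2) := (ENNReal.mul_div_cancel two_ne_zero ofNat_ne_top).symm
    _ ≤ 2 * μ (B ∩ sᶜ) := by gcongr

lemma LogHolderExponent.rpow_limit_le_of_polynomial_bound (p : LogHolderExponent d A₀ x₀)
    (hX : IsSHT d μ A₀ Cμ) {t : ℝ≥0∞} {N : ℝ} (hN : 0 ≤ N) {x : X} (ht0 : t ≠ 0) (htt : t ≠ ⊤)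
    (h : t ≤ ENNReal.ofReal (bracket d x₀ x) ^ N) (h' : t⁻¹ ≤ ENNReal.ofReal (bracket d x₀ x) ^ N) :
    t ^ p.limit ≤ ENNReal.ofReal (Real.exp p.oscConst) ^ N * t ^ p x := by
  have hbound := rpow_le_mul_rpow_of_polynomial_bound (C := 1) ht0 htt le_rfl hN
    (by rwa [one_mul]) (by rwa [one_mul]) le_rfl
    (abs_sub_comm (p x) p.limit ▸ p.bracket_rpow_le hX x)
  rwa [ENNReal.one_rpow, one_mul] at hbound

lemma lintegral_le_lintegral_min_one_add {g : X → ℝ≥0∞} (hg : Measurable g) {p : X → ℝ}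
    (hp : ∀ x, 1 ≤ p x) (s : Set X) :
    ∫⁻ u in s, g u ∂μ ≤ ∫⁻ u in s, min (g u) 1 ∂μ + ∫⁻ u, g u ^ p u ∂μ := by
  have hpoint : ∀ u, g u ≤ min (g u) 1 + g u ^ p u := fun u => by
    rcases le_total (g u) 1 with h | h
    · exact (le_min le_rfl h).trans le_self_add
    · exact (ENNReal.le_rpow_self_of_one_le h (hp u)).trans le_add_self
  refine (lintegral_mono hpoint).trans ?_
  rw [lintegral_add_left (hg.min measurable_const)]
  gcongr _ + ?_
  exact setLIntegral_le_lintegral _ _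

lemma inv_rpow_le_of_inv_rpow_conj_le {S : ℝ≥0∞} {N : ℝ} {x : X} (hS : 1 ≤ S) (hN : 0 ≤ N)
    (h : v⁻¹ x ^ p.conj x ≤ S ^ N) : (v x ^ p x)⁻¹ ≤ S ^ (N * p.upper) := by
  have hpp' := p.holderConjugate x
  calc (v x ^ p x)⁻¹ = (v⁻¹ x ^ p.conj x) ^ (p x - 1) := by
        rw [← ENNReal.rpow_mul, mul_comm, hpp'.sub_one_mul_conj, Pi.inv_apply, ENNReal.inv_rpow]
    _ ≤ (S ^ N) ^ (p x - 1) := ENNReal.rpow_le_rpow h hpp'.sub_one_pos.le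
    _ = S ^ (N * (p x - 1)) := (ENNReal.rpow_mul _ _ _).symm
    _ ≤ S ^ (N * p.upper) := ENNReal.rpow_le_rpow_of_exponent_le hS (by
        gcongr
        linarith [p.le_upper x])

namespace IsMuckenhoupt

lemma exists_measure_bracket_rpow_lt_le (hX : IsSHT d μ A₀ Cμ) (hv : IsMuckenhoupt d μ p v)
    {η : ℝ≥0∞} (hη : η ≠ 0) :
    ∃ N : ℝ, 0 < N ∧ μ {x | ENNReal.ofReal (bracket d x₀ x) ^ N < v x ^ p x} ≤ η := by
  obtain ⟨N, hN, htail⟩ := hv.exists_forall_lintegral_bracket_rpow_le hX hη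
  have hS : Measurable fun x => ENNReal.ofReal (bracket d x₀ x) :=
    hX.measurable_bracket.ennreal_ofReal
  have hpow := hv.measurable.pow p.measurable
  refine ⟨N, hN, le_trans ?_ (htail N le_rfl)⟩
  rw [lintegral_powerMeasure p.measurable hv.measurable (hS.pow_const _)]
  set s := {x | ENNReal.ofReal (bracket d x₀ x) ^ N < v x ^ p x}
  have hs : MeasurableSet s := measurableSet_lt (hS.pow_const _) hpow
  calc μ s = ∫⁻ _ in s, 1 ∂μ := (setLIntegral_one s).symm
    _ ≤ ∫⁻ x in s, v x ^ p x * ENNReal.ofReal (bracket d x₀ x) ^ (-N) ∂μ := by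
        refine setLIntegral_mono' hs fun x hx => ?_
        have h1 := one_le_rpow_of_nonneg (ENNReal.one_le_ofReal.2 (hX.one_le_bracket (x₀ := x₀) x))
          hN.le
        rw [ENNReal.rpow_neg, ← div_eq_mul_inv, ENNReal.le_div_iff_mul_le
          (.inl (one_pos.trans_le h1).ne') (.inl (by finiteness)), one_mul]
        exact le_of_lt hx
    _ ≤ ∫⁻ x, v x ^ p x * ENNReal.ofReal (bracket d x₀ x) ^ (-N) ∂μ :=
        setLIntegral_le_lintegral _ _

lemma exists_polynomially_bounded_subset (hX : IsSHT d μ A₀ Cμ) (hv : IsMuckenhoupt d μ p v) :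
    ∃ (N : ℝ) (G : Set X), 0 ≤ N ∧ MeasurableSet G ∧
      (∀ x ∈ G, v x ^ p x ≤ ENNReal.ofReal (bracket d x₀ x) ^ N ∧
        (v x ^ p x)⁻¹ ≤ ENNReal.ofReal (bracket d x₀ x) ^ N) ∧
      ∀ R, 1 ≤ R → μ (ball d x₀ R) ≤ 2 * μ (ball d x₀ R ∩ G) := by
  have hη : μ (ball d x₀ 1) / 4 ≠ 0 := ENNReal.div_ne_zero.2
    ⟨(hX.ball_pos x₀ 1 one_pos).ne', by simp⟩
  obtain ⟨N₁, hN₁, h₁⟩ := hv.exists_measure_bracket_rpow_lt_le hX hη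
  obtain ⟨N₂, hN₂, h₂⟩ := hv.inv.exists_measure_bracket_rpow_lt_le hX hη
  have hS : Measurable fun x => ENNReal.ofReal (bracket d x₀ x) :=
    hX.measurable_bracket.ennreal_ofReal
  set s₁ := {x | ENNReal.ofReal (bracket d x₀ x) ^ N₁ < v x ^ p x}
  set s₂ := {x | ENNReal.ofReal (bracket d x₀ x) ^ N₂ < v⁻¹ x ^ p.conj x}
  have hs : MeasurableSet (s₁ ∪ s₂) :=
    (measurableSet_lt (hS.pow_const _) (hv.measurable.pow p.measurable)).union
      (measurableSet_lt (hS.pow_const _) (hv.measurable.inv.pow p.conj.measurable))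
  refine ⟨max N₁ (N₂ * p.upper), (s₁ ∪ s₂)ᶜ, le_max_of_le_left hN₁.le, hs.compl,
    fun x hx => ?_, fun R hR => ?_⟩
  · have hS1 := ENNReal.one_le_ofReal.2 (hX.one_le_bracket (x₀ := x₀) x)
    simp only [s₁, s₂, Set.mem_compl_iff, Set.mem_union, Set.mem_ofPred_eq, not_or, not_lt] at hx
    exact ⟨hx.1.trans (ENNReal.rpow_le_rpow_of_exponent_le hS1 (le_max_left _ _)),
      (inv_rpow_le_of_inv_rpow_conj_le hS1 hN₂.le hx.2).trans
        (ENNReal.rpow_le_rpow_of_exponent_le hS1 (le_max_right _ _))⟩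
  · have hexc : μ (ball d x₀ R ∩ (s₁ ∪ s₂)) ≤ μ (ball d x₀ R) / 2 :=
      calc μ (ball d x₀ R ∩ (s₁ ∪ s₂)) ≤ μ s₁ + μ s₂ :=
            (measure_mono Set.inter_subset_right).trans (measure_union_le _ _)
        _ ≤ μ (ball d x₀ 1) / 4 + μ (ball d x₀ 1) / 4 := add_le_add h₁ h₂
        _ = μ (ball d x₀ 1) / 2 := by
            rw [← ENNReal.add_div, ← mul_two, show (4 : ℝ≥0∞) = 2 * 2 by norm_num,
              ENNReal.mul_div_mul_right _ _ two_ne_zero ofNat_ne_top]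
        _ ≤ μ (ball d x₀ R) / 2 := by
            gcongr
            exact ball_subset_ball d x₀ hR
    exact measure_le_two_mul_measure_inter_compl hs (hX.ball_ne_top x₀ R (one_pos.trans_le hR)) hexc

lemma exists_lintegral_min_one_rpow_limit_le (hX : IsSHT d μ A₀ Cμ) (hv : IsMuckenhoupt d μ q v)
    (p : LogHolderExponent d A₀ x₀) :
    ∃ E : ℝ≥0, ∀ g : X → ℝ≥0∞, ∫⁻ u, g u ^ p u ∂powerMeasure μ q v ≤ 1 →
      ∫⁻ u, min (g u) 1 ^ p.limit ∂powerMeasure μ q v ≤ E := by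
  obtain ⟨N, hN, htail⟩ := hv.exists_forall_lintegral_bracket_rpow_le hX one_ne_zero
  obtain ⟨E, hE⟩ := p.exists_rpow_le_add hX one_ne_top hN
  refine ⟨E + 1, fun g hg1 => ?_⟩
  set ν := powerMeasure μ q v
  calc ∫⁻ u, min (g u) 1 ^ p.limit ∂ν
      ≤ ∫⁻ u, (E * g u ^ p u + ENNReal.ofReal (bracket d x₀ u) ^ (-N)) ∂ν := by
        refine lintegral_mono fun u => (hE (min_le_right _ _) u).1.trans ?_
        gcongr _ * ?_ + _
        exact ENNReal.rpow_le_rpow (min_le_left _ _) (p.pos u).le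
    _ = E * ∫⁻ u, g u ^ p u ∂ν + ∫⁻ u, ENNReal.ofReal (bracket d x₀ u) ^ (-N) ∂ν := by
        rw [lintegral_add_right _ (hX.measurable_bracket.ennreal_ofReal.pow_const _),
          lintegral_const_mul' _ _ ENNReal.coe_ne_top]
    _ ≤ E * 1 + 1 := by
        gcongr
        exact htail N le_rfl
    _ = (E + 1 : ℝ≥0) := by push_cast; rw [mul_one]

/-- Where `g` is large its integral is controlled by that of `g ^ p`, so it may be truncated at the
cost of adding a fixed bump at the base point. -/
lemma exists_truncation (hX : IsSHT d μ A₀ Cμ) (hv : IsMuckenhoupt d μ q v)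
    (p : LogHolderExponent d A₀ x₀) :
    ∃ C : ℝ≥0, ∀ g : X → ℝ≥0∞, Measurable g → ∫⁻ u, g u ^ p u ∂powerMeasure μ q v ≤ 1 →
      ∃ f : X → ℝ≥0∞, Measurable f ∧ ∫⁻ u, f u ^ p.limit ∂powerMeasure μ q v ≤ C ∧
        ∀ R, 1 ≤ R → ∫⁻ u in ball d x₀ R, g u ∂powerMeasure μ q v ≤
          ∫⁻ u in ball d x₀ R, f u ∂powerMeasure μ q v := by
  obtain ⟨E, hE⟩ := hv.exists_lintegral_min_one_rpow_limit_le hX p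
  have hB := hX.measurableSet_ball x₀ 1
  have hν0 := (hv.powerMeasure_ball_pos hX x₀ one_pos).ne'
  have hνt := hv.powerMeasure_ball_ne_top hX x₀ one_pos
  have hlimit := one_pos.trans p.one_lt_limit
  set ν := powerMeasure μ q v
  set c := (ν (ball d x₀ 1))⁻¹
  set b : X → ℝ≥0∞ := (ball d x₀ 1).indicator fun _ => c
  have hb : Measurable b := measurable_const.indicator hB
  have hbint : ∫⁻ u, b u ^ p.limit ∂ν = c ^ p.limit * ν (ball d x₀ 1) := by
    rw [← lintegral_indicator_const hB]
    refine lintegral_congr fun u => ?_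
    by_cases hu : u ∈ ball d x₀ 1 <;> simp [b, hu, hlimit]
  set D : ℝ≥0∞ := 2 ^ (p.limit - 1) * (E + c ^ p.limit * ν (ball d x₀ 1)) with hDdef
  have hD : (D.toNNReal : ℝ≥0∞) = D := ENNReal.coe_toNNReal (by finiteness)
  refine ⟨D.toNNReal, fun g hg hg1 => ⟨fun u => min (g u) 1 + b u,
    (hg.min measurable_const).add hb, ?_, fun R hR => ?_⟩⟩
  · rw [hD, hDdef]
    calc ∫⁻ u, (min (g u) 1 + b u) ^ p.limit ∂ν
        ≤ ∫⁻ u, 2 ^ (p.limit - 1) * (min (g u) 1 ^ p.limit + b u ^ p.limit) ∂ν :=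
          lintegral_mono fun u => ENNReal.rpow_add_le_mul_rpow_add_rpow _ _ p.one_lt_limit.le
      _ = 2 ^ (p.limit - 1) * (∫⁻ u, min (g u) 1 ^ p.limit ∂ν + ∫⁻ u, b u ^ p.limit ∂ν) := by
          rw [lintegral_const_mul' _ _ (by finiteness), lintegral_add_right _ (hb.pow_const _)]
      _ ≤ 2 ^ (p.limit - 1) * (E + c ^ p.limit * ν (ball d x₀ 1)) := by
          rw [hbint]
          gcongr 2 ^ _ * (?_ + _)
          exact hE g hg1
  · rw [lintegral_add_left (hg.min measurable_const), lintegral_indicator_const hB,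
      Measure.restrict_apply hB, Set.inter_eq_left.2 (ball_subset_ball d x₀ hR),
      ENNReal.inv_mul_cancel hν0 hνt]
    refine (lintegral_le_lintegral_min_one_add hg (fun u => (p.one_lt u).le) _).trans ?_
    gcongr

lemma exists_average_majorant_of_one_le (hX : IsSHT d μ A₀ Cμ) (hv : IsMuckenhoupt d μ q v)
    (p : LogHolderExponent d A₀ x₀) :
    ∃ C : ℝ≥0, ∀ g : X → ℝ≥0∞, Measurable g → ∫⁻ u, g u ^ p u ∂powerMeasure μ q v ≤ 1 →
      ∃ Q : X → ℝ≥0∞, Measurable Q ∧ ∫⁻ u, Q u ∂powerMeasure μ q v ≤ C ∧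
        ∀ R, 1 ≤ R → ∃ t : ℝ≥0∞,
          ∫⁻ u in ball d x₀ R, g u ∂powerMeasure μ q v ≤ powerMeasure μ q v (ball d x₀ R) * t ∧
          ∀ y ∈ ball d x₀ R, t ^ p.limit ≤ Q y := by
  obtain ⟨C, hC⟩ := hv.exists_truncation hX p
  obtain ⟨Cν, hν⟩ := hv.exists_isSHT_powerMeasure hX
  obtain ⟨K, hK⟩ := hν.strong_type_maximal p.one_lt_limit
  refine ⟨K * C, fun g hg hg1 => ?_⟩
  obtain ⟨f, hf, hfC, hgf⟩ := hC g hg hg1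
  obtain ⟨H, hH, hMH, hHint⟩ := hK f hf
  refine ⟨fun u => H u ^ p.limit, hH.pow_const _, ?_, fun R hR =>
    ⟨_, (hgf R hR).trans_eq (ENNReal.mul_inv_cancel_left
      (hv.powerMeasure_ball_pos hX x₀ (one_pos.trans_le hR)).ne'
      (hv.powerMeasure_ball_ne_top hX x₀ (one_pos.trans_le hR))).symm, fun y hy => ?_⟩⟩
  · push_cast
    exact hHint.trans (by gcongr)
  · exact ENNReal.rpow_le_rpow ((average_le_maximal (one_pos.trans_le hR) hy).trans (hMH y))
      (one_pos.trans p.one_lt_limit).le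

/-- The variable exponent in the duality identity
`lintegral_rpow_inv_mul_rpow_neg_powerMeasure` may be replaced by its limit where the weight is
polynomially bounded. -/
lemma rpow_inv_mul_rpow_neg_rpow_limit_le (hX : IsSHT d μ A₀ Cμ) (hv : IsMuckenhoupt d μ p v)
    {N : ℝ} (hN : 0 ≤ N) {x : X} (hup : v x ^ p x ≤ ENNReal.ofReal (bracket d x₀ x) ^ N)
    (hlow : (v x ^ p x)⁻¹ ≤ ENNReal.ofReal (bracket d x₀ x) ^ N) (a : ℝ≥0∞) :
    (a ^ p.conj.limit⁻¹ * v x ^ (-p x)) ^ p.conj.limit ≤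
      ((Real.exp p.conj.oscConst).toNNReal ^ N : ℝ≥0) *
        (a ^ (p.conj x)⁻¹ * v x ^ (-p x)) ^ p.conj x := by
  have hlim := p.holderConjugate_limit
  rw [ENNReal.mul_rpow_of_nonneg _ _ hlim.symm.nonneg,
    ENNReal.mul_rpow_of_nonneg _ _ (p.conj.pos x).le, ENNReal.rpow_inv_rpow hlim.symm.ne_zero,
    ENNReal.rpow_inv_rpow (p.conj.pos x).ne', mul_left_comm]
  gcongr _ * ?_
  rw [ENNReal.coe_rpow_of_nonneg _ hN]
  refine p.conj.rpow_limit_le_of_polynomial_bound hX hN ?_ ?_ ?_ ?_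
  · simp [ENNReal.rpow_eq_zero_iff, hv.ne_zero x, hv.ne_top x]
  · simp [ENNReal.rpow_eq_top_iff, hv.ne_zero x, hv.ne_top x]
  · rwa [ENNReal.rpow_neg]
  · rwa [ENNReal.rpow_neg, inv_inv]

lemma exists_dual_function (hX : IsSHT d μ A₀ Cμ) (hv : IsMuckenhoupt d μ p v) :
    ∃ E : ℝ≥0, ∀ Q : X → ℝ≥0∞, Measurable Q → ∃ F : X → ℝ≥0∞, Measurable F ∧
      ∫⁻ x, F x ^ p.conj.limit ∂powerMeasure μ p v ≤
        E * ∫⁻ x, Q x ∂powerMeasure μ p.conj v⁻¹ ∧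
      ∀ R, 1 ≤ R → ∀ t, (∀ y ∈ ball d x₀ R, t ^ p.limit ≤ Q y) →
        μ (ball d x₀ R) * t ^ (p.limit - 1) ≤
          2 * ∫⁻ x in ball d x₀ R, F x ∂powerMeasure μ p v := by
  obtain ⟨N, G, hN, hG, hpoly, hmass⟩ := hv.exists_polynomially_bounded_subset hX
  have hlim := p.holderConjugate_limit
  refine ⟨(Real.exp p.conj.oscConst).toNNReal ^ N, fun Q hQ => ?_⟩
  have hQpow : Measurable fun x => Q x ^ p.conj.limit⁻¹ := hQ.pow_const _
  have hF : Measurable fun x => Q x ^ p.conj.limit⁻¹ * v x ^ (-p x) :=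
    hQpow.mul (hv.measurable.pow p.measurable.neg)
  refine ⟨G.indicator fun x => Q x ^ p.conj.limit⁻¹ * v x ^ (-p x), hF.indicator hG, ?_,
    fun R hR t ht => ?_⟩
  · rw [← lintegral_rpow_inv_mul_rpow_neg_powerMeasure p.holderConjugate p.measurable
      p.conj.measurable hv.measurable hv.ne_zero hv.ne_top hQ,
      ← lintegral_const_mul' _ _ ENNReal.coe_ne_top]
    refine lintegral_mono fun x => ?_
    by_cases hx : x ∈ G
    · rw [Set.indicator_of_mem hx]
      exact hv.rpow_inv_mul_rpow_neg_rpow_limit_le hX hN (hpoly x hx).1 (hpoly x hx).2 _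
    · simp [hx, hlim.symm.pos]
  · have hB := hX.measurableSet_ball x₀ R
    calc μ (ball d x₀ R) * t ^ (p.limit - 1)
        ≤ 2 * (μ (ball d x₀ R ∩ G) * t ^ (p.limit - 1)) := by
          rw [← mul_assoc]
          gcongr
          exact hmass R hR
      _ ≤ 2 * (1 * ∫⁻ x in ball d x₀ R ∩ G, Q x ^ p.conj.limit⁻¹ ∂μ) := by
          gcongr 2 * ?_
          exact measure_mul_rpow_sub_one_le (fun _ => hlim) (hB.inter hG) hQpow
            (fun y hy => ht y hy.1) fun _ _ => (one_mul _).ge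
      _ = 2 * ∫⁻ x in ball d x₀ R, G.indicator
            (fun x => Q x ^ p.conj.limit⁻¹ * v x ^ (-p x)) x ∂powerMeasure μ p v := by
          rw [one_mul, ← setLIntegral_mul_rpow_neg_powerMeasure p.measurable hv.measurable
            hv.ne_zero hv.ne_top hQpow (hB.inter hG), setLIntegral_indicator hG, Set.inter_comm]

lemma exists_powerMeasure_mul_powerMeasure_le_of_one_le (hX : IsSHT d μ A₀ Cμ)
    (hv : IsMuckenhoupt d μ p v) :
    ∃ D : ℝ≥0, ∀ R, 1 ≤ R →
      ((μ (ball d x₀ R))⁻¹ * powerMeasure μ p.conj v⁻¹ (ball d x₀ R)) ^ (p.limit - 1) *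
        powerMeasure μ p v (ball d x₀ R) ≤ D * μ (ball d x₀ R) := by
  obtain ⟨C₁, hC₁⟩ := hv.exists_powerMeasure_ball_comparable_of_le_ballNorm hX
    (hv.ballNorm_ne_zero hX x₀ one_pos)
  obtain ⟨C₂, hC₂⟩ := hv.inv.exists_powerMeasure_ball_comparable_of_le_ballNorm hX
    (hv.inv.ballNorm_ne_zero hX x₀ one_pos)
  obtain ⟨K, hK⟩ := hv.exists_ballNorm_mul_ballNorm_inv_le
  set C := max 1 (max C₁ C₂)
  refine ⟨(C * max 1 K) ^ p.limit, fun R hR => ?_⟩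
  have hR0 := one_pos.trans_le hR
  have hsub := ball_subset_ball d x₀ hR
  rw [ENNReal.coe_rpow_of_nonneg _ p.holderConjugate_limit.nonneg, ENNReal.coe_mul]
  refine rpow_mul_le_of_mul_le p.holderConjugate_limit le_rfl (le_max_left _ _)
    (le_max_left _ _) (hX.ball_pos x₀ R hR0).ne' (hX.ball_ne_top x₀ R hR0)
    ((hC₁ hR0 (ballNorm_mono p hsub)).1.trans ?_)
    ((hC₂ hR0 (ballNorm_mono p.conj hsub)).1.trans ?_) ((hK x₀ R hR0).trans ?_)
  · gcongr
    exact le_max_of_le_right (le_max_left _ _)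
  · gcongr
    exact le_max_of_le_right (le_max_right _ _)
  · gcongr
    exact le_max_right _ _

lemma exists_average_rpow_limit_majorant (hX : IsSHT d μ A₀ Cμ) (hv : IsMuckenhoupt d μ p v) :
    ∃ C : ℝ≥0, ∀ g : X → ℝ≥0∞, Measurable g →
      ∫⁻ u, g u ^ p u ∂powerMeasure μ p.conj v⁻¹ ≤ 1 → ∃ Y : X → ℝ≥0∞, Measurable Y ∧
        ∫⁻ u, Y u ∂powerMeasure μ p v ≤ C ∧ ∀ R, 1 ≤ R → ∀ x ∈ ball d x₀ R,
          ((μ (ball d x₀ R))⁻¹ * ∫⁻ u in ball d x₀ R, g u ∂powerMeasure μ p.conj v⁻¹) ^ p.limit ≤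
            Y x := by
  obtain ⟨D, hD⟩ := hv.exists_powerMeasure_mul_powerMeasure_le_of_one_le hX
  obtain ⟨C, hmaj⟩ := hv.inv.exists_average_majorant_of_one_le hX p
  obtain ⟨E, hdual⟩ := hv.exists_dual_function hX
  obtain ⟨CW, hW⟩ := hv.exists_isSHT_powerMeasure hX
  obtain ⟨K, hK⟩ := hW.strong_type_maximal p.conj.one_lt_limit
  have hlim := p.holderConjugate_limit
  refine ⟨(D * 2) ^ p.conj.limit * (K * (E * C)), fun g hg hg1 => ?_⟩
  obtain ⟨Q, hQ, hQC, hball⟩ := hmaj g hg hg1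
  obtain ⟨F, hF, hFint, hFball⟩ := hdual Q hQ
  obtain ⟨H, hH, hMH, hHint⟩ := hK F hF
  refine ⟨fun x => ((D * 2 : ℝ≥0) * H x) ^ p.conj.limit, (hH.const_mul _).pow_const _, ?_,
    fun R hR x hx => ?_⟩
  · simp only [ENNReal.mul_rpow_of_nonneg _ _ hlim.symm.nonneg]
    rw [lintegral_const_mul _ (hH.pow_const _), ← ENNReal.coe_rpow_of_nonneg _ hlim.symm.nonneg,
      ENNReal.coe_mul]
    gcongr _ * ?_
    exact hHint.trans (by push_cast; gcongr; exact hFint.trans (by gcongr))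
  have hR0 := one_pos.trans_le hR
  obtain ⟨t, hgt, htQ⟩ := hball R hR
  have hW0 := (hv.powerMeasure_ball_pos hX x₀ hR0).ne'
  have hWt := hv.powerMeasure_ball_ne_top hX x₀ hR0
  have hmass : μ (ball d x₀ R) * t ^ (p.limit - 1) ≤
      powerMeasure μ p v (ball d x₀ R) * (2 * H x) := by
    refine (hFball R hR t htQ).trans ?_
    rw [mul_left_comm]
    gcongr
    rw [← ENNReal.inv_mul_le_iff hW0 hWt]
    exact (average_le_maximal hR0 hx).trans (hMH x)
  refine (rpow_le_of_rpow_mul_le hlim hW0 hWt (by rw [mul_assoc]; gcongr) (hD R hR) hmass).trans_eq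
    ?_
  push_cast
  rw [mul_assoc]

lemma exists_average_majorant_of_center_eq (hX : IsSHT d μ A₀ Cμ) (hv : IsMuckenhoupt d μ p v) :
    ∃ C : ℝ≥0, ∀ g : X → ℝ≥0∞, Measurable g →
      ∫⁻ u, g u ^ p u ∂powerMeasure μ p.conj v⁻¹ ≤ 1 → ∃ Ψ : X → ℝ≥0∞, Measurable Ψ ∧
        ∫⁻ u, Ψ u ∂powerMeasure μ p v ≤ C ∧ ∀ R, 1 ≤ R → ∀ x ∈ ball d x₀ R,
          ((μ (ball d x₀ R))⁻¹ * ∫⁻ u in ball d x₀ R, g u ∂powerMeasure μ p.conj v⁻¹) ^ p x ≤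
            Ψ x := by
  obtain ⟨C, hmaj⟩ := hv.exists_average_rpow_limit_majorant hX
  obtain ⟨M, hM, htail⟩ := hv.exists_forall_lintegral_bracket_rpow_le hX one_ne_zero
  have hB := hX.measurableSet_ball x₀ 1
  have hW0 := (hv.powerMeasure_ball_pos hX x₀ one_pos).ne'
  have hlim : 0 < p.limit := one_pos.trans p.one_lt_limit
  set W := powerMeasure μ p v
  obtain ⟨E, hE⟩ := p.exists_rpow_le_add hX
    (T := ((W (ball d x₀ 1))⁻¹ * C) ^ p.limit⁻¹) (by finiteness) hM
  refine ⟨E * C + 1, fun g hg hg1 => ?_⟩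
  obtain ⟨Y, hY, hYC, hAY⟩ := hmaj g hg hg1
  refine ⟨fun x => E * Y x + ENNReal.ofReal (bracket d x₀ x) ^ (-M), (hY.const_mul _).add
    (hX.measurable_bracket.ennreal_ofReal.pow_const _), ?_, fun R hR x hx => ?_⟩
  · rw [lintegral_add_left (hY.const_mul _), lintegral_const_mul _ hY]
    push_cast
    gcongr
    exact htail M le_rfl
  set A := (μ (ball d x₀ R))⁻¹ * ∫⁻ u in ball d x₀ R, g u ∂powerMeasure μ p.conj v⁻¹
  have hA : A ≤ ((W (ball d x₀ 1))⁻¹ * C) ^ p.limit⁻¹ := by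
    rw [ENNReal.le_rpow_inv_iff hlim, ← ENNReal.mul_le_iff_le_inv hW0
      (hv.powerMeasure_ball_ne_top hX x₀ one_pos)]
    calc W (ball d x₀ 1) * A ^ p.limit = ∫⁻ _ in ball d x₀ 1, A ^ p.limit ∂W := by
          rw [setLIntegral_const, mul_comm]
      _ ≤ ∫⁻ y in ball d x₀ 1, Y y ∂W :=
          setLIntegral_mono' hB fun y hy => hAY R hR y (ball_subset_ball d x₀ hR hy)
      _ ≤ C := (setLIntegral_le_lintegral _ _).trans hYC
  exact (hE hA x).2.trans (add_le_add (mul_le_mul' le_rfl (hAY R hR x hx)) le_rfl)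

end IsMuckenhoupt

end LargeBalls

section MaximalMajorant

variable {d : X → X → ℝ} {μ ν : Measure X} {A₀ Cμ : ℝ} {x₀ : X} {p : LogHolderExponent d A₀ x₀}
  {v f : X → ℝ≥0∞}

lemma IsSHT.ball_subset_ball_basepoint_of_not_isLocalBall (hX : IsSHT d μ A₀ Cμ) {z : X} {r : ℝ}
    (h : ¬IsLocalBall d A₀ x₀ z r) : ball d z r ⊆ ball d x₀ (3 * A₀ ^ 2 * r) := by
  obtain ⟨hr, hz⟩ : 1 ≤ r ∧ d z x₀ ≤ 2 * A₀ * r := by simpa [IsLocalBall] using h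
  intro y hy
  calc d x₀ y ≤ A₀ * (d z x₀ + d z y) := hX.d_symm x₀ z ▸ hX.d_triangle x₀ y z
    _ < A₀ * (2 * A₀ * r + r) := mul_lt_mul_of_pos_left (add_lt_add_of_le_of_lt hz hy) hX.A₀_pos
    _ ≤ 3 * A₀ ^ 2 * r := by
        nlinarith [mul_nonneg (mul_nonneg (zero_le_one.trans hr) hX.A₀_pos.le)
          (sub_nonneg.2 hX.one_le_A₀)]

lemma IsSHT.ball_basepoint_subset_ball_of_not_isLocalBall (hX : IsSHT d μ A₀ Cμ) {z : X} {r : ℝ}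
    (h : ¬IsLocalBall d A₀ x₀ z r) : ball d x₀ (3 * A₀ ^ 2 * r) ⊆ ball d z (5 * A₀ ^ 3 * r) := by
  obtain ⟨hr, hz⟩ : 1 ≤ r ∧ d z x₀ ≤ 2 * A₀ * r := by simpa [IsLocalBall] using h
  intro y hy
  calc d z y ≤ A₀ * (d z x₀ + d x₀ y) := hX.d_triangle z y x₀
    _ < A₀ * (2 * A₀ * r + 3 * A₀ ^ 2 * r) :=
        mul_lt_mul_of_pos_left (add_lt_add_of_le_of_lt hz hy) hX.A₀_pos
    _ ≤ 5 * A₀ ^ 3 * r := by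
        nlinarith [mul_nonneg (mul_nonneg (zero_le_one.trans hr) (sq_nonneg A₀))
          (sub_nonneg.2 hX.one_le_A₀)]

lemma IsSHT.exists_average_le_average_basepoint (hX : IsSHT d μ A₀ Cμ) :
    ∃ K : ℝ≥0, ∀ {z r}, ¬IsLocalBall d A₀ x₀ z r → ∀ g : X → ℝ≥0∞,
      (μ (ball d z r))⁻¹ * ∫⁻ u in ball d z r, g u ∂ν ≤
        K * ((μ (ball d x₀ (3 * A₀ ^ 2 * r)))⁻¹ * ∫⁻ u in ball d x₀ (3 * A₀ ^ 2 * r), g u ∂ν) := by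
  obtain ⟨K, hK⟩ := hX.exists_measure_ball_mul_le (l := 5 * A₀ ^ 3)
    (by nlinarith [one_le_pow₀ hX.one_le_A₀ (n := 3)])
  refine ⟨K, fun {z r} h g => ?_⟩
  have hr : 0 < r := one_pos.trans_le (not_lt.1 fun hr => h (.inl hr))
  have hR : 0 < 3 * A₀ ^ 2 * r := by have := hX.A₀_pos; positivity
  set B := ball d z r
  set B₀ := ball d x₀ (3 * A₀ ^ 2 * r)
  have hcomp : μ B₀ ≤ K * μ B :=
    (measure_mono (hX.ball_basepoint_subset_ball_of_not_isLocalBall h)).trans (hK z r hr)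
  have hinv : (μ B)⁻¹ ≤ K * (μ B₀)⁻¹ := by
    rw [← div_eq_mul_inv, ENNReal.le_div_iff_mul_le
      (.inl (hX.ball_pos x₀ _ hR).ne') (.inl (hX.ball_ne_top x₀ _ hR)),
      ENNReal.inv_mul_le_iff (hX.ball_pos z r hr).ne' (hX.ball_ne_top z r hr), mul_comm (μ B)]
    exact hcomp
  rw [← mul_assoc]
  exact mul_le_mul' hinv (lintegral_mono_set (hX.ball_subset_ball_basepoint_of_not_isLocalBall h))

lemma lintegral_mul_rpow_neg_rpow_powerMeasure {p p' : X → ℝ}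
    (hpp' : ∀ x, (p x).HolderConjugate (p' x)) (hp : Measurable p) (hp' : Measurable p')
    (hv : Measurable v) (hv0 : ∀ x, v x ≠ 0) (hvt : ∀ x, v x ≠ ⊤) (hf : Measurable f) :
    ∫⁻ x, (f x * v⁻¹ x ^ (-p' x)) ^ p x ∂powerMeasure μ p' v⁻¹ = ∫⁻ x, (f x * v x) ^ p x ∂μ := by
  have hg : Measurable fun x => (f x * v⁻¹ x ^ (-p' x)) ^ p x :=
    (hf.mul (hv.inv.pow hp'.neg)).pow hp
  rw [lintegral_powerMeasure hp' hv.inv hg]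
  refine lintegral_congr fun x => ?_
  have hexp : -p' x + p' x * p x = p x := by linarith [(hpp' x).mul_eq_add, mul_comm (p x) (p' x)]
  rw [Pi.inv_apply, ENNReal.inv_rpow, ENNReal.inv_rpow, ENNReal.rpow_neg, inv_inv,
    ENNReal.mul_rpow_of_nonneg _ _ (hpp' x).nonneg, ENNReal.mul_rpow_of_nonneg _ _ (hpp' x).nonneg,
    mul_left_comm, ← ENNReal.rpow_neg, ← ENNReal.rpow_mul, ← ENNReal.rpow_add _ _ (hv0 x) (hvt x),
    hexp]

namespace IsMuckenhoupt

lemma exists_average_majorant (hX : IsSHT d μ A₀ Cμ) (hv : IsMuckenhoupt d μ p v) :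
    ∃ C : ℝ≥0, ∀ g : X → ℝ≥0∞, Measurable g →
      ∫⁻ u, g u ^ p u ∂powerMeasure μ p.conj v⁻¹ ≤ 1 → ∃ Ψ : X → ℝ≥0∞, Measurable Ψ ∧
        ∫⁻ u, Ψ u ∂powerMeasure μ p v ≤ C ∧ ∀ z r, 0 < r → ∀ x ∈ ball d z r,
          ((μ (ball d z r))⁻¹ * ∫⁻ u in ball d z r, g u ∂powerMeasure μ p.conj v⁻¹) ^ p x ≤
            Ψ x := by
  obtain ⟨C₁, hlocal⟩ := hv.exists_local_average_majorant hX
  obtain ⟨C₂, hlarge⟩ := hv.exists_average_majorant_of_center_eq hX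
  obtain ⟨K, hK⟩ := hX.exists_average_le_average_basepoint (x₀ := x₀)
    (ν := powerMeasure μ p.conj v⁻¹)
  set L := max 1 K
  have hupper : 0 ≤ p.upper := (one_pos.trans p.one_lt_upper).le
  refine ⟨C₁ + L ^ p.upper * C₂, fun g hg hg1 => ?_⟩
  obtain ⟨Ψ₁, hΨ₁, hΨ₁C, hball₁⟩ := hlocal g hg hg1
  obtain ⟨Ψ₂, hΨ₂, hΨ₂C, hball₂⟩ := hlarge g hg hg1
  refine ⟨fun x => Ψ₁ x + L ^ p.upper * Ψ₂ x, hΨ₁.add (hΨ₂.const_mul _), ?_,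
    fun z r hr x hx => ?_⟩
  · rw [lintegral_add_left hΨ₁, lintegral_const_mul _ hΨ₂]
    push_cast [ENNReal.coe_rpow_of_nonneg _ hupper]
    gcongr
  by_cases hloc : IsLocalBall d A₀ x₀ z r
  · exact (hball₁ hr hloc x hx).trans le_self_add
  have hr1 : 1 ≤ r := not_lt.1 fun hr => hloc (.inl hr)
  have hR : 1 ≤ 3 * A₀ ^ 2 * r := by nlinarith [one_le_pow₀ hX.one_le_A₀ (n := 2)]
  refine (ENNReal.rpow_le_rpow (hK hloc g) (p.pos x).le).trans (le_add_of_le_right ?_)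
  exact p.const_mul_rpow_le (by exact_mod_cast le_max_left 1 K)
    (by exact_mod_cast le_max_right 1 K)
    (hball₂ _ hR x (hX.ball_subset_ball_basepoint_of_not_isLocalBall hloc hx))

lemma exists_maximal_modular_le (hX : IsSHT d μ A₀ Cμ) (hv : IsMuckenhoupt d μ p v) :
    ∃ C : ℝ≥0, ∀ f : X → ℝ≥0∞, Measurable f → ∫⁻ x, (f x * v x) ^ p x ∂μ ≤ 1 →
      ∫⁻ x, (maximal d μ f x * v x) ^ p x ∂μ ≤ C := by
  obtain ⟨C, hC⟩ := hv.exists_average_majorant hX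
  refine ⟨C, fun f hf hf1 => ?_⟩
  have hg : Measurable fun x => f x * v⁻¹ x ^ (-p.conj x) :=
    hf.mul (hv.inv.measurable.pow p.conj.measurable.neg)
  obtain ⟨Ψ, hΨ, hΨC, hball⟩ := hC _ hg ((lintegral_mul_rpow_neg_rpow_powerMeasure
    p.holderConjugate p.measurable p.conj.measurable hv.measurable hv.ne_zero hv.ne_top hf).trans_le
      hf1)
  rw [lintegral_powerMeasure p.measurable hv.measurable hΨ] at hΨC
  refine (lintegral_mono fun x => ?_).trans hΨC
  rw [ENNReal.mul_rpow_of_nonneg _ _ (p.pos x).le, mul_comm]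
  gcongr
  rw [← ENNReal.le_rpow_inv_iff (p.pos x)]
  refine maximal_le_iff.2 fun z r hr hx => (ENNReal.le_rpow_inv_iff (p.pos x)).2 ?_
  rw [← setLIntegral_mul_rpow_neg_powerMeasure p.conj.measurable hv.inv.measurable hv.inv.ne_zero
    hv.inv.ne_top hf (hX.measurableSet_ball z r)]
  exact hball z r hr x hx

theorem exists_luxNorm_maximal_mul_le (hX : IsSHT d μ A₀ Cμ) (hv : IsMuckenhoupt d μ p v) :
    ∃ C : ℝ≥0, 0 < C ∧ ∀ f : X → ℝ≥0∞, Measurable f →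
      luxNorm μ (ofRealExp p) (fun x => maximal d μ f x * v x) ≤
        C * luxNorm μ (ofRealExp p) (fun x => f x * v x) := by
  obtain ⟨C, hC⟩ := hv.exists_maximal_modular_le hX
  set L := max 1 C
  have hL1 : (1 : ℝ≥0∞) ≤ L := by exact_mod_cast le_max_left 1 C
  have hL0 : (L : ℝ≥0∞) ≠ 0 := (one_pos.trans_le hL1).ne'
  refine ⟨L, by positivity, fun f hf => ?_⟩
  have hp : ∀ x, 0 ≤ p x := fun x => (p.pos x).le
  rw [← ENNReal.div_le_iff' hL0 coe_ne_top]
  refine le_of_forall_gt_imp_ge_of_dense fun l hl => ?_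
  rw [ENNReal.div_le_iff' hL0 coe_ne_top]
  rcases eq_or_ne l ⊤ with rfl | _
  · simp [ENNReal.mul_top hL0]
  have hl0 : l ≠ 0 := (zero_le.trans_lt hl).ne'
  have hmax := hC (fun x => l⁻¹ * f x) (hf.const_mul _) (by
    simpa only [div_eq_mul_inv, mul_comm, mul_left_comm, mul_assoc] using
      lintegral_div_rpow_le_one hp hl)
  simp only [maximal_const_mul (ENNReal.inv_ne_top.2 hl0)] at hmax
  refine luxNorm_le hp (ENNReal.mul_pos hL0 hl0) ?_
  calc ∫⁻ x, (maximal d μ f x * v x / (L * l)) ^ p x ∂μ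
      ≤ ∫⁻ x, (L : ℝ≥0∞)⁻¹ * (l⁻¹ * maximal d μ f x * v x) ^ p x ∂μ := by
        refine lintegral_mono fun x => ?_
        rw [div_eq_mul_inv, ENNReal.mul_inv (.inl hL0) (.inl coe_ne_top), mul_comm,
          mul_assoc (L : ℝ≥0∞)⁻¹, ← mul_assoc l⁻¹, ENNReal.mul_rpow_of_nonneg _ _ (hp x)]
        gcongr
        exact ENNReal.rpow_le_self_of_le_one (ENNReal.inv_le_one.2 hL1) (p.one_lt x).le
    _ ≤ (L : ℝ≥0∞)⁻¹ * L := by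
        rw [lintegral_const_mul' _ _ (ENNReal.inv_ne_top.2 hL0)]
        gcongr
        exact hmax.trans (by exact_mod_cast le_max_right 1 C)
    _ = 1 := ENNReal.inv_mul_cancel hL0 coe_ne_top

end IsMuckenhoupt

end MaximalMajorant

section Necessity

variable {d : X → X → ℝ} {μ : Measure X} {A₀ Cμ : ℝ} {p p' : X → ℝ} {u w : X → ℝ≥0∞}

lemma const_mul_luxNorm_le (hp : ∀ x, 0 ≤ p x) {c : ℝ≥0∞} (hc : c ≠ ⊤) (u : X → ℝ≥0∞) :
    c * luxNorm μ (ofRealExp p) u ≤ luxNorm μ (ofRealExp p) fun x => c * u x := by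
  rcases eq_or_ne c 0 with rfl | hc0
  · simp
  refine le_sInf fun l ⟨hl0, hl⟩ => ?_
  rw [modular_ofRealExp hp] at hl
  rw [mul_comm, ← ENNReal.le_div_iff_mul_le (.inl hc0) (.inl hc)]
  refine luxNorm_le hp (ENNReal.div_pos hl0.ne' hc) (hl.trans_eq' (lintegral_congr fun x => ?_))
  rw [div_eq_mul_inv (u x), ENNReal.inv_div (.inl hc) (.inl hc0), ← mul_div_assoc,
    mul_comm (u x) c]

lemma exists_simpleFunc_le_lt_lintegral [SigmaFinite μ] {c : ℝ≥0∞} (hc : c < ∫⁻ x, u x ∂μ) :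
    ∃ ψ : SimpleFunc X ℝ≥0, (∀ x, ψ x ≤ u x) ∧ c < ∫⁻ x, ψ x ∂μ ∧ ∫⁻ x, ψ x ∂μ ≠ ⊤ := by
  simp_rw [lintegral_eq_nnreal, lt_iSup_iff] at hc
  obtain ⟨φ, hφ, hcφ⟩ := hc
  rw [← SimpleFunc.lintegral_eq_lintegral] at hcφ
  simp only [SimpleFunc.map_apply] at hcφ
  obtain ⟨ψ, hψ, hψt, hcψ⟩ := SimpleFunc.exists_lt_lintegral_simpleFunc_of_lt_lintegral hcφ
  exact ⟨ψ, fun x => (ENNReal.coe_le_coe.2 (hψ x)).trans (hφ x), hcψ, hψt.ne⟩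

lemma exists_luxNorm_le_one_le_lintegral_mul [SigmaFinite μ]
    (hpp' : ∀ x, (p x).HolderConjugate (p' x)) (hp : Measurable p) {l : ℝ≥0∞}
    (hl : l < luxNorm μ (ofRealExp p') u) :
    ∃ f : X → ℝ≥0∞, Measurable f ∧ luxNorm μ (ofRealExp p) f ≤ 1 ∧ l ≤ ∫⁻ x, f x * u x ∂μ := by
  rcases eq_or_ne l 0 with rfl | hl0
  · exact ⟨0, measurable_zero, luxNorm_le (fun x => (hpp' x).nonneg) one_pos
      (by simp [(hpp' _).pos]), zero_le⟩
  have hlt := hl.ne_top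
  have hone : 1 < ∫⁻ x, (u x / l) ^ p' x ∂μ := lt_of_not_ge fun h =>
    (luxNorm_le (fun x => (hpp' x).symm.nonneg) (pos_iff_ne_zero.2 hl0) h).not_gt hl
  obtain ⟨ψ, hψ, hψ1, hψt⟩ := exists_simpleFunc_le_lt_lintegral hone
  set I := ∫⁻ x, ψ x ∂μ
  have hI0 : I ≠ 0 := (one_pos.trans hψ1).ne'
  have hIt : I⁻¹ ≠ ⊤ := ENNReal.inv_ne_top.2 hI0
  refine ⟨fun x => I⁻¹ * (ψ x : ℝ≥0∞) ^ (p x)⁻¹,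
    (ψ.measurable.coe_nnreal_ennreal.pow hp.inv).const_mul _,
    luxNorm_le (fun x => (hpp' x).nonneg) one_pos ?_, ?_⟩
  · calc ∫⁻ x, (I⁻¹ * (ψ x : ℝ≥0∞) ^ (p x)⁻¹ / 1) ^ p x ∂μ ≤ ∫⁻ x, I⁻¹ * ψ x ∂μ := by
          refine lintegral_mono fun x => ?_
          rw [div_one, ENNReal.mul_rpow_of_nonneg _ _ (hpp' x).nonneg,
            ENNReal.rpow_inv_rpow (hpp' x).ne_zero]
          gcongr
          exact ENNReal.rpow_le_self_of_le_one (ENNReal.inv_le_one.2 hψ1.le) (hpp' x).lt.le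
      _ = 1 := by rw [lintegral_const_mul' _ _ hIt, ENNReal.inv_mul_cancel hI0 hψt]
  · have hpt : ∀ x, l * ψ x ≤ (ψ x : ℝ≥0∞) ^ (p x)⁻¹ * u x := fun x => by
      have hu : (ψ x : ℝ≥0∞) ^ (p' x)⁻¹ * l ≤ u x :=
        (ENNReal.le_div_iff_mul_le (.inl hl0) (.inl hlt)).1
          ((ENNReal.rpow_inv_le_iff (hpp' x).symm.pos).2 (hψ x))
      calc l * ψ x = (ψ x : ℝ≥0∞) ^ (p x)⁻¹ * ((ψ x : ℝ≥0∞) ^ (p' x)⁻¹ * l) := by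
            rw [← mul_assoc, ← ENNReal.rpow_add_of_nonneg _ _ (hpp' x).inv_nonneg
              (hpp' x).symm.inv_nonneg, (hpp' x).inv_add_inv_eq_one, ENNReal.rpow_one, mul_comm]
        _ ≤ _ := by gcongr
    calc l = I⁻¹ * (l * I) := by rw [mul_left_comm, ENNReal.inv_mul_cancel hI0 hψt, mul_one]
      _ = ∫⁻ x, I⁻¹ * (l * ψ x) ∂μ := by
          rw [lintegral_const_mul' _ _ hIt, lintegral_const_mul' _ _ hlt]
      _ ≤ ∫⁻ x, I⁻¹ * (ψ x : ℝ≥0∞) ^ (p x)⁻¹ * u x ∂μ := by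
          simp only [mul_assoc I⁻¹]
          exact lintegral_mono fun x => mul_le_mul' le_rfl (hpt x)

lemma luxNorm_indicator_mul_luxNorm_indicator_inv_le (hX : IsSHT d μ A₀ Cμ)
    (hpp' : ∀ x, (p x).HolderConjugate (p' x)) (hp : Measurable p) (hw : Measurable w) {C : ℝ≥0}
    (hC : ∀ f : X → ℝ≥0∞, Measurable f →
      luxNorm μ (ofRealExp p) (fun x => maximal d μ f x * w x) ≤
        C * luxNorm μ (ofRealExp p) (fun x => f x * w x)) (z : X) {r : ℝ} (hr : 0 < r) :
    luxNorm μ (ofRealExp p) ((ball d z r).indicator w) *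
      luxNorm μ (ofRealExp p') ((ball d z r).indicator fun y => (w y)⁻¹) ≤ C * μ (ball d z r) := by
  have := hX.sigmaFinite
  have hp0 : ∀ x, 0 ≤ p x := fun x => (hpp' x).nonneg
  set B := ball d z r
  have hB : MeasurableSet B := hX.measurableSet_ball z r
  have hB0 : μ B ≠ 0 := (hX.ball_pos z r hr).ne'
  have hBt : μ B ≠ ⊤ := hX.ball_ne_top z r hr
  refine ENNReal.mul_le_of_forall_lt fun a ha l hl => (mul_le_mul_left ha.le l).trans ?_
  obtain ⟨f, hf, hf1, hfl⟩ := exists_luxNorm_le_one_le_lintegral_mul hpp' hp hl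
  set F : X → ℝ≥0∞ := fun x => f x * B.indicator (fun y => (w y)⁻¹) x
  have hF : Measurable F := hf.mul (hw.inv.indicator hB)
  have hFw : luxNorm μ (ofRealExp p) (fun x => F x * w x) ≤ 1 := by
    refine (luxNorm_mono_ae hp0 (ae_of_all _ fun x => ?_)).trans hf1
    rw [mul_assoc]
    refine mul_le_of_le_one_right' ((mul_le_mul_left (Set.indicator_le_self' (fun _ _ => zero_le) x)
      _).trans (ENNReal.inv_mul_le_one _))
  have haverage : ∀ x ∈ B, (μ B)⁻¹ * l ≤ maximal d μ F x := fun x hx => by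
    refine le_trans ?_ (average_le_maximal hr hx)
    gcongr (μ B)⁻¹ * ?_
    refine hfl.trans_eq ?_
    rw [← lintegral_indicator hB]
    refine lintegral_congr fun y => ?_
    by_cases hy : y ∈ B <;> simp [F, hy]
  have hnorm : (μ B)⁻¹ * l * luxNorm μ (ofRealExp p) (B.indicator w) ≤ C :=
    calc _ ≤ luxNorm μ (ofRealExp p) fun x => (μ B)⁻¹ * l * B.indicator w x :=
          const_mul_luxNorm_le hp0 (ENNReal.mul_ne_top (ENNReal.inv_ne_top.2 hB0) hl.ne_top) _
      _ ≤ luxNorm μ (ofRealExp p) fun x => maximal d μ F x * w x := by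
          refine luxNorm_mono_ae hp0 (ae_of_all _ fun x => ?_)
          by_cases hx : x ∈ B
          · rw [Set.indicator_of_mem hx]
            gcongr
            exact haverage x hx
          · simp [hx]
      _ ≤ C * 1 := (hC F hF).trans (by gcongr)
      _ = C := mul_one _
  rw [mul_assoc, ENNReal.inv_mul_le_iff hB0 hBt] at hnorm
  rwa [mul_comm, mul_comm (C : ℝ≥0∞)]

lemma apvar_of_luxNorm_maximal_mul_le (hX : IsSHT d μ A₀ Cμ) (hp : Measurable p)
    (hp1 : ∀ x, 1 < p x) (hw : Measurable w) {C : ℝ≥0}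
    (hC : ∀ f : X → ℝ≥0∞, Measurable f →
      luxNorm μ (ofRealExp p) (fun x => maximal d μ f x * w x) ≤
        C * luxNorm μ (ofRealExp p) (fun x => f x * w x)) : Apvar d μ (ofRealExp p) w := by
  refine ⟨C, fun z r hr => ?_⟩
  rw [conjExp_ofRealExp hp1]
  exact luxNorm_indicator_mul_luxNorm_indicator_inv_le hX
    (fun x => Real.HolderConjugate.conjExponent (hp1 x)) hp hw hC z hr

end Necessity

section MainTheorem

variable {d : X → X → ℝ} {μ : Measure X} {A₀ Cμ : ℝ} {p : X → ℝ} {v w : X → ℝ≥0∞}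

lemma Apvar.congr_ae (hp : ∀ x, 1 < p x) (hvw : w =ᵐ[μ] v) (h : Apvar d μ (ofRealExp p) w) :
    Apvar d μ (ofRealExp p) v := by
  obtain ⟨K, hK⟩ := h
  refine ⟨K, fun z r hr => (hK z r hr).trans_eq' ?_⟩
  rw [conjExp_ofRealExp hp]
  congr 1
  · refine luxNorm_congr_ae (fun x => (one_pos.trans (hp x)).le) ?_
    filter_upwards [hvw] with x hx
    simp only [Set.indicator, hx]
  · refine luxNorm_congr_ae
      (fun x => (Real.HolderConjugate.conjExponent (hp x)).symm.nonneg) ?_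
    filter_upwards [hvw] with x hx
    simp only [Set.indicator, hx]

lemma Apvar.exists_isMuckenhoupt (hp : ∀ x, 1 < p x) (hw : Measurable w)
    (hpos : ∀ᵐ x ∂μ, 0 < w x ∧ w x < ⊤) (h : Apvar d μ (ofRealExp p) w) :
    ∃ v, IsMuckenhoupt d μ p v ∧ w =ᵐ[μ] v := by
  set s := {x | 0 < w x ∧ w x < ⊤}
  have hs : MeasurableSet s := (measurableSet_lt measurable_const hw).inter
    (measurableSet_lt hw measurable_const)
  classical
  have hae : w =ᵐ[μ] s.piecewise w 1 := hpos.mono fun x hx => (s.piecewise_eq_of_mem w 1 hx).symm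
  refine ⟨s.piecewise w 1, ⟨hw.piecewise hs measurable_one, fun x => ?_, fun x => ?_,
    h.congr_ae hp hae⟩, hae⟩ <;> by_cases hx : x ∈ s
  · simpa [hx] using hx.1.ne'
  · simp [hx]
  · simpa [hx] using hx.2.ne
  · simp [hx]

end MainTheorem

theorem maximal_strong_type_iff_Apvar_general
    {X : Type*} [MeasurableSpace X] (d : X → X → ℝ) (μ : Measure X) (A₀ Cμ : ℝ)
    (hX : IsSHT d μ A₀ Cμ) (x₀ : X)
    (p : X → ℝ) (hpmeas : Measurable p) (hLH : LH d x₀ p) (hpminus : 1 < essInf p μ)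
    (w : X → ℝ≥0∞) (hw : Measurable w) (hpos : ∀ᵐ x ∂μ, 0 < w x ∧ w x < ⊤) :
    (∃ C : ℝ≥0, 0 < C ∧ ∀ f : X → ℝ≥0∞, Measurable f →
        luxNorm μ (ofRealExp p) (fun x => maximal d μ f x * w x) ≤
          C * luxNorm μ (ofRealExp p) (fun x => f x * w x)) ↔
      Apvar d μ (ofRealExp p) w := by
  obtain ⟨q, rfl⟩ := hLH.exists_logHolderExponent hX hpmeas hpminus
  constructor
  · rintro ⟨C, -, hC⟩
    exact apvar_of_luxNorm_maximal_mul_le hX hpmeas q.one_lt hw hC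
  · intro h
    obtain ⟨v, hv, hwv⟩ := h.exists_isMuckenhoupt q.one_lt hw hpos
    have hnorm : ∀ f : X → ℝ≥0∞, luxNorm μ (ofRealExp q) (fun x => f x * w x) =
        luxNorm μ (ofRealExp q) fun x => f x * v x := fun f =>
      luxNorm_congr_ae (fun x => (q.pos x).le) (hwv.mono fun x hx => by rw [hx])
    simpa only [hnorm] using hv.exists_luxNorm_maximal_mul_le hX

theorem maximal_strong_type_iff_Apvar
    {X : Type*} [MeasurableSpace X] (d : X → X → ℝ) (μ : Measure X) (A₀ Cμ : ℝ)
    (hX : IsSHT d μ A₀ Cμ) (x₀ : X)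
    (p : X → ℝ) (hpmeas : Measurable p) (hp1 : ∀ x, 1 ≤ p x)
    (hLH : LH d x₀ p) (hpminus : 1 < essInf p μ)
    (w : X → ℝ≥0∞) (hw : IsWeight d μ w) :
    (∃ C : ℝ≥0, 0 < C ∧ ∀ f : X → ℝ≥0∞, Measurable f →
        luxNorm μ (ofRealExp p) (fun x => maximal d μ f x * w x) ≤
          C * luxNorm μ (ofRealExp p) (fun x => f x * w x)) ↔
      Apvar d μ (ofRealExp p) w :=
  maximal_strong_type_iff_Apvar_general d μ A₀ Cμ hX x₀ p hpmeas hLH hpminus w hw.1 hw.2.1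

end SHT
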